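/- arXiv:1605.03756 — 4 statements merged into one kernel-verified Lean document; each statement's English description precedes it below -/
import Mathlib

section
/- Let b ≥ 2 be a fixed integer, and let d ≥ 2 be a squarefree integer. If there exist two triples (n₁, a₁, m₁) and (n₂, a₂, m₂) of positive integers with n₁ ≠ n₂, a₁, a₂ ∈ {1, …, b−1}, such that X_{n₁} = a₁(b^{m₁} − 1)/(b − 1) and X_{n₂} = a₂(b^{m₂} − 1)/(b − 1), then d ≤ exp((10b)^{10⁵}). -/
/-!
Write `x = X₁`, `α = x + Y₁√d` and `n₁ < n₂`. The bound for `d < x²` follows from two estimates.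

*Archimedean step* (`archimedean_bound`). Each representation reads
`2 aᵢ b ^ mᵢ = (b - 1) α ^ nᵢ (1 + eᵢ)` with `eᵢ` of size about `α ^ (-nᵢ)`. Eliminating `α` gives
two distinct integers, the smaller at most `(2b) ^ (2 n₂)`, whose ratio differs from `1` by
`O(n₂ / α)`. Therefore `3 α ≤ b ^ (10 n₂)`, and it remains to bound `n = n₂` in terms of `b`.

*`b`-adic step* (`RepdigitData.index_lt`). The equation `X_n = a (b ^ m - 1) / (b - 1)` means that,
with `β = x + √(x² - 1)` and `γ, γ'` the roots of `(b - 1) z² + 2 a z + (b - 1)`, the product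
`(β ^ n - γ) (β ^ n - γ')` equals `b ^ m` times `2 a β ^ n / (b - 1)`. This is a multiplicative
dependence modulo a high power of `b`, and it is bounded by a linear-forms-in-two-logarithms
argument with interpolation determinants. Choose `w ≤ b ^ 4` with `β ^ w ≡ 1` modulo `b²`
(`RepdigitData.exists_period`) and consider determinants with entries
`(r + n s) ^ k (β ^ (w r) γ ^ (w s)) ^ l`, `k < K`, `l < L`, at `K L` points `(r, s)` of a grid.

* Some such determinant is nonzero by a zero estimate of Vandermonde type (`zero_estimate`,
  `RepdigitData.exists_points`).
* It is divisible by a high power of `b`, since up to multiples of `β ^ n - γ` its entries are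
  values of polynomials at multiples of `b` (`core_divisibility`,
  `RepdigitData.exists_integral_quotient`).
* The conjugates of `γ` have absolute value `1`, so its conjugates are small, and the norm of a
  nonzero algebraic integer is at least `1` (`RepdigitData.main_ineq`).

The choice of parameters in `param_contra` makes these facts contradictory as soon as
`n ≥ (2 ^ 17 b ^ 4) ^ 10`. The argument is carried out simultaneously for all primes dividing `b`
by working in the ring `bLocal` of elements with denominator coprime to `b`.
-/

section

open Polynomial

/-! ### Divisibility of interpolation determinants -/

/-- A `π`-adic Schwarz lemma. If the rows indexed by `t` are the values of fixed polynomials at the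
points `π * x j`, the determinant is divisible by `π ^ (|t| choose 2)`. Subtracting one such row
from the others and dividing out the differences `π * (x j - x j₀)` gains `|t| - 1` factors `π`
and leaves a matrix of the same shape (built from divided differences) with one row fewer. -/
theorem pow_dvd_det_of_eval {R ι : Type*} [CommRing R] [Fintype ι] [DecidableEq ι]
    (π : R) (x : ι → R) (t : Finset ι) :
    ∀ (f : ι → R[X]) (M : Matrix ι ι R),
      (∀ j ∈ t, ∀ i, M j i = (f i).eval (π * x j)) → π ^ (t.card.choose 2) ∣ M.det := by
  induction t using Finset.induction_on with
  | empty => intro f M _; simp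
  | insert j₀ t hj₀ ih =>
    intro f M hM
    set y := π * x j₀ with hy
    let h : ι → R[X] := fun i => f i /ₘ (X - C y)
    have hdiv : ∀ i z, (f i).eval z - (f i).eval y = (z - y) * (h i).eval z := by
      intro i z
      have := congrArg (eval z) (modByMonic_add_div (f i) (X - C y))
      rw [modByMonic_X_sub_C_eq_C_eval] at this
      simp only [eval_add, eval_C, eval_mul, eval_sub, eval_X] at this
      simp only [h]
      linear_combination -this
    let M'' : Matrix ι ι R := fun j i => if j ∈ t then (h i).eval (π * x j) else M j i
    let v : ι → R := fun j => if j ∈ t then π * (x j - x j₀) else 1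
    have h1 : M.det = (Matrix.of fun j i => v j * M'' j i).det := by
      refine Matrix.det_eq_of_forall_row_eq_smul_add_const
        (fun j => if j ∈ t then 1 else 0) j₀ (by simp [hj₀]) ?_
      intro j i
      by_cases hj : j ∈ t
      · have e := hdiv i (π * x j)
        simp only [Matrix.of_apply, v, M'', hj, hj₀, if_true, if_false]
        rw [hM j (Finset.mem_insert_of_mem hj), hM j₀ (Finset.mem_insert_self _ _)]
        linear_combination e
      · simp [v, M'', hj]
    rw [h1, Matrix.det_mul_column, Finset.card_insert_of_notMem hj₀,
      Nat.choose_succ_succ' t.card 1, Nat.choose_one_right, pow_add]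
    refine mul_dvd_mul ?_ (ih h M'' ?_)
    · have : ∏ j, v j = ∏ j ∈ t, (π * (x j - x j₀)) := by
        simp only [v]
        rw [Finset.prod_ite]; simp
      rw [this, Finset.prod_mul_distrib, Finset.prod_const]
      exact dvd_mul_right _ _
    · intro j hj i
      simp [M'', hj]

/-- The previous estimate for rows known only up to a multiple of `A`: the determinant is expanded
multilinearly in its rows, and each perturbed row contributes a factor `A`, which together with a
factor `B` is worth `π ^ m`. The terms with `i` unperturbed rows give the exponent
`m * (N - i) + (i choose 2)`, and `E` is a lower bound for all of these. -/
theorem pow_dvd_det_perturbed {R ι : Type*} [CommRing R] [Fintype ι] [DecidableEq ι]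
    (π A B c : R) (m E : ℕ) (hAB : A * B = π ^ m * c)
    (hE : ∀ i ≤ Fintype.card ι, E ≤ m * (Fintype.card ι - i) + i.choose 2)
    (x : ι → R) (f : ι → R[X]) (h : ι → ι → R) :
    π ^ E ∣ B ^ Fintype.card ι *
      (Matrix.of fun j i => (f i).eval (π * x j) + A * h j i).det := by
  classical
  have key : (Matrix.of fun j i => (f i).eval (π * x j) + A * h j i).det =
      ∑ s : Finset ι, Matrix.det (Matrix.of (s.piecewise
        (fun j i => (f i).eval (π * x j)) (fun j i => A * h j i))) := by
    have := (Matrix.detRowAlternating (n := ι) (R := R)).toMultilinearMap.map_add_univ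
      (fun j i => (f i).eval (π * x j)) (fun j i => A * h j i)
    exact this
  rw [key, Finset.mul_sum]
  refine Finset.dvd_sum fun s _ => ?_
  let v : ι → R := fun j => if j ∈ s then 1 else A
  let M : Matrix ι ι R := fun j i => if j ∈ s then (f i).eval (π * x j) else h j i
  have e1 : (Matrix.of (s.piecewise (fun j i => (f i).eval (π * x j)) (fun j i => A * h j i)))
      = Matrix.of fun j i => v j * M j i := by
    ext j i
    by_cases hj : j ∈ s <;> simp [v, M, hj]
  have e2 : ∏ j, v j = A ^ (Fintype.card ι - s.card) := by
    simp only [v]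
    rw [Finset.prod_ite]
    simp only [Finset.prod_const_one, Finset.prod_const, one_mul]
    congr 1
    rw [← Finset.card_compl]; congr 1; ext j; simp
  have hs : s.card ≤ Fintype.card ι := Finset.card_le_univ s
  rw [e1, Matrix.det_mul_column, e2]
  have d1 : π ^ (s.card.choose 2) ∣ M.det :=
    pow_dvd_det_of_eval π x s f M (fun j hj i => by simp [M, hj])
  have d2 : π ^ (m * (Fintype.card ι - s.card)) ∣
      B ^ Fintype.card ι * A ^ (Fintype.card ι - s.card) := by
    have : B ^ Fintype.card ι * A ^ (Fintype.card ι - s.card) =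
        (A * B) ^ (Fintype.card ι - s.card) * B ^ s.card := by
      rw [mul_pow, mul_assoc, ← pow_add, Nat.sub_add_cancel hs, mul_comm]
    rw [this, hAB, mul_pow, ← pow_mul, mul_assoc]
    exact dvd_mul_right _ _
  rw [← mul_assoc]
  refine dvd_trans (pow_dvd_pow π (hE s.card hs)) ?_
  rw [pow_add]
  exact mul_dvd_mul d2 d1

/-- The function `x ↦ (1 + b² θ) ^ (l x)` is, on bounded ranges of natural numbers, given by a
polynomial in `b x`. By the binomial expansion its coefficients involve `b ^ i / i!`, whose
existence in `R` is the hypothesis `he`. -/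
theorem exists_eval_eq_pow {R : Type*} [CommRing R] (b : ℕ) (e : ℕ → R)
    (he : ∀ i, e i * (i.factorial : R) = (b : R) ^ i) (θ : R) (l H : ℕ) :
    ∃ q : R[X], ∀ x : ℕ, l * x ≤ H →
      q.eval ((b : R) * (x : R)) = (1 + (b : R) ^ 2 * θ) ^ (l * x) := by
  refine ⟨∑ i ∈ Finset.range (H + 1), C (e i * θ ^ i) *
    ∏ t ∈ Finset.range i, (C (l : R) * X - C ((b : R) * (t : R))), fun x hx => ?_⟩
  rw [eval_finsetSum, add_comm 1, add_pow]
  have hsub : Finset.range (l * x + 1) ⊆ Finset.range (H + 1) := by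
    intro i; simp only [Finset.mem_range]; omega
  rw [Finset.sum_subset hsub fun i _ hi => by
    rw [Nat.choose_eq_zero_of_lt (by simpa using hi)]; simp]
  refine Finset.sum_congr rfl fun i hi => ?_
  clear hi
  rw [eval_mul, eval_C, eval_prod]
  have h1 : ∏ t ∈ Finset.range i,
      eval ((b : R) * (x : R)) (C (l : R) * X - C ((b : R) * (t : R))) =
      (b : R) ^ i * ((l * x).descFactorial i : R) := by
    have h2 : ((l * x).descFactorial i : R) =
        ∏ t ∈ Finset.range i, (((l * x : ℕ) : R) - (t : R)) := by
      induction i with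
      | zero => simp
      | succ i ih =>
        rw [Nat.descFactorial_succ, Finset.prod_range_succ, ← ih, Nat.cast_mul, mul_comm]
        rcases le_or_gt i (l * x) with h | h
        · rw [Nat.cast_sub h]
        · rw [Nat.descFactorial_eq_zero_iff_lt.2 h]; simp
    rw [h2, ← Finset.card_range i, ← Finset.prod_const, Finset.card_range,
      ← Finset.prod_mul_distrib]
    refine Finset.prod_congr rfl fun t _ => ?_
    simp only [eval_sub, eval_mul, eval_C, eval_X]
    push_cast; ring
  rw [h1, Nat.descFactorial_eq_factorial_mul_choose, Nat.cast_mul]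
  have := he i
  linear_combination (θ ^ i * (b : R) ^ i * ((l * x).choose i : R)) * this

/-- Divisibility by a high power of `b` of the interpolation determinant attached to the monomials
`(b X) ^ k Y ^ l` and the points `(r + n s, β ^ (w r) γ ^ (w s))`. Modulo `β ^ n - γ` the second
coordinate is `(β ^ w) ^ (r + n s)`, a polynomial function of `b (r + n s)`, so that
`pow_dvd_det_perturbed` applies. -/
theorem core_divisibility {R : Type*} [CommRing R] (b : ℕ) (e : ℕ → R)
    (he : ∀ i, e i * (i.factorial : R) = (b : R) ^ i) (β γ γ' θ c : R) (w n m K L E : ℕ)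
    (hw : β ^ w = 1 + (b : R) ^ 2 * θ)
    (hAB : (β ^ n - γ) * (β ^ n - γ') = (b : R) ^ m * c)
    (pt : Fin K × Fin L → ℕ × ℕ)
    (hE : ∀ i ≤ K * L, E ≤ m * (K * L - i) + i.choose 2) :
    (b : R) ^ E ∣ (β ^ n - γ') ^ (K * L) *
      (Matrix.of fun j i : Fin K × Fin L =>
        ((b : R) * (((pt j).1 + n * (pt j).2 : ℕ) : R)) ^ (i.1 : ℕ) *
          ((β ^ w) ^ (pt j).1 * (γ ^ w) ^ (pt j).2) ^ (i.2 : ℕ)).det := by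
  set x : Fin K × Fin L → ℕ := fun j => (pt j).1 + n * (pt j).2 with hx
  set H : ℕ := ∑ j, L * x j with hH
  choose q hq using fun l : ℕ => exists_eval_eq_pow b e he θ l H
  have hlx : ∀ (l : Fin L) j, (l : ℕ) * x j ≤ H := fun l j =>
    (Nat.mul_le_mul_right _ l.2.le).trans
      (Finset.single_le_sum (f := fun j => L * x j) (fun _ _ => Nat.zero_le _) (Finset.mem_univ j))
  have hdvd : ∀ j i : Fin K × Fin L, ∃ h : R,
      ((b : R) * (x j : R)) ^ (i.1 : ℕ) *
          ((β ^ w) ^ (pt j).1 * (γ ^ w) ^ (pt j).2) ^ (i.2 : ℕ) =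
        (X ^ (i.1 : ℕ) * q i.2).eval ((b : R) * (x j : R)) + (β ^ n - γ) * h := by
    intro j i
    obtain ⟨h, hh⟩ := sub_dvd_pow_sub_pow (β ^ n) γ (w * (pt j).2 * i.2)
    refine ⟨-((b : R) * (x j : R)) ^ (i.1 : ℕ) * β ^ (w * (pt j).1 * i.2) * h, ?_⟩
    rw [eval_mul, eval_pow, eval_X, hq _ _ (hlx i.2 j), ← hw]
    have e1 : (β ^ w) ^ ((i.2 : ℕ) * x j) =
        β ^ (w * (pt j).1 * i.2) * (β ^ n) ^ (w * (pt j).2 * i.2) := by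
      rw [← pow_mul, ← pow_mul, ← pow_add]; congr 1; simp only [hx]; ring
    have e2 : ((β ^ w) ^ (pt j).1 * (γ ^ w) ^ (pt j).2) ^ (i.2 : ℕ) =
        β ^ (w * (pt j).1 * i.2) * γ ^ (w * (pt j).2 * i.2) := by
      rw [mul_pow, ← pow_mul, ← pow_mul, ← pow_mul, ← pow_mul, mul_assoc, mul_assoc]
    rw [e1, e2]
    linear_combination -((b : R) * (x j : R)) ^ (i.1 : ℕ) * β ^ (w * (pt j).1 * i.2) * hh
  choose h hh using hdvd
  have hcard : Fintype.card (Fin K × Fin L) = K * L := by simp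
  have := pow_dvd_det_perturbed (ι := Fin K × Fin L) (b : R) (β ^ n - γ) (β ^ n - γ') c m E hAB
    (by rw [hcard]; exact hE) (fun j => (x j : R)) (fun i => X ^ (i.1 : ℕ) * q i.2) h
  rw [hcard] at this
  convert this using 4
  funext j i
  exact hh j i

/-! ### Algebraic integers localized at `b` -/

/-- `b ^ i / i!` has denominator coprime to `b`, because `v_p(i!) ≤ i` for every prime `p`. -/
theorem exists_coprime_factorial_dvd (b : ℕ) (i : ℕ) :
    ∃ c : ℕ, c.Coprime b ∧ i.factorial ∣ c * b ^ i := by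
  refine ⟨i.factorial / Nat.gcd i.factorial (b ^ i), ?_, ?_⟩
  · refine Nat.Coprime.symm (Nat.coprime_of_dvd fun p hp hpb hpc => ?_)
    set g := Nat.gcd i.factorial (b ^ i) with hg
    have hgi : g ∣ i.factorial := Nat.gcd_dvd_left _ _
    have hfac : g * (i.factorial / g) = i.factorial := Nat.mul_div_cancel' hgi
    set v := i.factorial.factorization p with hv
    have hv1 : p ^ v ∣ i.factorial := Nat.ordProj_dvd _ _
    have hvi : v ≤ i :=
      (Nat.factorization_factorial_le_div_pred hp i).trans (Nat.div_le_self _ _)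
    have hv2 : p ^ v ∣ b ^ i := (pow_dvd_pow p hvi).trans (pow_dvd_pow_of_dvd hpb i)
    have hv3 : p ^ v ∣ g := Nat.dvd_gcd hv1 hv2
    have : p ^ (v + 1) ∣ i.factorial := by
      rw [← hfac, pow_succ]; exact mul_dvd_mul hv3 hpc
    exact Nat.pow_succ_factorization_not_dvd (Nat.factorial_ne_zero i) hp this
  · obtain ⟨k, hk⟩ := Nat.gcd_dvd_right i.factorial (b ^ i)
    have hfac := Nat.div_mul_cancel (Nat.gcd_dvd_left i.factorial (b ^ i))
    refine ⟨k, ?_⟩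
    calc _ = i.factorial / Nat.gcd i.factorial (b ^ i) * (Nat.gcd i.factorial (b ^ i) * k) := by
          rw [← hk]
      _ = _ := by rw [← mul_assoc, hfac]

/-- The localization at (the multiplicative set of integers coprime to) `b` of the ring of
algebraic integers of `F`: the elements `z` for which `c z` is integral for some natural number
`c` coprime to `b`. -/
def bLocal (F : Type*) [Field F] (b : ℕ) : Subring F where
  carrier := {z | ∃ c : ℕ, c.Coprime b ∧ IsIntegral ℤ ((c : F) * z)}
  mul_mem' := by
    rintro x y ⟨c, hc, hx⟩ ⟨c', hc', hy⟩
    refine ⟨c * c', Nat.Coprime.mul_left hc hc', ?_⟩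
    have h : ((c * c' : ℕ) : F) * (x * y) = (c : F) * x * ((c' : F) * y) := by
      push_cast; ring
    rw [h]
    exact hx.mul hy
  one_mem' := ⟨1, Nat.coprime_one_left b, by simpa using isIntegral_one⟩
  add_mem' := by
    rintro x y ⟨c, hc, hx⟩ ⟨c', hc', hy⟩
    refine ⟨c * c', Nat.Coprime.mul_left hc hc', ?_⟩
    have h : ((c * c' : ℕ) : F) * (x + y) =
        algebraMap ℤ F (c' : ℤ) * ((c : F) * x) + algebraMap ℤ F (c : ℤ) * ((c' : F) * y) := by
      simp only [algebraMap_int_eq, eq_intCast]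
      push_cast; ring
    rw [h]
    exact (isIntegral_algebraMap.mul hx).add (isIntegral_algebraMap.mul hy)
  zero_mem' := ⟨1, Nat.coprime_one_left b, by simpa using isIntegral_zero⟩
  neg_mem' := by
    rintro x ⟨c, hc, hx⟩
    exact ⟨c, hc, by simpa using hx.neg⟩

theorem mem_bLocal_of_isIntegral {F : Type*} [Field F] {b : ℕ} {z : F} (h : IsIntegral ℤ z) :
    z ∈ bLocal F b := ⟨1, Nat.coprime_one_left b, by simpa using h⟩

/-- An element with a denominator coprime to `b` and also a denominator `b ^ E` has no
denominator (Bézout). -/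
theorem isIntegral_of_mem_bLocal {F : Type*} [Field F] {b E : ℕ} {u : F} (hu : u ∈ bLocal F b)
    (h : IsIntegral ℤ ((b : F) ^ E * u)) : IsIntegral ℤ u := by
  obtain ⟨c, hc, hcu⟩ := hu
  have hcop : IsCoprime (c : ℤ) ((b : ℤ) ^ E) := by
    exact (Nat.isCoprime_iff_coprime.2 hc).pow_right
  obtain ⟨x, y, hxy⟩ := hcop
  have hF : (x : F) * (c : F) + (y : F) * (b : F) ^ E = 1 := by
    exact_mod_cast congrArg (Int.cast (R := F)) hxy
  have : u = (algebraMap ℤ F x) * ((c : F) * u) + (algebraMap ℤ F y) * ((b : F) ^ E * u) := by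
    simp only [algebraMap_int_eq, eq_intCast]
    linear_combination -u * hF
  rw [this]
  exact ((isIntegral_algebraMap).mul hcu).add ((isIntegral_algebraMap).mul h)

/-! ### The zero estimate -/

/-- The top coefficient of a product, relative to given bounds on the degrees. -/
theorem coeff_prod_sum {R ι : Type*} [CommRing R] (s : Finset ι) (f : ι → R[X]) (d : ι → ℕ)
    (h : ∀ i ∈ s, (f i).natDegree ≤ d i) :
    (∏ i ∈ s, f i).coeff (∑ i ∈ s, d i) = ∏ i ∈ s, (f i).coeff (d i) := by
  classical
  induction s using Finset.induction_on with
  | empty => simp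
  | insert a s ha ih =>
    rw [Finset.prod_insert ha, Finset.sum_insert ha, Finset.prod_insert ha,
      coeff_mul_add_eq_of_natDegree_le (h a (Finset.mem_insert_self _ _)),
      ih fun i hi => h i (Finset.mem_insert_of_mem hi)]
    exact (natDegree_prod_le _ _).trans
      (Finset.sum_le_sum fun i hi => h i (Finset.mem_insert_of_mem hi))

theorem coeff_det_sum {R ι : Type*} [CommRing R] [Fintype ι] [DecidableEq ι]
    (M : Matrix ι ι R[X]) (d : ι → ℕ) (h : ∀ j i, (M j i).natDegree ≤ d i) :
    M.det.coeff (∑ i, d i) = (Matrix.of fun j i => (M j i).coeff (d i)).det := by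
  rw [Matrix.det_apply', Matrix.det_apply', finsetSum_coeff]
  refine Finset.sum_congr rfl fun σ _ => ?_
  have : ((Equiv.Perm.sign σ : ℤ) : R[X]) = C ((Equiv.Perm.sign σ : ℤ) : R) := by simp
  rw [this, coeff_C_mul, coeff_prod_sum _ _ _ fun i _ => h (σ i) i]
  rfl

theorem natDegree_det_le_sum {R ι : Type*} [CommRing R] [Fintype ι] [DecidableEq ι]
    (M : Matrix ι ι R[X]) (d : ι → ℕ) (h : ∀ j i, (M j i).natDegree ≤ d i) :
    M.det.natDegree ≤ ∑ i, d i := by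
  rw [Matrix.det_apply']
  refine natDegree_sum_le_of_forall_le _ _ fun σ _ => ?_
  have : ((Equiv.Perm.sign σ : ℤ) : R[X]) = C ((Equiv.Perm.sign σ : ℤ) : R) := by simp
  rw [this]
  refine (natDegree_C_mul_le _ _).trans ((natDegree_prod_le _ _).trans ?_)
  exact Finset.sum_le_sum fun i _ => h (σ i) i

/-- Zero estimate: an exponential polynomial `∑ l, p_l(r + n s) (β ^ r γ ^ s) ^ l` with
`deg p_l ≤ K` and `l < L` that vanishes on the grid `r < L + R₂`, `s < S` is zero as soon as
`K L < R₂ S`. Only the `q` nonzero `p_l` matter. For fixed `(r, s)`, vanishing at the `q` points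
`(r + j, s)`, `j < q`, is a linear system in the unknowns `(β ^ r γ ^ s) ^ l`, so the polynomial
`det (β ^ (l j) p_l(X + j))` vanishes at the `R₂ S` distinct numbers `r + n s` with `r < R₂`. Its
degree is at most `K L`, hence it is zero; but its top coefficient is the product of the leading
coefficients of the `p_l` with a Vandermonde determinant in the distinct powers of `β`. -/
theorem zero_estimate {F : Type*} [Field F] [CharZero F] (K L R₂ S n : ℕ) (β γ : F)
    (hβ : Function.Injective fun i : ℕ => β ^ i) (hβ0 : β ≠ 0) (hγ0 : γ ≠ 0)
    (hR : R₂ ≤ n) (hcount : K * L < R₂ * S)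
    (p : Fin L → F[X]) (hdeg : ∀ l, (p l).natDegree ≤ K)
    (hp : ∀ r < L + R₂, ∀ s < S,
      ∑ l : Fin L, (p l).eval (((r + n * s : ℕ) : F)) * (β ^ r * γ ^ s) ^ (l : ℕ) = 0) :
    p = 0 := by
  classical
  by_contra hp0
  let I : Finset (Fin L) := Finset.univ.filter fun l => p l ≠ 0
  have hI : I.Nonempty := by
    by_contra h
    rw [Finset.not_nonempty_iff_eq_empty] at h
    apply hp0
    funext l
    by_contra hl
    have : l ∈ I := by simpa [I] using hl
    simp [h] at this
  set q := I.card with hq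
  have hqL : q ≤ L := by simpa using Finset.card_le_univ I
  let e : Fin q ↪o Fin L := I.orderEmbOfFin rfl
  have heI : ∀ i, p (e i) ≠ 0 := fun i => by
    have : e i ∈ I := I.orderEmbOfFin_mem rfl i
    simpa [I] using this
  -- the matrix of the linear system satisfied by the numbers `(β ^ r * γ ^ s) ^ l`
  let M : Matrix (Fin q) (Fin q) F[X] := fun j i =>
    C ((β ^ (e i : ℕ)) ^ (j : ℕ)) * (p (e i)).comp (X + C ((j : ℕ) : F))
  let dg : Fin q → ℕ := fun i => (p (e i)).natDegree
  have hcompdeg : ∀ i (c : F), ((p (e i)).comp (X + C c)).natDegree = dg i := fun i c => by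
    rw [natDegree_comp, natDegree_X_add_C, mul_one]
  have hMdeg : ∀ j i, (M j i).natDegree ≤ dg i := fun j i =>
    (natDegree_C_mul_le _ _).trans (hcompdeg i _).le
  have hlead : ∀ j i, (M j i).coeff (dg i) =
      (p (e i)).leadingCoeff * (β ^ (e i : ℕ)) ^ (j : ℕ) := fun j i => by
    simp only [M]
    rw [coeff_C_mul, ← hcompdeg i ((j : ℕ) : F), coeff_natDegree,
      leadingCoeff_comp (by rw [natDegree_X_add_C]; exact one_ne_zero), leadingCoeff_X_add_C]
    ring
  have hD0 : M.det ≠ 0 := by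
    intro h0
    have h1 := coeff_det_sum M dg hMdeg
    rw [h0, coeff_zero] at h1
    have h2 : (Matrix.of fun j i => (M j i).coeff (dg i)) =
        Matrix.of fun j i => (p (e i)).leadingCoeff *
          (Matrix.vandermonde fun i : Fin q => β ^ (e i : ℕ)).transpose j i := by
      ext j i
      simp [hlead, Matrix.vandermonde]
    rw [h2, Matrix.det_mul_row, Matrix.det_transpose] at h1
    have h3 : (Matrix.vandermonde fun i : Fin q => β ^ (e i : ℕ)).det ≠ 0 := by
      rw [Matrix.det_vandermonde_ne_zero_iff]
      intro i i' hii
      exact e.injective (Fin.ext (hβ hii))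
    have h4 : ∏ i, (p (e i)).leadingCoeff ≠ 0 :=
      Finset.prod_ne_zero_iff.2 fun i _ => leadingCoeff_ne_zero.2 (heI i)
    exact mul_ne_zero h4 h3 h1.symm
  have hDdeg : M.det.natDegree ≤ K * L := by
    refine (natDegree_det_le_sum M dg hMdeg).trans ?_
    calc ∑ i, dg i ≤ ∑ _i : Fin q, K := Finset.sum_le_sum fun i _ => hdeg (e i)
      _ = q * K := by simp
      _ ≤ K * L := by rw [mul_comm]; exact Nat.mul_le_mul_left _ hqL
  apply hD0
  let f : Fin R₂ × Fin S → F := fun z => (((z.1 : ℕ) + n * (z.2 : ℕ) : ℕ) : F)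
  have hf : Function.Injective f := by
    rintro ⟨r, s⟩ ⟨r', s'⟩ h
    have h' : (r : ℕ) + n * s = r' + n * s' := Nat.cast_injective (R := F) h
    have hr := lt_of_lt_of_le r.2 hR
    have hr' := lt_of_lt_of_le r'.2 hR
    have e1 : (r : ℕ) = r' := by
      have := congrArg (· % n) h'
      simpa [Nat.add_mul_mod_self_left, Nat.mod_eq_of_lt hr, Nat.mod_eq_of_lt hr'] using this
    have e2 : (s : ℕ) = s' := by
      rw [e1] at h'
      exact Nat.eq_of_mul_eq_mul_left (by omega : 0 < n) (Nat.add_left_cancel h')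
    exact Prod.ext (Fin.ext e1) (Fin.ext e2)
  refine eq_zero_of_natDegree_lt_card_of_eval_eq_zero M.det hf ?_ ?_
  · rintro ⟨r, s⟩
    let x₀ : F := f (r, s)
    let y₀ : F := β ^ (r : ℕ) * γ ^ (s : ℕ)
    have hy₀ : y₀ ≠ 0 := mul_ne_zero (pow_ne_zero _ hβ0) (pow_ne_zero _ hγ0)
    have hev : M.det.eval x₀ = ((evalRingHom x₀).mapMatrix M).det := by
      rw [← RingHom.map_det]; rfl
    change M.det.eval x₀ = 0
    rw [hev, ← Matrix.exists_mulVec_eq_zero_iff]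
    refine ⟨fun i => y₀ ^ (e i : ℕ), ?_, ?_⟩
    · intro h
      have := congrFun h ⟨0, hI.card_pos⟩
      exact pow_ne_zero _ hy₀ this
    · funext j
      have hj := hp (r + j) (by have := j.2; have := r.2; omega) s s.2
      have hsum : ∑ i : Fin q, (p (e i)).eval (((r + j + n * s : ℕ) : F)) *
          (β ^ ((r : ℕ) + j) * γ ^ (s : ℕ)) ^ (e i : ℕ) = 0 := by
        rw [← hj]
        have himg : (Finset.univ : Finset (Fin q)).map e.toEmbedding = I := by
          ext l
          constructor
          · intro h
            obtain ⟨i, -, rfl⟩ := Finset.mem_map.1 h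
            exact I.orderEmbOfFin_mem rfl i
          · intro h
            have : l ∈ Set.range e := by
              rw [Finset.range_orderEmbOfFin]; exact h
            obtain ⟨i, rfl⟩ := this
            exact Finset.mem_map.2 ⟨i, Finset.mem_univ _, rfl⟩
        rw [← Finset.sum_subset (Finset.subset_univ I), ← himg, Finset.sum_map]
        · rfl
        · intro l _ hl
          have : p l = 0 := by simpa [I] using hl
          simp [this]
      simp only [Matrix.mulVec, dotProduct, Pi.zero_apply]
      rw [← hsum]
      refine Finset.sum_congr rfl fun i _ => ?_
      have hent : (evalRingHom x₀).mapMatrix M j i =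
          (β ^ (e i : ℕ)) ^ (j : ℕ) * (p (e i)).eval (x₀ + ((j : ℕ) : F)) := by
        rw [RingHom.mapMatrix_apply, Matrix.map_apply, coe_evalRingHom]
        simp only [M, eval_mul, eval_C, eval_comp, eval_add, eval_X]
      rw [hent]
      simp only [x₀, y₀, f]
      have : ((((r : ℕ) + n * s : ℕ) : F) + ((j : ℕ) : F)) = (((r + j + n * s : ℕ) : F)) := by
        push_cast; ring
      rw [this, pow_add]
      ring
  · simp only [Fintype.card_prod, Fintype.card_fin]
    omega

/-- A matrix (with possibly infinitely many rows) whose columns are linearly independent has a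
nonzero maximal minor. -/
theorem exists_minor_ne_zero {F ι κ : Type*} [Field F] [Fintype ι] [DecidableEq ι]
    (W : κ → ι → F) (h : ∀ c : ι → F, (∀ j, ∑ i, W j i * c i = 0) → c = 0) :
    ∃ f : ι → κ, (Matrix.of fun j i => W (f j) i).det ≠ 0 := by
  classical
  have hspan : Submodule.span F (Set.range W) = ⊤ := by
    by_contra hne
    obtain ⟨φ, hφ0, hφ⟩ := Submodule.exists_le_ker_of_lt_top _ (lt_top_iff_ne_top.2 hne)
    apply hφ0
    have hφe : ∀ v : ι → F, φ v = ∑ i, v i * φ (Pi.single i 1) := by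
      intro v
      conv_lhs => rw [pi_eq_sum_univ' v]
      simp [map_sum]
    have := h (fun i => φ (Pi.single i 1)) (fun j => by
      rw [← hφe]
      exact hφ (Submodule.subset_span ⟨j, rfl⟩))
    ext i
    simpa using congrFun this i
  obtain ⟨s, hsub, hs, hli⟩ := exists_linearIndependent F (Set.range W)
  rw [hspan] at hs
  let bs : Module.Basis s F (ι → F) := Module.Basis.mk hli (by simp [hs])
  have e : ι ≃ s := (Pi.basisFun F ι).indexEquiv bs
  choose f hf using fun j : ι => hsub (e j).2
  refine ⟨f, ?_⟩
  have hli' : LinearIndependent F (fun j : ι => W (f j)) := by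
    have : (fun j : ι => W (f j)) = (fun z : s => (z : ι → F)) ∘ e := by
      funext j; exact hf j
    rw [this]
    exact hli.comp _ e.injective
  have := (Matrix.linearIndependent_rows_iff_isUnit
    (A := Matrix.of fun j i => W (f j) i)).1 hli'
  exact ((Matrix.isUnit_iff_isUnit_det _).1 this).ne_zero

/-! ### The interpolation determinant attached to a repdigit -/

theorem isIntegral_det {F ι : Type*} [Field F] [Fintype ι] [DecidableEq ι] (M : Matrix ι ι F)
    (h : ∀ j i, IsIntegral ℤ (M j i)) : IsIntegral ℤ M.det := by
  rw [Matrix.det_apply']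
  refine IsIntegral.sum _ fun σ _ => IsIntegral.mul ?_ (IsIntegral.prod _ fun i _ => h _ _)
  exact isIntegral_algebraMap (R := ℤ) (x := ((Equiv.Perm.sign σ : ℤˣ) : ℤ))

theorem isIntegral_nat {F : Type*} [Field F] (k : ℕ) : IsIntegral ℤ (k : F) := by
  simpa using isIntegral_algebraMap (R := ℤ) (A := F) (x := (k : ℤ))

theorem isIntegral_of_quadratic {F : Type*} [Field F] {z : F} (p q : ℤ)
    (h : z ^ 2 + (p : F) * z + (q : F) = 0) : IsIntegral ℤ z := by
  refine ⟨X ^ 2 + C p * X + C q, ?_, ?_⟩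
  · monicity!
  · simp only [eval₂_add, eval₂_mul, eval₂_pow, eval₂_X, eval₂_C]
    simpa using h

/-- The algebraic form of a repdigit among the `X`-coordinates. The element `β` is a root of
`β² - 2xβ + 1`, i.e. `x + √(x² - 1)`; `T` is the `X`-coordinate of `β ^ n`, so that
`β ^ n + β ^ (-n) = 2 T`; and `(b - 1) T = a (b ^ m - 1)`. The elements `γ, γ'` are the two roots
of `(b - 1) z² + 2 a z + (b - 1)`, chosen so that `(β ^ n - γ) (β ^ n - γ')` is `b ^ m` up to
simple factors, see `RepdigitData.mul_AB`. -/
structure RepdigitData (F : Type*) [Field F] (b a x n m T : ℕ) (β γ γ' : F) : Prop where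
  hb : 2 ≤ b
  ha : 1 ≤ a
  hab : a + 1 ≤ b
  hx : 2 ≤ x
  hβ : β ^ 2 + 1 = 2 * (x : F) * β
  hγ : γ * γ' = 1
  hγγ : ((b : F) - 1) * (γ + γ') = -(2 * (a : F))
  hT : β ^ (2 * n) + 1 = 2 * (T : F) * β ^ n
  hrep : ((b : F) - 1) * (T : F) = (a : F) * ((b : F) ^ m - 1)

namespace RepdigitData
variable {F : Type*} [Field F] {b a x n m T : ℕ} {β γ γ' : F}

theorem symm (D : RepdigitData F b a x n m T β γ γ') : RepdigitData F b a x n m T β γ' γ :=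
  { D with hγ := by rw [mul_comm]; exact D.hγ, hγγ := by rw [add_comm γ']; exact D.hγγ }

theorem isIntegral_β (D : RepdigitData F b a x n m T β γ γ') : IsIntegral ℤ β := by
  refine isIntegral_of_quadratic (-(2 * (x : ℤ))) 1 ?_
  push_cast
  linear_combination D.hβ

theorem isIntegral_gγ (D : RepdigitData F b a x n m T β γ γ') :
    IsIntegral ℤ (((b : F) - 1) * γ) := by
  refine isIntegral_of_quadratic (2 * (a : ℤ)) (((b : ℤ) - 1) ^ 2) ?_
  push_cast
  linear_combination ((b : F) - 1) * γ * D.hγγ - ((b : F) - 1) ^ 2 * D.hγ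

theorem isIntegral_g (_D : RepdigitData F b a x n m T β γ γ') : IsIntegral ℤ ((b : F) - 1) :=
  (isIntegral_nat b).sub isIntegral_one

theorem g_cast (D : RepdigitData F b a x n m T β γ γ') : ((b - 1 : ℕ) : F) = (b : F) - 1 := by
  rw [Nat.cast_sub (by have := D.hb; omega)]; simp

theorem γ_mem (D : RepdigitData F b a x n m T β γ γ') : γ ∈ bLocal F b := by
  refine ⟨b - 1, ?_, ?_⟩
  · have hb := D.hb
    have : b = (b - 1) + 1 := by omega
    rw [this]; simp
  · rw [D.g_cast]; exact D.isIntegral_gγ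

theorem g_ne_zero [CharZero F] (D : RepdigitData F b a x n m T β γ γ') : (b : F) - 1 ≠ 0 := by
  rw [← D.g_cast]
  have := D.hb
  exact Nat.cast_ne_zero.2 (by omega)

theorem β_mul (D : RepdigitData F b a x n m T β γ γ') : β * (2 * (x : F) - β) = 1 := by
  linear_combination -D.hβ

theorem β_ne_zero (D : RepdigitData F b a x n m T β γ γ') : β ≠ 0 :=
  left_ne_zero_of_mul (by rw [D.β_mul]; exact one_ne_zero)

theorem γ_ne_zero (D : RepdigitData F b a x n m T β γ γ') : γ ≠ 0 :=
  left_ne_zero_of_mul (by rw [D.hγ]; exact one_ne_zero)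

/-- The basic relation: `β ^ n` is `b`-adically close to `γ` or to `γ'`. -/
theorem mul_AB (D : RepdigitData F b a x n m T β γ γ') :
    ((b : F) - 1) * ((β ^ n - γ) * (β ^ n - γ')) = (b : F) ^ m * (2 * (a : F) * β ^ n) := by
  have h1 : (β ^ n - γ) * (β ^ n - γ') = β ^ (2 * n) - (γ + γ') * β ^ n + γ * γ' := by
    rw [two_mul, pow_add]; ring
  rw [h1]
  linear_combination ((b : F) - 1) * D.hγ - β ^ n * D.hγγ + ((b : F) - 1) * D.hT +
    2 * β ^ n * D.hrep

/-- After clearing denominators by a power of `b - 1` and multiplying by `(β ^ n - γ') ^ (K L)`,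
the interpolation determinant of the monomials `X ^ k Y ^ l` (`k < K`, `l < L`) is an algebraic
integer times `b ^ E`. The passage from `b X` to `X` costs at most `K * (K L)` in the exponent,
which the hypothesis `hE` takes into account. -/
theorem exists_integral_quotient [CharZero F] (D : RepdigitData F b a x n m T β γ γ')
    {w K L S E : ℕ} {θ : F} (hθ : IsIntegral ℤ θ) (hw : β ^ w = 1 + (b : F) ^ 2 * θ)
    (pt : Fin K × Fin L → ℕ × ℕ) (hS : ∀ j, (pt j).2 ≤ S)
    (hE : ∀ i ≤ K * L, E + K * (K * L) ≤ m * (K * L - i) + i.choose 2) :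
    ∃ u : F, IsIntegral ℤ u ∧ ((b : F) - 1) ^ (K * L * (w * L * S + 1)) *
      ((β ^ n - γ') ^ (K * L) * (Matrix.of fun j i : Fin K × Fin L =>
        (((pt j).1 + n * (pt j).2 : ℕ) : F) ^ (i.1 : ℕ) *
          ((β ^ w) ^ (pt j).1 * (γ ^ w) ^ (pt j).2) ^ (i.2 : ℕ)).det) = (b : F) ^ E * u := by
  have hb0 : (b : F) ≠ 0 := Nat.cast_ne_zero.2 (by have := D.hb; omega)
  have hg0 := D.g_ne_zero
  set M : Matrix (Fin K × Fin L) (Fin K × Fin L) F := Matrix.of fun j i : Fin K × Fin L =>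
        (((pt j).1 + n * (pt j).2 : ℕ) : F) ^ (i.1 : ℕ) *
          ((β ^ w) ^ (pt j).1 * (γ ^ w) ^ (pt j).2) ^ (i.2 : ℕ) with hM
  set Q : ℕ := K * L * (w * L * S + 1) with hQ
  -- each entry of the matrix contains `γ` to a power at most `w * L * S`
  have hintegral : IsIntegral ℤ (((b : F) - 1) ^ Q * ((β ^ n - γ') ^ (K * L) * M.det)) := by
    have hcard : Fintype.card (Fin K × Fin L) = K * L := by simp
    have e1 : ((b : F) - 1) ^ Q * ((β ^ n - γ') ^ (K * L) * M.det) =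
        (((b : F) - 1) * (β ^ n - γ')) ^ (K * L) *
          (((b : F) - 1) ^ (w * L * S) • M).det := by
      rw [Matrix.det_smul, hcard, hQ, mul_add, pow_add, mul_one, mul_pow,
        mul_comm (K * L) (w * L * S), pow_mul]
      ring
    rw [e1]
    refine IsIntegral.mul (IsIntegral.pow ?_ _) (isIntegral_det _ fun j i => ?_)
    · have : ((b : F) - 1) * (β ^ n - γ') = ((b : F) - 1) * β ^ n - ((b : F) - 1) * γ' := by ring
      rw [this]
      exact (D.isIntegral_g.mul (D.isIntegral_β.pow n)).sub D.symm.isIntegral_gγ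
    · have hle : w * (pt j).2 * i.2 ≤ w * L * S := by
        have h1 := hS j
        have h2 : (i.2 : ℕ) ≤ L := i.2.2.le
        calc w * (pt j).2 * i.2 ≤ w * S * L := by gcongr
          _ = w * L * S := by ring
      have : (((b : F) - 1) ^ (w * L * S) • M) j i =
          (((pt j).1 + n * (pt j).2 : ℕ) : F) ^ (i.1 : ℕ) * β ^ (w * (pt j).1 * i.2) *
            ((((b : F) - 1) * γ) ^ (w * (pt j).2 * i.2) *
              ((b : F) - 1) ^ (w * L * S - w * (pt j).2 * i.2)) := by
        have h3 : ((b : F) - 1) ^ (w * L * S) = ((b : F) - 1) ^ (w * (pt j).2 * i.2) *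
            ((b : F) - 1) ^ (w * L * S - w * (pt j).2 * i.2) := by
          rw [← pow_add, Nat.add_sub_cancel' hle]
        rw [Matrix.smul_apply, smul_eq_mul, h3, hM, Matrix.of_apply, mul_pow (_ ^ _) (_ ^ _),
          ← pow_mul, ← pow_mul, ← pow_mul, ← pow_mul, mul_pow]
        simp only [mul_assoc]
        ring
      rw [this]
      exact (((isIntegral_nat _).pow _).mul (D.isIntegral_β.pow _)).mul
        ((D.isIntegral_gγ.pow _).mul (D.isIntegral_g.pow _))
  -- divisibility by the power of `b` holds in `bLocal F b`, which contains `1 / (b - 1)`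
  -- and the numbers `b ^ i / i!`
  let R := bLocal F b
  have hginv : ((b : F) - 1)⁻¹ ∈ R := by
    refine ⟨b - 1, ?_, ?_⟩
    · have hb := D.hb
      have : b = (b - 1) + 1 := by omega
      rw [this]; simp
    · rw [D.g_cast, mul_inv_cancel₀ hg0]; exact isIntegral_one
  have he : ∀ i : ℕ, ∃ e : R, e * (i.factorial : R) = (b : R) ^ i := by
    intro i
    have hf : (i.factorial : F) ≠ 0 := Nat.cast_ne_zero.2 (Nat.factorial_ne_zero i)
    refine ⟨⟨(b : F) ^ i / i.factorial, ?_⟩, ?_⟩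
    · obtain ⟨c, hc, k, hk⟩ := exists_coprime_factorial_dvd b i
      refine ⟨c, hc, ?_⟩
      have : (c : F) * ((b : F) ^ i / i.factorial) = (k : F) := by
        have hk' : (c : F) * (b : F) ^ i = i.factorial * k := by exact_mod_cast hk
        field_simp
        rw [hk']
      rw [this]
      exact isIntegral_nat k
    · apply Subtype.ext
      push_cast
      field_simp
  choose e he using he
  let βR : R := ⟨β, mem_bLocal_of_isIntegral D.isIntegral_β⟩
  let γR : R := ⟨γ, D.γ_mem⟩
  let γR' : R := ⟨γ', D.symm.γ_mem⟩
  let θR : R := ⟨θ, mem_bLocal_of_isIntegral hθ⟩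
  let gR : R := ⟨((b : F) - 1)⁻¹, hginv⟩
  have hwR : βR ^ w = 1 + (b : R) ^ 2 * θR := by
    apply Subtype.ext; push_cast; exact hw
  have hABR : (βR ^ n - γR) * (βR ^ n - γR') = (b : R) ^ m * (((2 * a : ℕ) : R) * βR ^ n * gR) := by
    apply Subtype.ext
    push_cast
    have := D.mul_AB
    simp only [βR, γR, γR', gR]
    field_simp
    have h2 : ((2 : R) : F) = 2 := rfl
    rw [h2]
    linear_combination this
  obtain ⟨v, hv⟩ := core_divisibility b e he βR γR γR' θR _ w n m K L (E + K * (K * L)) hwR hABR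
    pt hE
  have hv' := congrArg (Subtype.val) hv
  have hdet : (((Matrix.of fun j i : Fin K × Fin L =>
        ((b : R) * (((pt j).1 + n * (pt j).2 : ℕ) : R)) ^ (i.1 : ℕ) *
          ((βR ^ w) ^ (pt j).1 * (γR ^ w) ^ (pt j).2) ^ (i.2 : ℕ)).det : R) : F) =
      (∏ i : Fin K × Fin L, (b : F) ^ (i.1 : ℕ)) * M.det := by
    rw [← Matrix.det_mul_row]
    have := RingHom.map_det R.subtype (Matrix.of fun j i : Fin K × Fin L =>
        ((b : R) * (((pt j).1 + n * (pt j).2 : ℕ) : R)) ^ (i.1 : ℕ) *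
          ((βR ^ w) ^ (pt j).1 * (γR ^ w) ^ (pt j).2) ^ (i.2 : ℕ))
    refine this.trans ?_
    congr 1
    ext j i
    simp only [RingHom.mapMatrix_apply, Matrix.map_apply, Matrix.of_apply, hM, map_mul, map_pow,
      map_natCast]
    rw [mul_pow, mul_assoc]
    rfl
  rw [Subring.coe_mul, hdet] at hv'
  have hprod : ∏ i : Fin K × Fin L, (b : F) ^ (i.1 : ℕ) =
      (b : F) ^ (∑ i : Fin K × Fin L, (i.1 : ℕ)) := Finset.prod_pow_eq_pow_sum _ _ _
  set s₀ : ℕ := ∑ i : Fin K × Fin L, (i.1 : ℕ) with hs₀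
  have hs₀le : s₀ ≤ K * (K * L) := by
    calc s₀ ≤ ∑ _i : Fin K × Fin L, K := Finset.sum_le_sum fun i _ => i.1.2.le
      _ = K * (K * L) := by simp; ring
  rw [hprod] at hv'
  have hv'' : (b : F) ^ s₀ * ((β ^ n - γ') ^ (K * L) * M.det) =
      (b : F) ^ s₀ * ((b : F) ^ E * ((b : F) ^ (K * (K * L) - s₀) * (v : F))) := by
    have h1 : (b : F) ^ (E + K * (K * L)) = (b : F) ^ s₀ * ((b : F) ^ E *
        (b : F) ^ (K * (K * L) - s₀)) := by
      rw [← pow_add, ← pow_add]; congr 1; omega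
    have h2 : (β ^ n - γ') ^ (K * L) * ((b : F) ^ s₀ * M.det) =
        (b : F) ^ (E + K * (K * L)) * (v : F) := by
      simpa [βR, γR'] using hv'
    rw [h1] at h2
    linear_combination h2
  have hv3 := mul_left_cancel₀ (pow_ne_zero _ hb0) hv''
  refine ⟨((b : F) - 1) ^ Q * ((b : F) ^ (K * (K * L) - s₀) * (v : F)), ?_, ?_⟩
  · refine isIntegral_of_mem_bLocal (b := b) (E := E) ?_ ?_
    · refine Subring.mul_mem _ (Subring.pow_mem _ (mem_bLocal_of_isIntegral D.isIntegral_g) _)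
        (Subring.mul_mem _ (Subring.pow_mem _ (mem_bLocal_of_isIntegral (isIntegral_nat b)) _) v.2)
    · convert hintegral using 1
      rw [hv3]; ring
  · rw [hv3]; ring

end RepdigitData

/-! ### Norms -/

/-- The absolute value of the norm from `F` to `ℚ`, as the product of the absolute values of the
conjugates. -/
noncomputable def absNm {F : Type*} [Field F] [NumberField F] (z : F) : ℝ :=
  ∏ σ : F →ₐ[ℚ] ℂ, ‖σ z‖

section absNm
variable {F : Type*} [Field F] [NumberField F]

theorem absNm_mul (y z : F) : absNm (y * z) = absNm y * absNm z := by
  simp [absNm, Finset.prod_mul_distrib]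

theorem absNm_pow (y : F) (k : ℕ) : absNm (y ^ k) = absNm y ^ k := by
  simp [absNm, Finset.prod_pow]

theorem absNm_nonneg (y : F) : 0 ≤ absNm y := Finset.prod_nonneg fun _ _ => norm_nonneg _

theorem absNm_nat (k : ℕ) : absNm (k : F) = (k : ℝ) ^ Module.finrank ℚ F := by
  simp [absNm, AlgHom.card]

theorem absNm_le {z : F} {H : ℝ} (h : ∀ σ : F →ₐ[ℚ] ℂ, ‖σ z‖ ≤ H) :
    absNm z ≤ H ^ Module.finrank ℚ F := by
  calc absNm z ≤ ∏ _σ : F →ₐ[ℚ] ℂ, H :=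
        Finset.prod_le_prod (fun _ _ => norm_nonneg _) fun σ _ => h σ
    _ = _ := by simp [AlgHom.card]

theorem one_le_absNm {z : F} (hz : IsIntegral ℤ z) (h0 : z ≠ 0) : 1 ≤ absNm z := by
  have h1 := Algebra.norm_eq_prod_embeddings ℚ ℂ z
  have h2 : absNm z = ‖algebraMap ℚ ℂ (Algebra.norm ℚ z)‖ := by
    rw [h1, norm_prod]; rfl
  obtain ⟨k, hk⟩ := IsIntegrallyClosed.isIntegral_iff.1 (Algebra.isIntegral_norm ℚ hz)
  have hk0 : k ≠ 0 := by
    rintro rfl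
    have : Algebra.norm ℚ z = 0 := by rw [← hk]; simp
    exact h0 (Algebra.norm_eq_zero_iff.1 this)
  rw [h2, ← hk]
  have : (1 : ℝ) ≤ |(k : ℝ)| := by exact_mod_cast Int.one_le_abs hk0
  simpa using this

end absNm

/-! ### Sizes of conjugates and the norm inequality -/

/-- The roots of the reciprocal quadratic `g z² + 2 a z + g` with `0 ≤ a ≤ g` lie on the unit
circle. -/
theorem norm_eq_one_of_recip {z z' : ℂ} {g a : ℝ} (ha : 0 ≤ a) (hg : 0 < g) (hag : a ≤ g)
    (h1 : z * z' = 1) (h2 : (g : ℂ) * (z + z') = -(2 * (a : ℂ))) : ‖z‖ = 1 := by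
  have h3 : (g : ℂ) * z ^ 2 + 2 * a * z + g = 0 := by
    linear_combination z * h2 - (g : ℂ) * h1
  have hre := congrArg Complex.re h3
  have him := congrArg Complex.im h3
  simp [pow_two] at hre him
  have h4 : z.re ^ 2 + z.im ^ 2 = 1 := by
    have him' : z.im * (g * z.re + a) = 0 := by linear_combination him / 2
    rcases mul_eq_zero.1 him' with h | h
    · rw [h] at hre ⊢
      have h5 : (g * z.re + a) ^ 2 = a ^ 2 - g ^ 2 := by linear_combination g * hre
      have h6 : a ^ 2 ≤ g ^ 2 := by gcongr
      have h7 : g * z.re + a = 0 := by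
        have : (g * z.re + a) ^ 2 = 0 := le_antisymm (by linarith) (sq_nonneg _)
        exact pow_eq_zero_iff (by norm_num) |>.1 this
      have h8 : g ^ 2 * (z.re ^ 2 - 1) = 0 := by
        rw [h7] at h5
        have : g * z.re = -a := by linarith
        linear_combination (g * z.re - a) * this - h5
      rcases mul_eq_zero.1 h8 with h | h
      · exact absurd h (by positivity)
      · linarith
    · have : g * (z.re ^ 2 + z.im ^ 2 - 1) = 0 := by
        linear_combination -hre + 2 * z.re * h
      rcases mul_eq_zero.1 this with h | h
      · exact absurd h hg.ne'
      · linarith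
  rw [← sq_eq_sq₀ (norm_nonneg _) zero_le_one, Complex.sq_norm, Complex.normSq_apply]
  linarith

namespace RepdigitData
variable {F : Type*} [Field F] {b a x n m T : ℕ} {β γ γ' : F}

theorem norm_γ (D : RepdigitData F b a x n m T β γ γ') (σ : F →+* ℂ) : ‖σ γ‖ = 1 := by
  have hb := D.hb
  have hab := D.hab
  have hb' : (2 : ℝ) ≤ b := by exact_mod_cast hb
  have hab' : (a : ℝ) + 1 ≤ b := by exact_mod_cast hab
  refine norm_eq_one_of_recip (z' := σ γ') (g := (b : ℝ) - 1) (a := a) (by positivity)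
    (by linarith) (by linarith) ?_ ?_
  · rw [← map_mul, D.hγ, map_one]
  · have := congrArg σ D.hγγ
    simp only [map_mul, map_sub, map_natCast, map_one, map_add, map_neg, map_ofNat] at this
    simpa using this

theorem norm_β_le (D : RepdigitData F b a x n m T β γ γ') (σ : F →+* ℂ) :
    ‖σ β‖ ≤ 3 * x := by
  have h := congrArg σ D.hβ
  simp only [map_mul, map_natCast, map_one, map_add, map_pow, map_ofNat] at h
  have h1 : ‖σ β‖ ^ 2 ≤ 2 * x * ‖σ β‖ + 1 := by
    have : (σ β) ^ 2 = 2 * x * σ β - 1 := by linear_combination h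
    rw [← norm_pow, this]
    refine (norm_sub_le _ _).trans ?_
    simp
  have hx : (2 : ℝ) ≤ x := by exact_mod_cast D.hx
  by_contra hc
  push Not at hc
  nlinarith

theorem norm_β_ne_one (D : RepdigitData F b a x n m T β γ γ') (σ : F →+* ℂ) :
    ‖σ β‖ ≠ 1 := by
  intro h1
  have h := congrArg (fun z => ‖σ z‖) D.hβ
  simp only [map_mul, map_natCast, map_one, map_add, map_pow, map_ofNat, norm_mul, h1,
    mul_one, RCLike.norm_natCast, RCLike.norm_ofNat] at h
  have h2 : ‖(σ β) ^ 2 + 1‖ ≤ 2 := by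
    refine (norm_add_le _ _).trans ?_
    simp [h1]; norm_num
  have hx : (2 : ℝ) ≤ x := by exact_mod_cast D.hx
  linarith

theorem injective_pow [NumberField F] (D : RepdigitData F b a x n m T β γ γ') {w : ℕ} (hw : 1 ≤ w) :
    Function.Injective fun i : ℕ => (β ^ w) ^ i := by
  obtain ⟨σ⟩ : Nonempty (F →+* ℂ) := inferInstance
  have h0 : 0 < ‖σ β‖ := norm_pos_iff.2 (by simpa using D.β_ne_zero)
  have hinj := pow_right_injective₀ (a := ‖σ β‖ ^ w) (by positivity) (by
    rw [Ne, pow_eq_one_iff_of_nonneg (norm_nonneg _) (by omega)]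
    exact D.norm_β_ne_one σ)
  intro i j hij
  apply hinj
  simpa using congrArg (fun z => ‖σ z‖) hij

theorem absNm_β [NumberField F] (D : RepdigitData F b a x n m T β γ γ') : absNm β = 1 := by
  have h1 := D.β_mul
  have hβ' : IsIntegral ℤ (2 * (x : F) - β) := by
    have := ((isIntegral_nat (F := F) (2 * x))).sub D.isIntegral_β
    push_cast at this
    exact this
  have h2 := one_le_absNm D.isIntegral_β D.β_ne_zero
  have h3 := one_le_absNm hβ' (right_ne_zero_of_mul (by rw [h1]; exact one_ne_zero))
  have h4 : absNm β * absNm (2 * (x : F) - β) = 1 := by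
    rw [← absNm_mul, h1]; simp [absNm]
  nlinarith

/-- The smaller of the norms of `β ^ n - γ` and `β ^ n - γ'` is at most the square root of the
norm of their product. -/
theorem absNm_B [NumberField F] (D : RepdigitData F b a x n m T β γ γ')
    (hle : absNm (β ^ n - γ') ≤ absNm (β ^ n - γ)) :
    absNm (β ^ n - γ') ^ 2 ≤ (2 * (b : ℝ) ^ m) ^ Module.finrank ℚ F := by
  set f := Module.finrank ℚ F with hf
  have h := congrArg absNm D.mul_AB
  rw [← D.g_cast] at h
  have e : (b : F) ^ m * (2 * (a : F) * β ^ n) = ((b ^ m * (2 * a) : ℕ) : F) * β ^ n := by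
    push_cast; ring
  rw [e, absNm_mul, absNm_mul, absNm_mul, absNm_pow, D.absNm_β, absNm_nat, absNm_nat, one_pow,
    mul_one, ← hf] at h
  have hb := D.hb
  have hab := D.hab
  have hg : (0 : ℝ) < ((b - 1 : ℕ) : ℝ) := by exact_mod_cast (by omega : 0 < b - 1)
  have hag : (a : ℝ) ≤ ((b - 1 : ℕ) : ℝ) := by exact_mod_cast (by omega : a ≤ b - 1)
  have h2 : ((b - 1 : ℕ) : ℝ) ^ f * absNm (β ^ n - γ') ^ 2 ≤
      ((b - 1 : ℕ) : ℝ) ^ f * (2 * (b : ℝ) ^ m) ^ f := by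
    calc ((b - 1 : ℕ) : ℝ) ^ f * absNm (β ^ n - γ') ^ 2
        ≤ ((b - 1 : ℕ) : ℝ) ^ f * (absNm (β ^ n - γ) * absNm (β ^ n - γ')) := by
          rw [pow_two]
          gcongr
          exact absNm_nonneg _
      _ = ((b ^ m * (2 * a) : ℕ) : ℝ) ^ f := h
      _ ≤ (((b - 1 : ℕ) : ℝ) * (2 * (b : ℝ) ^ m)) ^ f := by
          push_cast
          gcongr ?_ ^ f
          nlinarith [pow_nonneg (Nat.cast_nonneg (α := ℝ) b) m]
      _ = _ := by rw [mul_pow]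
  exact le_of_mul_le_mul_left h2 (by positivity)

/-- By the zero estimate, some `K L` points of the grid give a nonzero interpolation
determinant. -/
theorem exists_points [NumberField F] (D : RepdigitData F b a x n m T β γ γ')
    {w K L R₂ S : ℕ} (hw : 1 ≤ w)
    (hR : R₂ ≤ n) (hcount : K * L < R₂ * S) :
    ∃ pt : Fin K × Fin L → ℕ × ℕ, (∀ j, (pt j).1 < L + R₂ ∧ (pt j).2 < S) ∧
      (Matrix.of fun j i : Fin K × Fin L =>
        (((pt j).1 + n * (pt j).2 : ℕ) : F) ^ (i.1 : ℕ) *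
          ((β ^ w) ^ (pt j).1 * (γ ^ w) ^ (pt j).2) ^ (i.2 : ℕ)).det ≠ 0 := by
  obtain ⟨f, hf⟩ := exists_minor_ne_zero (F := F) (ι := Fin K × Fin L)
    (κ := Fin (L + R₂) × Fin S)
    (fun q i => (((q.1 : ℕ) + n * (q.2 : ℕ) : ℕ) : F) ^ (i.1 : ℕ) *
          ((β ^ w) ^ (q.1 : ℕ) * (γ ^ w) ^ (q.2 : ℕ)) ^ (i.2 : ℕ)) (by
      intro c hc
      have hz := zero_estimate K L R₂ S n (β ^ w) (γ ^ w) (D.injective_pow hw)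
        (pow_ne_zero _ D.β_ne_zero) (pow_ne_zero _ D.γ_ne_zero) hR hcount
        (fun l => ∑ k : Fin K, C (c (k, l)) * X ^ (k : ℕ)) (by
          intro l
          refine natDegree_sum_le_of_forall_le _ _ fun k _ => ?_
          exact (natDegree_C_mul_X_pow_le _ _).trans k.2.le) (by
          intro r hr s hs
          have := hc (⟨r, hr⟩, ⟨s, hs⟩)
          rw [Fintype.sum_prod_type_right] at this
          rw [← this]
          refine Finset.sum_congr rfl fun l _ => ?_
          rw [eval_finsetSum, Finset.sum_mul]
          refine Finset.sum_congr rfl fun k _ => ?_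
          simp only [eval_mul, eval_C, eval_pow, eval_X]
          ring)
      funext i
      have h1 := congrArg (fun p => p.coeff (i.1 : ℕ)) (congrFun hz i.2)
      simp only [finsetSum_coeff, coeff_C_mul, coeff_X_pow, Pi.zero_apply, coeff_zero] at h1
      rw [Finset.sum_eq_single i.1] at h1
      · simpa using h1
      · intro k _ hk
        rw [if_neg (fun h => hk (Fin.ext h.symm)), mul_zero]
      · intro h; exact absurd (Finset.mem_univ _) h)
  exact ⟨fun j => ((f j).1, (f j).2), fun j => ⟨(f j).1.2, (f j).2.2⟩, hf⟩

/-- The norm inequality: the nonzero algebraic integer provided by `exists_integral_quotient` has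
norm at least `1`, and its conjugates are bounded trivially. Since the conjugates of `γ` have
absolute value `1`, only powers of `β` and the size `Xm` of the integers `r + n s` enter. All
quantities are squared to absorb the square root in `absNm_B`, and the degree of `F` is
cancelled. -/
theorem main_ineq_aux [NumberField F] (D : RepdigitData F b a x n m T β γ γ')
    (hle : absNm (β ^ n - γ') ≤ absNm (β ^ n - γ))
    {w K L R₂ S E Xm : ℕ} {θ : F} (hw1 : 1 ≤ w) (hθ : IsIntegral ℤ θ)
    (hw : β ^ w = 1 + (b : F) ^ 2 * θ) (hR : R₂ ≤ n) (hcount : K * L < R₂ * S)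
    (hE : ∀ i ≤ K * L, E + K * (K * L) ≤ m * (K * L - i) + i.choose 2)
    (hXm : L + R₂ + n * S ≤ Xm) (hXm1 : 1 ≤ Xm) :
    (b : ℝ) ^ (2 * E) ≤ ((b : ℝ) ^ (K * L * (w * L * S + 1))) ^ 2 * (2 * (b : ℝ) ^ m) ^ (K * L) *
      (((K * L).factorial : ℝ) *
        ((Xm : ℝ) ^ K * (3 * x : ℝ) ^ (w * (L + R₂) * L)) ^ (K * L)) ^ 2 := by
  obtain ⟨pt, hpt, hdet⟩ := D.exists_points hw1 hR hcount
  obtain ⟨u, hu, hueq⟩ := D.exists_integral_quotient hθ hw pt (fun j => (hpt j).2.le) hE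
  set N := K * L with hN
  set Q := N * (w * L * S + 1) with hQ
  set f := Module.finrank ℚ F with hf
  have hf0 : f ≠ 0 := (Module.finrank_pos (R := ℚ) (M := F)).ne'
  set M : Matrix (Fin K × Fin L) (Fin K × Fin L) F := Matrix.of fun j i : Fin K × Fin L =>
        (((pt j).1 + n * (pt j).2 : ℕ) : F) ^ (i.1 : ℕ) *
          ((β ^ w) ^ (pt j).1 * (γ ^ w) ^ (pt j).2) ^ (i.2 : ℕ) with hM
  set H : ℝ := (Xm : ℝ) ^ K * (3 * x : ℝ) ^ (w * (L + R₂) * L) with hH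
  have hx : (2 : ℝ) ≤ x := by exact_mod_cast D.hx
  have hb : (2 : ℝ) ≤ b := by exact_mod_cast D.hb
  have hB0 : β ^ n - γ' ≠ 0 := by
    have h := D.mul_AB
    intro h0
    rw [h0, mul_zero, mul_zero] at h
    have hb0 : (b : F) ≠ 0 := Nat.cast_ne_zero.2 (by have := D.hb; omega)
    have ha0 : (a : F) ≠ 0 := Nat.cast_ne_zero.2 (by have := D.ha; omega)
    exact mul_ne_zero (pow_ne_zero _ hb0) (mul_ne_zero (mul_ne_zero two_ne_zero ha0)
      (pow_ne_zero _ D.β_ne_zero)) h.symm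
  have hu0 : u ≠ 0 := by
    rintro rfl
    rw [mul_zero] at hueq
    exact mul_ne_zero (pow_ne_zero _ D.g_ne_zero) (mul_ne_zero (pow_ne_zero _ hB0) hdet) hueq
  have hdetle : absNm M.det ≤ ((N.factorial : ℝ) * H ^ N) ^ f := by
    refine absNm_le fun σ => ?_
    have hent : ∀ j i, ‖(σ : F →+* ℂ).mapMatrix M j i‖ ≤ H := by
      intro j i
      have h1 : ((((pt j).1 + n * (pt j).2 : ℕ) : ℝ)) ≤ Xm := by
        have := hpt j
        have h2 : n * (pt j).2 ≤ n * S := Nat.mul_le_mul_left _ this.2.le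
        exact_mod_cast (by omega : (pt j).1 + n * (pt j).2 ≤ Xm)
      have hXm1' : (1 : ℝ) ≤ Xm := by exact_mod_cast hXm1
      have e : ‖(σ : F →+* ℂ).mapMatrix M j i‖ =
          ((((pt j).1 + n * (pt j).2 : ℕ) : ℝ)) ^ (i.1 : ℕ) *
            ‖(σ : F →+* ℂ) β‖ ^ (w * (pt j).1 * i.2) := by
        simp only [hM, RingHom.mapMatrix_apply, Matrix.map_apply, Matrix.of_apply, map_mul,
          map_pow, map_natCast, norm_mul, norm_pow, D.norm_γ (σ : F →+* ℂ), one_pow, mul_one,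
          RCLike.norm_natCast, pow_mul]
      rw [e, hH]
      gcongr ?_ * ?_
      · exact (pow_le_pow_left₀ (by positivity) h1 _).trans
          (pow_le_pow_right₀ hXm1' i.1.2.le)
      · refine (pow_le_pow_left₀ (norm_nonneg _) (D.norm_β_le (σ : F →+* ℂ)) _).trans
          (pow_le_pow_right₀ (by linarith) ?_)
        have := (hpt j).1.le
        have := i.2.2.le
        gcongr
    have h2 := Matrix.det_le (abv := NormedField.toAbsoluteValue ℂ) hent
    rw [← RingHom.map_det] at h2
    change ‖σ M.det‖ ≤ _ at h2
    simpa [hN] using h2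
  have h1 := congrArg absNm hueq
  rw [← D.g_cast, absNm_mul, absNm_mul, absNm_mul, absNm_pow, absNm_pow, absNm_pow, absNm_nat,
    absNm_nat, ← hf] at h1
  have hgb : ((b - 1 : ℕ) : ℝ) ≤ b := by exact_mod_cast Nat.sub_le _ _
  have hu1 := one_le_absNm hu hu0
  have h2 : ((b : ℝ) ^ f) ^ E ≤ ((b : ℝ) ^ f) ^ Q * (absNm (β ^ n - γ') ^ N *
      ((N.factorial : ℝ) * H ^ N) ^ f) := by
    calc ((b : ℝ) ^ f) ^ E ≤ ((b : ℝ) ^ f) ^ E * absNm u :=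
          le_mul_of_one_le_right (by positivity) hu1
      _ = _ := h1.symm
      _ ≤ _ := by
          have := absNm_nonneg (β ^ n - γ')
          have := absNm_nonneg M.det
          gcongr
  have hB := D.absNm_B hle
  rw [← pow_le_pow_iff_left₀ (n := f) (by positivity) (by positivity) hf0]
  calc ((b : ℝ) ^ (2 * E)) ^ f = (((b : ℝ) ^ f) ^ E) ^ 2 := by ring
    _ ≤ (((b : ℝ) ^ f) ^ Q * (absNm (β ^ n - γ') ^ N *
      ((N.factorial : ℝ) * H ^ N) ^ f)) ^ 2 := by gcongr
    _ = (((b : ℝ) ^ f) ^ Q) ^ 2 * ((absNm (β ^ n - γ') ^ 2) ^ N) *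
      (((N.factorial : ℝ) * H ^ N) ^ f) ^ 2 := by ring
    _ ≤ (((b : ℝ) ^ f) ^ Q) ^ 2 * (((2 * (b : ℝ) ^ m) ^ f) ^ N) *
      (((N.factorial : ℝ) * H ^ N) ^ f) ^ 2 := by gcongr
    _ = _ := by
      generalize 2 * (b : ℝ) ^ m = y
      generalize (N.factorial : ℝ) * H ^ N = z
      ring

/-- The inequality of `main_ineq_aux` without a comparison of the two norms, which can always be
achieved by exchanging `γ` and `γ'`. -/
theorem main_ineq [NumberField F] (D : RepdigitData F b a x n m T β γ γ')
    {w K L R₂ S E Xm : ℕ} {θ : F} (hw1 : 1 ≤ w) (hθ : IsIntegral ℤ θ)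
    (hw : β ^ w = 1 + (b : F) ^ 2 * θ) (hR : R₂ ≤ n) (hcount : K * L < R₂ * S)
    (hE : ∀ i ≤ K * L, E + K * (K * L) ≤ m * (K * L - i) + i.choose 2)
    (hXm : L + R₂ + n * S ≤ Xm) (hXm1 : 1 ≤ Xm) :
    (b : ℝ) ^ (2 * E) ≤ ((b : ℝ) ^ (K * L * (w * L * S + 1))) ^ 2 * (2 * (b : ℝ) ^ m) ^ (K * L) *
      (((K * L).factorial : ℝ) *
        ((Xm : ℝ) ^ K * (3 * x : ℝ) ^ (w * (L + R₂) * L)) ^ (K * L)) ^ 2 := by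
  rcases le_total (absNm (β ^ n - γ')) (absNm (β ^ n - γ)) with h | h
  · exact D.main_ineq_aux h hw1 hθ hw hR hcount hE hXm hXm1
  · exact D.symm.main_ineq_aux h hw1 hθ hw hR hcount hE hXm hXm1

end RepdigitData

/-! ### Choice of parameters -/

theorem pow_3400_le_two_pow {t : ℕ} (ht : 2 ^ 17 ≤ t) : t ^ 3400 ≤ 2 ^ t := by
  have h0 : t ≠ 0 := by rintro rfl; norm_num at ht
  set k := Nat.log 2 t with hk
  have hk17 : 17 ≤ k := Nat.le_log_of_pow_le (by norm_num) ht
  have h1 : t ≤ 2 ^ (k + 1) := (Nat.lt_pow_succ_log_self (by norm_num) t).le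
  have h2 : 2 ^ k ≤ t := Nat.pow_log_le_self 2 h0
  have h3 : (k + 1) * 3400 ≤ 2 ^ k := by
    clear_value k
    clear hk h1 h2
    induction k, hk17 using Nat.le_induction with
    | base => norm_num
    | succ k hk ih => rw [pow_succ 2 k]; linarith
  calc t ^ 3400 ≤ (2 ^ (k + 1)) ^ 3400 := Nat.pow_le_pow_left h1 _
    _ = 2 ^ ((k + 1) * 3400) := by rw [pow_mul]
    _ ≤ 2 ^ t := Nat.pow_le_pow_right (by norm_num) (h3.trans h2)

/-- For `N ≤ 2 m` the minimum over `i` of `m (N - i) + (i choose 2)` is at least about `3 N² / 8`;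
the convex function in question is smallest near `i = N / 2` when `N = 2 m`. -/
theorem choose_bound {m N K E i : ℕ} (hm : N ≤ 2 * m) (hi : i ≤ N)
    (hE : 8 * E + 4 * N + 8 * (K * N) ≤ 3 * N ^ 2) :
    E + K * N ≤ m * (N - i) + i.choose 2 := by
  obtain ⟨j, rfl⟩ := Nat.exists_eq_add_of_le hi
  rw [Nat.add_sub_cancel_left]
  have h2 : i.choose 2 * 2 + i = i * i := by
    rw [Nat.choose_two_right, Nat.div_mul_cancel (Nat.even_mul_pred_self i).two_dvd]
    cases i <;> simp; ring
  have h3 : (i + j) * j ≤ 2 * m * j := Nat.mul_le_mul_right _ hm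
  zify at *
  nlinarith [sq_nonneg ((i : ℤ) - j)]

/-- The norm inequality fails for a large index `n`, with `t` about the tenth root of `n`. The
parameters are `L = t`, `R₂ = t ^ 7`, `K = ⌊2 m / t⌋` and `S = ⌊2 m / t ^ 7⌋ + 1`, so that
`N = K L` is about `2 m` and the integers `r + n s` are at most `t ^ 34`. On the logarithmic scale
to base `b` the left-hand side `2 E` is about `3 N² / 4`, while on the right the factor
`(2 b ^ m) ^ N` is about `N² / 2` and everything else amounts to a few hundredths of `N²`. -/
theorem param_contra {b x n m t w : ℕ} (hb : 2 ≤ b) (hx : 2 ≤ x) (hbt : b ^ 4 ≤ t)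
    (ht : 2 ^ 17 ≤ t) (hw : w ≤ b ^ 4) (hn : t ^ 10 ≤ n) (hn' : n ≤ t ^ 11)
    (h1 : x ^ n ≤ b ^ m) (h2 : m ≤ 10 * n ^ 2 + 1)
    (main : ∀ K L R₂ S E Xm : ℕ, R₂ ≤ n → K * L < R₂ * S →
      (∀ i ≤ K * L, E + K * (K * L) ≤ m * (K * L - i) + i.choose 2) →
      L + R₂ + n * S ≤ Xm → 1 ≤ Xm →
      b ^ (2 * E) ≤ (b ^ (K * L * (w * L * S + 1))) ^ 2 * (2 * b ^ m) ^ (K * L) *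
      ((K * L).factorial * (Xm ^ K * (3 * x) ^ (w * (L + R₂) * L)) ^ (K * L)) ^ 2) : False := by
  have ht0 : 0 < t := by omega
  have hwt : w ≤ t := hw.trans hbt
  have hbt' : b ≤ t := (Nat.le_self_pow (by norm_num) b).trans hbt
  have hm9 : t ^ 9 ≤ m := by
    have h3 : 2 ^ n ≤ 2 ^ (b * m) := by
      calc 2 ^ n ≤ x ^ n := Nat.pow_le_pow_left hx _
        _ ≤ b ^ m := h1
        _ ≤ (2 ^ b) ^ m := Nat.pow_le_pow_left Nat.lt_two_pow_self.le _
        _ = _ := by rw [pow_mul]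
    have h4 : n ≤ b * m := (Nat.pow_le_pow_iff_right (by norm_num)).1 h3
    have h5 : t * t ^ 9 ≤ t * m := by
      calc t * t ^ 9 = t ^ 10 := by ring
        _ ≤ n := hn
        _ ≤ b * m := h4
        _ ≤ t * m := Nat.mul_le_mul_right _ hbt'
    exact Nat.le_of_mul_le_mul_left h5 ht0
  have hpow : ∀ i j : ℕ, i ≤ j → t ^ i ≤ t ^ j := fun i j h => Nat.pow_le_pow_right ht0 h
  have hm22 : m ≤ 11 * t ^ 22 := by
    have h3 : n ^ 2 ≤ t ^ 22 := by
      calc n ^ 2 ≤ (t ^ 11) ^ 2 := Nat.pow_le_pow_left hn' _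
        _ = _ := by ring
    have := Nat.one_le_pow 22 t ht0
    omega
  set K := 2 * m / t with hK
  have hK1 : K * t ≤ 2 * m := Nat.div_mul_le_self _ _
  have hK2 : 2 * m < K * t + t := by
    have := Nat.lt_div_mul_add (a := 2 * m) ht0; exact this
  set S := 2 * m / t ^ 7 + 1 with hS
  have hS1 : t ^ 7 * S ≤ 2 * m + t ^ 7 := by
    rw [hS, mul_add, mul_one]
    exact Nat.add_le_add_right (Nat.mul_div_le _ _) _
  have hS2 : 2 * m < t ^ 7 * S := by
    have := Nat.lt_mul_div_succ (2 * m) (pow_pos ht0 7); exact this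
  have hS3 : S ≤ 2 * m + 1 := by rw [hS]; exact Nat.add_le_add_right (Nat.div_le_self _ _) _
  set N := K * t with hN
  have ht2m : t ^ 2 ≤ m := (hpow 2 9 (by norm_num)).trans hm9
  have hmt : 2 ^ 17 * t ≤ m := by
    calc 2 ^ 17 * t ≤ t * t := Nat.mul_le_mul_right _ ht
      _ = t ^ 2 := by ring
      _ ≤ m := ht2m
  have hNpos : 0 < N := by omega
  have hKN : 8 * (K * N) + 4 * N ≤ 3 * N ^ 2 := by
    have : 8 * K + 4 ≤ 3 * N := by
      have : 2 ^ 17 * K ≤ N := by rw [hN, mul_comm]; exact Nat.mul_le_mul_left _ ht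
      omega
    calc 8 * (K * N) + 4 * N = (8 * K + 4) * N := by ring
      _ ≤ 3 * N * N := Nat.mul_le_mul_right _ this
      _ = _ := by ring
  set E := (3 * N ^ 2 - 4 * N - 8 * (K * N)) / 8 with hE
  have hE1 : 8 * E + 4 * N + 8 * (K * N) ≤ 3 * N ^ 2 := by omega
  have hE2 : 3 * N ^ 2 ≤ 8 * E + 4 * N + 8 * (K * N) + 8 := by omega
  have hXm : t + t ^ 7 + n * S ≤ t ^ 34 := by
    have e1 : n * S ≤ t ^ 11 * (23 * t ^ 22) := by
      have := Nat.one_le_pow 22 t ht0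
      exact Nat.mul_le_mul hn' (by omega)
    have e2 : t ≤ t ^ 33 := by simpa using hpow 1 33 (by norm_num)
    have e3 := hpow 7 33 (by norm_num)
    have e4 : 25 * t ^ 33 ≤ t ^ 34 := by
      rw [pow_succ t 33, mul_comm]; exact Nat.mul_le_mul_left _ (by omega)
    have e5 : t ^ 11 * (23 * t ^ 22) = 23 * t ^ 33 := by ring
    omega
  have hNX : N ≤ t ^ 34 := by
    have e3 := hpow 22 33 (by norm_num)
    have e4 : 25 * t ^ 33 ≤ t ^ 34 := by
      rw [pow_succ t 33, mul_comm]; exact Nat.mul_le_mul_left _ (by omega)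
    omega
  have hX1 : 1 ≤ t ^ 34 := Nat.one_le_pow _ _ ht0
  have key := main K t (t ^ 7) S E (t ^ 34) ((hpow 7 10 (by norm_num)).trans hn)
    (lt_of_le_of_lt hK1 hS2) (fun i hi => choose_bound hK1 hi hE1) hXm hX1
  rw [← hN] at key
  set V := w * t * S with hV
  set Z := (3 * x) ^ (w * (t + t ^ 7) * t) with hZ
  have hZ1 : Z ^ t ≤ b ^ (6 * m) := by
    have e1 : w * (t + t ^ 7) * t ≤ 2 * t ^ 9 := by
      calc w * (t + t ^ 7) * t ≤ t * (t ^ 7 + t ^ 7) * t := by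
            have := hpow 1 7 (by norm_num)
            rw [pow_one] at this
            gcongr
        _ = 2 * t ^ 9 := by ring
    have e2 : 3 * x ≤ x ^ 3 := by nlinarith [Nat.mul_le_mul hx hx]
    have hx0 : 0 < x := by omega
    calc Z ^ t ≤ ((3 * x) ^ (2 * t ^ 9)) ^ t :=
          Nat.pow_le_pow_left (Nat.pow_le_pow_right (by omega) e1) _
      _ ≤ ((x ^ 3) ^ (2 * t ^ 9)) ^ t := by gcongr
      _ = (x ^ (t ^ 10)) ^ 6 := by rw [← pow_mul, ← pow_mul, ← pow_mul]; congr 1; ring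
      _ ≤ (x ^ n) ^ 6 := Nat.pow_le_pow_left (Nat.pow_le_pow_right hx0 hn) _
      _ ≤ (b ^ m) ^ 6 := Nat.pow_le_pow_left h1 _
      _ = _ := by rw [← pow_mul, mul_comm]
  have hX100 : (t ^ 34) ^ 100 ≤ b ^ t := by
    calc (t ^ 34) ^ 100 = t ^ 3400 := by rw [← pow_mul]
      _ ≤ 2 ^ t := pow_3400_le_two_pow ht
      _ ≤ b ^ t := Nat.pow_le_pow_left hb _
  have hfac : N.factorial ≤ (t ^ 34) ^ N :=
    (Nat.factorial_le_pow N).trans (Nat.pow_le_pow_left hNX _)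
  generalize t ^ 34 = X at *
  -- the power `100 t` makes the bounds for `X ^ 100` and `Z ^ t` applicable
  have h3 : b ^ (200 * t * E) ≤
      b ^ (100 * t * N * (2 * V + 3 + m) + 2 * t ^ 2 * N * (1 + K) + 1200 * m * N) := by
    calc b ^ (200 * t * E) = (b ^ (2 * E)) ^ (100 * t) := by rw [← pow_mul]; congr 1; ring
      _ ≤ ((b ^ (N * (V + 1))) ^ 2 * (2 * b ^ m) ^ N *
            (N.factorial * (X ^ K * Z) ^ N) ^ 2) ^ (100 * t) := Nat.pow_le_pow_left key _
      _ ≤ ((b ^ (N * (V + 1))) ^ 2 * (b * b ^ m) ^ N *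
            (X ^ N * (X ^ K * Z) ^ N) ^ 2) ^ (100 * t) := by gcongr
      _ = b ^ (100 * t * N * (2 * V + 3 + m)) * (X ^ 100) ^ (2 * t * N * (1 + K)) *
            (Z ^ t) ^ (200 * N) := by
          simp only [mul_pow, ← pow_mul]
          ring
      _ ≤ b ^ (100 * t * N * (2 * V + 3 + m)) * (b ^ t) ^ (2 * t * N * (1 + K)) *
            (b ^ (6 * m)) ^ (200 * N) := by gcongr
      _ = _ := by
          rw [← pow_mul, ← pow_mul, ← pow_add, ← pow_add]; congr 1; ring
  have h4 := (Nat.pow_le_pow_iff_right (by omega : 1 < b)).1 h3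
  have hV3 : t * V ≤ 3 * m := by
    have e1 : t * V ≤ t ^ 7 * S := by
      calc t * V ≤ t * (t * t * S) := by rw [hV]; gcongr
        _ = t ^ 3 * S := by ring
        _ ≤ t ^ 7 * S := Nat.mul_le_mul_right _ (hpow 3 7 (by norm_num))
    have := hpow 7 9 (by norm_num)
    omega
  have h5 : N * (75 * t * N) ≤ N * (300 * t + 200 * t * K +
      (100 * t * (2 * V + 3 + m) + 2 * t ^ 2 * (1 + K) + 1200 * m)) := by
    have e0 : 8 ≤ 8 * N := by omega
    have e1 : 25 * t * (3 * N ^ 2) ≤ 25 * t * (8 * E + 4 * N + 8 * (K * N) + 8 * N) :=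
      Nat.mul_le_mul_left _ (hE2.trans (Nat.add_le_add_left e0 _))
    calc N * (75 * t * N) = 25 * t * (3 * N ^ 2) := by ring
      _ ≤ _ := e1
      _ = 200 * t * E + (300 * t * N + 200 * t * K * N) := by ring
      _ ≤ _ := Nat.add_le_add_right h4 _
      _ = _ := by ring
  have h6 := Nat.le_of_mul_le_mul_left h5 hNpos
  have h7 : 75 * t * (2 * m) ≤ 75 * t * (N + t) := Nat.mul_le_mul_left _ hK2.le
  have h8 : 2 ^ 17 * m ≤ t * m := Nat.mul_le_mul_right _ ht
  have h9 : t * t ≤ m := by rw [← pow_two]; exact ht2m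
  have h10 : t * (t * K) ≤ t * (2 * m) := by
    rw [mul_comm t K]; exact Nat.mul_le_mul_left _ hK1
  have h11 : t * K ≤ 2 * m := by rw [mul_comm]; exact hK1
  clear_value V N K S E Z
  clear key h3 h4 h5 hE1 hE2 hKN hX100 hfac hZ1 hXm main
  linarith

/-! ### The bound for the index -/

namespace RepdigitData
variable {F : Type*} [Field F] {b a x n m T : ℕ} {β γ γ' : F}

/-- Some power `β ^ w` with `1 ≤ w ≤ b ^ 4` is congruent to `1` modulo `b²`: the powers of `β` lie
in `ℤ + ℤ β`, which has `b ^ 4` residue classes modulo `b²`, and `β` is a unit. -/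
theorem exists_period (D : RepdigitData F b a x n m T β γ γ') :
    ∃ (w : ℕ) (θ : F), 1 ≤ w ∧ w ≤ b ^ 4 ∧ IsIntegral ℤ θ ∧ β ^ w = 1 + (b : F) ^ 2 * θ := by
  have hlin : ∀ i : ℕ, ∃ p q : ℤ, β ^ i = (p : F) + (q : F) * β := by
    intro i
    induction i with
    | zero => exact ⟨1, 0, by simp⟩
    | succ i ih =>
      obtain ⟨p, q, h⟩ := ih
      refine ⟨-q, p + 2 * x * q, ?_⟩
      rw [pow_succ, h]
      push_cast
      linear_combination (q : F) * D.hβ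
  choose p q hpq using hlin
  have hb := D.hb
  have : NeZero (b ^ 2) := ⟨by positivity⟩
  obtain ⟨i, j, hij, hfij⟩ := Fintype.exists_ne_map_eq_of_card_lt
    (fun i : Fin (b ^ 4 + 1) =>
      (((p i : ℤ) : ZMod (b ^ 2)), ((q i : ℤ) : ZMod (b ^ 2)))) (by
      rw [Fintype.card_prod, ZMod.card, Fintype.card_fin, ← pow_add]; exact Nat.lt_succ_self _)
  wlog hlt : i < j generalizing i j
  · exact this j i hij.symm hfij.symm (lt_of_le_of_ne (not_lt.1 hlt) hij.symm)
  obtain ⟨h1, h2⟩ := Prod.mk.inj hfij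
  obtain ⟨c, hc⟩ := (ZMod.intCast_eq_intCast_iff_dvd_sub _ _ _).1 h1
  obtain ⟨c', hc'⟩ := (ZMod.intCast_eq_intCast_iff_dvd_sub _ _ _).1 h2
  have hc1 : (p j : F) - p i = (b : F) ^ 2 * c := by
    have := congrArg (Int.cast (R := F)) hc; push_cast at this; exact this
  have hc2 : (q j : F) - q i = (b : F) ^ 2 * c' := by
    have := congrArg (Int.cast (R := F)) hc'; push_cast at this; exact this
  have hβ' : IsIntegral ℤ (2 * (x : F) - β) := by
    have := ((isIntegral_nat (F := F) (2 * x))).sub D.isIntegral_β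
    push_cast at this
    exact this
  have hij' : (i : ℕ) < j := hlt
  refine ⟨j - i, ((c : F) + c' * β) * (2 * (x : F) - β) ^ (i : ℕ), by omega, by omega, ?_, ?_⟩
  · have hi : ∀ k : ℤ, IsIntegral ℤ (k : F) := fun k => by
      simpa using isIntegral_algebraMap (R := ℤ) (A := F) (x := k)
    exact ((hi c).add ((hi c').mul D.isIntegral_β)).mul (hβ'.pow _)
  · have h3 : β ^ (i : ℕ) * (2 * (x : F) - β) ^ (i : ℕ) = 1 := by
      rw [← mul_pow, D.β_mul, one_pow]
    have h4 : β ^ (j : ℕ) = β ^ (j - i : ℕ) * β ^ (i : ℕ) := by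
      rw [← pow_add, Nat.sub_add_cancel hij'.le]
    have h5 : β ^ (j : ℕ) - β ^ (i : ℕ) = (b : F) ^ 2 * ((c : F) + c' * β) := by
      rw [hpq j, hpq i]; linear_combination hc1 + β * hc2
    rw [h4] at h5
    linear_combination (2 * (x : F) - β) ^ (i : ℕ) * h5 + (1 - β ^ (j - i : ℕ)) * h3

/-- Bound for the index `n` in terms of `b` alone, given a bound for `x` exponential in `n`. -/
theorem index_lt [NumberField F] (D : RepdigitData F b a x n m T β γ γ')
    (hlow : x ^ n ≤ T) (hup : T ≤ (2 * x) ^ n) (hx : 3 * x ≤ b ^ (10 * n)) :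
    n < (2 ^ 17 * b ^ 4) ^ 10 := by
  by_contra hcon
  push Not at hcon
  set t₀ := 2 ^ 17 * b ^ 4 with ht₀
  have hb := D.hb
  have hb4 : 1 ≤ b ^ 4 := Nat.one_le_pow _ _ (by omega)
  -- `t` is the integer part of the tenth root of `n`
  set t := Nat.findGreatest (fun t => t ^ 10 ≤ n) n with ht
  have htn : t ^ 10 ≤ n := Nat.findGreatest_spec (P := fun t => t ^ 10 ≤ n) (m := 0)
    (Nat.zero_le _) (by simp)
  have hself : ∀ k : ℕ, k ≤ k ^ 10 := fun k => Nat.le_self_pow (by norm_num) k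
  have htt₀ : t₀ ≤ t := Nat.le_findGreatest ((hself _).trans hcon) hcon
  have hnt : n < (t + 1) ^ 10 := by
    by_contra h
    push Not at h
    have : t + 1 ≤ t := Nat.le_findGreatest ((hself _).trans h) h
    omega
  have ht17 : 2 ^ 17 ≤ t := le_trans (by omega) htt₀
  have hnt' : n ≤ t ^ 11 := by
    calc n ≤ (t + 1) ^ 10 := hnt.le
      _ ≤ (2 * t) ^ 10 := Nat.pow_le_pow_left (by omega) _
      _ = 2 ^ 10 * t ^ 10 := by rw [mul_pow]
      _ ≤ t * t ^ 10 := Nat.mul_le_mul_right _ (by omega)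
      _ = t ^ 11 := by ring
  have hbm : 1 ≤ b ^ m := Nat.one_le_pow _ _ (by omega)
  have hrep : (b - 1) * T = a * (b ^ m - 1) := by
    have h := D.hrep
    rw [← D.g_cast] at h
    have : ((b - 1) * T : ℕ) = ((a * (b ^ m - 1) : ℕ) : F) := by
      push_cast [Nat.cast_sub hbm]; exact h
    exact_mod_cast this
  have ha := D.ha
  have hab := D.hab
  have h1 : x ^ n ≤ b ^ m := by
    have : (b - 1) * T ≤ (b - 1) * (b ^ m - 1) := by
      rw [hrep]; exact Nat.mul_le_mul_right _ (by omega)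
    have := Nat.le_of_mul_le_mul_left this (by omega)
    omega
  have h2 : m ≤ 10 * n ^ 2 + 1 := by
    have e1 : b ^ m - 1 ≤ (b - 1) * T := by
      rw [hrep]; exact Nat.le_mul_of_pos_left _ (by omega)
    have e2 : T ≤ b ^ (10 * n ^ 2) := by
      calc T ≤ (2 * x) ^ n := hup
        _ ≤ (b ^ (10 * n)) ^ n := Nat.pow_le_pow_left (by omega) _
        _ = _ := by rw [← pow_mul]; congr 1; ring
    have e3 : 1 ≤ b ^ (10 * n ^ 2) := Nat.one_le_pow _ _ (by omega)
    have e4 : b ^ m ≤ b ^ (10 * n ^ 2 + 1) := by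
      rw [pow_succ]
      have e5 : (b - 1) * T ≤ (b - 1) * b ^ (10 * n ^ 2) := Nat.mul_le_mul_left _ e2
      have e6 : b ^ (10 * n ^ 2) * b = (b - 1) * b ^ (10 * n ^ 2) + b ^ (10 * n ^ 2) := by
        obtain ⟨c, rfl⟩ : ∃ c, b = c + 1 := ⟨b - 1, by omega⟩
        rw [Nat.add_sub_cancel]; ring
      omega
    exact (Nat.pow_le_pow_iff_right (by omega)).1 e4
  obtain ⟨w, θ, hw1, hw4, hθ, hw⟩ := D.exists_period
  refine param_contra hb D.hx (le_trans (by omega) htt₀) ht17 hw4 htn hnt' h1 h2 ?_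
  intro K L R₂ S E Xm g1 g2 g3 g4 g5
  have := D.main_ineq hw1 hθ hw g1 g2 g3 g4 g5
  exact_mod_cast this

end RepdigitData

/-- The coordinates of `(x + √D) ^ n`, where `D = x² - 1`, valid for every square root of `D` in
every commutative ring. -/
theorem exists_pell_coords {x D : ℕ} (hD : D + 1 = x ^ 2) (n : ℕ) :
    ∃ P Q : ℕ, P ^ 2 = D * Q ^ 2 + 1 ∧ x ^ n ≤ P ∧ P ≤ (2 * x) ^ n ∧
      ∀ (R : Type) [CommRing R] (s : R), s ^ 2 = (D : R) →
        ((x : R) + s) ^ n = (P : R) + (Q : R) * s := by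
  induction n with
  | zero => exact ⟨1, 0, by simp⟩
  | succ n ih =>
    obtain ⟨P, Q, h1, h2, h3, h4⟩ := ih
    refine ⟨x * P + D * Q, P + x * Q, ?_, ?_, ?_, ?_⟩
    · zify at *
      linear_combination (x ^ 2 - D : ℤ) * h1 - hD * (D * Q ^ 2 : ℤ) - hD + hD * D * Q ^ 2
    · calc x ^ (n + 1) = x * x ^ n := by ring
        _ ≤ x * P := Nat.mul_le_mul_left _ h2
        _ ≤ _ := Nat.le_add_right _ _
    · have h5 : D * Q ≤ x * P := by
        refine (Nat.pow_le_pow_iff_left (n := 2) (by norm_num)).1 ?_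
        calc (D * Q) ^ 2 = D * (D * Q ^ 2) := by ring
          _ ≤ x ^ 2 * P ^ 2 := Nat.mul_le_mul (by omega) (by omega)
          _ = _ := by ring
      calc x * P + D * Q ≤ 2 * x * P := by linarith
        _ ≤ 2 * x * (2 * x) ^ n := Nat.mul_le_mul_left _ h3
        _ = _ := by ring
    · intro R _ s hs
      rw [pow_succ, h4 R s hs]
      push_cast
      linear_combination (Q : R) * hs

/-- A number field containing square roots of two given integers. -/
theorem exists_numberField_sqrt (p q : ℤ) :
    ∃ (F : Type) (_ : Field F) (_ : NumberField F) (s s' : F),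
      s ^ 2 = (p : F) ∧ s' ^ 2 = (q : F) := by
  obtain ⟨s, hs⟩ := IsAlgClosed.exists_pow_nat_eq (p : ℂ) (n := 2) (by norm_num)
  obtain ⟨s', hs'⟩ := IsAlgClosed.exists_pow_nat_eq (q : ℂ) (n := 2) (by norm_num)
  have hintegral : ∀ (z : ℂ) (k : ℤ), z ^ 2 = (k : ℂ) → IsIntegral ℚ z := by
    intro z k h
    refine IsIntegral.tower_top (R := ℤ) (isIntegral_of_quadratic 0 (-k) ?_)
    push_cast
    linear_combination h
  let F := IntermediateField.adjoin ℚ ({s, s'} : Set ℂ)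
  have hfin : FiniteDimensional ℚ F := by
    refine IntermediateField.finiteDimensional_adjoin ?_
    rintro z (rfl | hz)
    · exact hintegral _ p hs
    · rw [Set.mem_singleton_iff] at hz
      exact hintegral _ q (hz ▸ hs')
  refine ⟨F, inferInstance, { to_finiteDimensional := hfin },
    ⟨s, IntermediateField.subset_adjoin _ _ (by simp)⟩,
    ⟨s', IntermediateField.subset_adjoin _ _ (by simp)⟩, ?_, ?_⟩
  · apply Subtype.ext; push_cast; exact hs
  · apply Subtype.ext; push_cast; exact hs'

/-- `RepdigitData.index_lt` applied to `β = x + √D` and `γ = (-a + √(a² - (b - 1)²)) / (b - 1)`. -/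
theorem index_bound {b a x n m P Q D : ℕ} (hb : 2 ≤ b) (ha : 1 ≤ a) (hab : a ≤ b - 1) (hx : 2 ≤ x)
    (hD : D + 1 = x ^ 2) (hPQ : P ^ 2 = D * Q ^ 2 + 1) (hlow : x ^ n ≤ P) (hup : P ≤ (2 * x) ^ n)
    (hpow : ∀ (R : Type) [CommRing R] (s : R), s ^ 2 = (D : R) →
        ((x : R) + s) ^ n = (P : R) + (Q : R) * s)
    (hrep : (b - 1) * P = a * (b ^ m - 1)) (h3x : 3 * x ≤ b ^ (10 * n)) :
    n < (2 ^ 17 * b ^ 4) ^ 10 := by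
  obtain ⟨F, _, _, s, s', hs, hs'⟩ :=
    exists_numberField_sqrt (D : ℤ) ((a : ℤ) ^ 2 - ((b : ℤ) - 1) ^ 2)
  push_cast at hs hs'
  have hg : (b : F) - 1 ≠ 0 := by
    have : ((b - 1 : ℕ) : F) ≠ 0 := Nat.cast_ne_zero.2 (by omega)
    rwa [Nat.cast_sub (by omega), Nat.cast_one] at this
  have hD' : (D : F) + 1 = (x : F) ^ 2 := by exact_mod_cast hD
  have data : RepdigitData F b a x n m P ((x : F) + s) ((-a + s') / ((b : F) - 1))
      ((-a - s') / ((b : F) - 1)) := by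
    refine ⟨hb, ha, by omega, hx, ?_, ?_, ?_, ?_, ?_⟩
    · linear_combination hs + hD'
    · field_simp
      linear_combination -hs'
    · field_simp
      ring
    · rw [mul_comm 2 n, pow_mul, hpow F s hs]
      have : (P : F) ^ 2 = D * (Q : F) ^ 2 + 1 := by exact_mod_cast hPQ
      linear_combination (Q : F) ^ 2 * hs - this
    · have hbm : 1 ≤ b ^ m := Nat.one_le_pow _ _ (by omega)
      have := congrArg (Nat.cast (R := F)) hrep
      push_cast [Nat.cast_sub hbm, Nat.cast_sub (by omega : 1 ≤ b)] at this
      exact this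
  exact data.index_lt hlow hup h3x

end

/-! ### The Archimedean comparison -/

/-- Two-sided bounds for the relative error `e` in `2 a b ^ m = g α ^ n (1 + e)`, where
`g = b - 1`. -/
theorem arch_eps {α g a : ℝ} {n : ℕ} (hα : 2 ≤ α) (hg : 1 ≤ g) (ha : 1 ≤ a) (hag : a ≤ g)
    {e : ℝ} (he : e = 2 * a / g * (α ^ n)⁻¹ + ((α ^ n)⁻¹) ^ 2) :
    2 / g * (α ^ n)⁻¹ ≤ e ∧ e ≤ 3 * (α ^ n)⁻¹ := by
  have h1 : (α ^ n)⁻¹ ≤ 1 := inv_le_one_of_one_le₀ (one_le_pow₀ (by linarith))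
  have h0 : 0 < (α ^ n)⁻¹ := by positivity
  constructor
  · rw [he]
    have : 2 / g * (α ^ n)⁻¹ ≤ 2 * a / g * (α ^ n)⁻¹ := by gcongr; linarith
    nlinarith
  · rw [he]
    have : 2 * a / g ≤ 2 := by rw [div_le_iff₀ (by linarith)]; linarith
    nlinarith

theorem mul_pow_le_two_mul_pow {a g b n₁ n₂ k l : ℕ} (hn : n₁ ≤ n₂) (hb : 1 ≤ b) (ha : a ≤ b)
    (hg : g ≤ b) (hkl : k + l = n₁ + n₂) : (2 * a) ^ k * g ^ l ≤ (2 * b) ^ (2 * n₂) := by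
  calc (2 * a) ^ k * g ^ l ≤ (2 * b) ^ k * (2 * b) ^ l := by
        gcongr; omega
    _ = (2 * b) ^ (n₁ + n₂) := by rw [← pow_add, hkl]
    _ ≤ _ := Nat.pow_le_pow_right (by omega) (by omega)

/-- The fundamental unit is at most exponential in the larger index `n₂`. Raising
`2 aᵢ b ^ mᵢ = (b - 1) α ^ nᵢ (1 + eᵢ)` to the powers `n₂` and `n₁` eliminates `α` and leaves an
equation `U (1 + e₂) ^ n₁ = V (1 + e₁) ^ n₂` with integers `U > V` and `V ≤ (2 b) ^ (2 n₂)`. Then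
`U ≥ V + 1`, while `(1 + e₁) ^ n₂ - 1 = O(n₂ / α)`; hence `α = O(n₂ V)`. -/
theorem archimedean_bound {α : ℝ} {b a₁ a₂ n₁ n₂ m₁ m₂ : ℕ} (hα : 2 ≤ α) (hb : 2 ≤ b)
    (ha₁ : 1 ≤ a₁) (ha₁b : a₁ ≤ b - 1) (ha₂ : 1 ≤ a₂) (ha₂b : a₂ ≤ b - 1) (hn₁ : 1 ≤ n₁)
    (hn : n₁ < n₂)
    (h₁ : ((b : ℝ) - 1) * (α ^ n₁ + (α ^ n₁)⁻¹) = 2 * a₁ * ((b : ℝ) ^ m₁ - 1))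
    (h₂ : ((b : ℝ) - 1) * (α ^ n₂ + (α ^ n₂)⁻¹) = 2 * a₂ * ((b : ℝ) ^ m₂ - 1)) :
    3 * α ≤ (b : ℝ) ^ (10 * n₂) := by
  have hb' : (2 : ℝ) ≤ b := by exact_mod_cast hb
  have hgc : ((b - 1 : ℕ) : ℝ) = (b : ℝ) - 1 := by
    rw [Nat.cast_sub (by omega), Nat.cast_one]
  have hn2 : 2 ≤ n₂ := by omega
  have hgrow : (18 : ℝ) * n₂ ≤ (b : ℝ) ^ (6 * n₂) := by
    have h : ∀ k : ℕ, 1 ≤ k → 18 * k ≤ 2 ^ (6 * k) := by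
      intro k hk
      induction k, hk using Nat.le_induction with
      | base => norm_num
      | succ k hk ih =>
        have : 2 ^ (6 * (k + 1)) = 64 * 2 ^ (6 * k) := by rw [mul_add, pow_add]; norm_num; ring
        omega
    calc (18 : ℝ) * n₂ ≤ 2 ^ (6 * n₂) := by exact_mod_cast h n₂ (by omega)
      _ ≤ _ := by gcongr
  have h610 : (b : ℝ) ^ (6 * n₂) ≤ (b : ℝ) ^ (10 * n₂) :=
    pow_le_pow_right₀ (by linarith) (by omega)
  -- small values of `α`, for which the asymptotic comparison of `e₁` and `e₂` may fail
  by_cases hc1 : α < 3 * ((b : ℝ) - 1) / 2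
  · have : (b : ℝ) ^ 4 ≤ (b : ℝ) ^ (10 * n₂) := pow_le_pow_right₀ (by linarith) (by omega)
    have h4 : (8 : ℝ) * b ≤ b ^ 4 := by
      calc (8 : ℝ) * b = 2 ^ 3 * b := by norm_num
        _ ≤ (b : ℝ) ^ 3 * b := by gcongr
        _ = _ := by ring
    linarith
  by_cases hc2 : α < 3 * n₂
  · linarith
  push Not at hc1 hc2
  set g : ℝ := (b : ℝ) - 1 with hg
  have hg1 : 1 ≤ g := by linarith
  have ha₁' : (1 : ℝ) ≤ a₁ := by exact_mod_cast ha₁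
  have ha₂' : (1 : ℝ) ≤ a₂ := by exact_mod_cast ha₂
  have hag₁ : (a₁ : ℝ) ≤ g := by rw [← hgc]; exact_mod_cast ha₁b
  have hag₂ : (a₂ : ℝ) ≤ g := by rw [← hgc]; exact_mod_cast ha₂b
  obtain ⟨e₁, he₁⟩ : ∃ e, e = 2 * a₁ / g * (α ^ n₁)⁻¹ + ((α ^ n₁)⁻¹) ^ 2 := ⟨_, rfl⟩
  obtain ⟨e₂, he₂⟩ : ∃ e, e = 2 * a₂ / g * (α ^ n₂)⁻¹ + ((α ^ n₂)⁻¹) ^ 2 := ⟨_, rfl⟩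
  have b₁ := arch_eps hα hg1 ha₁' hag₁ he₁
  have b₂ := arch_eps hα hg1 ha₂' hag₂ he₂
  have q₁ : 2 * a₁ * (b : ℝ) ^ m₁ = g * α ^ n₁ * (1 + e₁) := by
    rw [he₁]; field_simp; field_simp at h₁; linarith
  have q₂ : 2 * a₂ * (b : ℝ) ^ m₂ = g * α ^ n₂ * (1 + e₂) := by
    rw [he₂]; field_simp; field_simp at h₂; linarith
  have hα0 : 0 < α := by linarith
  have he₂0 : 0 ≤ e₂ := le_trans (by positivity) b₂.1
  have he₁0 : 0 < e₁ := lt_of_lt_of_le (by positivity) b₁.1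
  have he₂₁ : e₂ ≤ e₁ := by
    have e0 : α ^ n₁ * α ≤ α ^ n₂ := by
      rw [← pow_succ]; exact pow_le_pow_right₀ (by linarith) hn
    have e1 : (α ^ n₂)⁻¹ ≤ (α ^ n₁)⁻¹ * α⁻¹ := by
      rw [← mul_inv]; gcongr
    have e2 : 3 * α⁻¹ ≤ 2 / g := by
      rw [← div_eq_mul_inv, div_le_div_iff₀ hα0 (by linarith)]; linarith
    have e3 : 0 < (α ^ n₁)⁻¹ := by positivity
    calc e₂ ≤ 3 * (α ^ n₂)⁻¹ := b₂.2
      _ ≤ 3 * ((α ^ n₁)⁻¹ * α⁻¹) := by gcongr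
      _ = 3 * α⁻¹ * (α ^ n₁)⁻¹ := by ring
      _ ≤ 2 / g * (α ^ n₁)⁻¹ := by gcongr
      _ ≤ e₁ := b₁.1
  have hF : (1 + e₂) ^ n₁ < (1 + e₁) ^ n₂ :=
    calc (1 + e₂) ^ n₁ ≤ (1 + e₁) ^ n₁ := by gcongr
      _ < _ := pow_lt_pow_right₀ (by linarith) hn
  have hF1 : 1 ≤ (1 + e₂) ^ n₁ := one_le_pow₀ (by linarith)
  have hcross : ((2 * a₁) ^ n₂ * (b - 1) ^ n₁ : ℕ) * (b : ℝ) ^ (m₁ * n₂) * (1 + e₂) ^ n₁ =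
      ((2 * a₂) ^ n₁ * (b - 1) ^ n₂ : ℕ) * (b : ℝ) ^ (m₂ * n₁) * (1 + e₁) ^ n₂ := by
    push_cast [hgc]
    calc (2 * (a₁ : ℝ)) ^ n₂ * g ^ n₁ * (b : ℝ) ^ (m₁ * n₂) * (1 + e₂) ^ n₁
        = (2 * a₁ * (b : ℝ) ^ m₁) ^ n₂ * g ^ n₁ * (1 + e₂) ^ n₁ := by
          rw [mul_pow _ (_ ^ m₁), ← pow_mul]; ring
      _ = (2 * a₂ * (b : ℝ) ^ m₂) ^ n₁ * g ^ n₂ * (1 + e₁) ^ n₂ := by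
          rw [q₁, q₂, mul_pow, mul_pow, mul_pow, mul_pow, ← pow_mul, ← pow_mul, mul_comm n₂ n₁]
          ring
      _ = _ := by rw [mul_pow _ (_ ^ m₂), ← pow_mul]; ring
  set A := (2 * a₁) ^ n₂ * (b - 1) ^ n₁ with hA
  set B := (2 * a₂) ^ n₁ * (b - 1) ^ n₂ with hB
  have hAle : A ≤ (2 * b) ^ (2 * n₂) :=
    mul_pow_le_two_mul_pow hn.le (by omega) (by omega) (by omega) (by omega)
  have hBle : B ≤ (2 * b) ^ (2 * n₂) :=
    mul_pow_le_two_mul_pow hn.le (by omega) (by omega) (by omega) (by omega)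
  have hApos : 0 < A := by
    have : 0 < b - 1 := by omega
    positivity
  -- cancel the common power of `b`
  obtain ⟨U, V, hU, hUV, hmin⟩ : ∃ U V : ℕ, 0 < U ∧
      (U : ℝ) * (1 + e₂) ^ n₁ = V * (1 + e₁) ^ n₂ ∧
      (V ≤ (2 * b) ^ (2 * n₂) ∨ U ≤ (2 * b) ^ (2 * n₂)) := by
    have hb0 : (b : ℝ) ≠ 0 := by positivity
    rcases le_total (m₂ * n₁) (m₁ * n₂) with h | h
    · refine ⟨A * b ^ (m₁ * n₂ - m₂ * n₁), B, by positivity, ?_, Or.inl hBle⟩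
      apply mul_left_cancel₀ (pow_ne_zero (m₂ * n₁) hb0)
      obtain ⟨k, hk⟩ := Nat.exists_eq_add_of_le h
      rw [hk] at hcross ⊢
      rw [Nat.add_sub_cancel_left]
      rw [pow_add] at hcross
      push_cast at hcross ⊢
      linear_combination hcross
    · refine ⟨A, B * b ^ (m₂ * n₁ - m₁ * n₂), hApos, ?_, Or.inr hAle⟩
      apply mul_left_cancel₀ (pow_ne_zero (m₁ * n₂) hb0)
      obtain ⟨k, hk⟩ := Nat.exists_eq_add_of_le h
      rw [hk] at hcross ⊢
      rw [Nat.add_sub_cancel_left]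
      rw [pow_add] at hcross
      push_cast at hcross ⊢
      linear_combination hcross
  have hVU : V < U := by
    have hU' : (0 : ℝ) < U := by exact_mod_cast hU
    have : (V : ℝ) < U := by
      by_contra hc
      push Not at hc
      have : (U : ℝ) * (1 + e₂) ^ n₁ < V * (1 + e₁) ^ n₂ := by
        calc (U : ℝ) * (1 + e₂) ^ n₁ < U * (1 + e₁) ^ n₂ := by gcongr
          _ ≤ _ := by gcongr
      linarith
    exact_mod_cast this
  have hV : V ≤ (2 * b) ^ (2 * n₂) := by omega
  have hsmall : (1 + e₁) ^ n₂ ≤ 1 + 6 * n₂ / α := by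
    have f1 : e₁ ≤ 3 / α := by
      calc e₁ ≤ 3 * (α ^ n₁)⁻¹ := b₁.2
        _ ≤ 3 * α⁻¹ := by
          gcongr
          exact le_self_pow₀ (by linarith) (by omega)
        _ = _ := by rw [div_eq_mul_inv]
    have f2 : n₂ * e₁ ≤ 3 * n₂ / α := by
      calc n₂ * e₁ ≤ n₂ * (3 / α) := by gcongr
        _ = _ := by ring
    have f3 : 3 * n₂ / α ≤ 1 := by rw [div_le_one hα0]; exact hc2
    have f0 : 0 ≤ n₂ * e₁ := by positivity
    have f4 := Real.abs_exp_sub_one_le (x := n₂ * e₁) (by rw [abs_of_nonneg f0]; linarith)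
    rw [abs_of_nonneg f0] at f4
    have f5 := (le_abs_self _).trans f4
    calc (1 + e₁) ^ n₂ ≤ (Real.exp e₁) ^ n₂ := by
          gcongr; linarith [Real.add_one_le_exp e₁]
      _ = Real.exp (n₂ * e₁) := by rw [← Real.exp_nat_mul]
      _ ≤ 1 + 2 * (n₂ * e₁) := by linarith
      _ ≤ 1 + 2 * (3 * n₂ / α) := by gcongr
      _ = _ := by ring
  have hfin : α ≤ 6 * n₂ * V := by
    have k1 : (V : ℝ) + 1 ≤ V * (1 + 6 * n₂ / α) := by
      calc (V : ℝ) + 1 ≤ U := by exact_mod_cast hVU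
        _ ≤ U * (1 + e₂) ^ n₁ := le_mul_of_one_le_right (by positivity) hF1
        _ = _ := hUV
        _ ≤ _ := by gcongr
    have k2 : 1 ≤ V * (6 * n₂ / α) := by linarith
    have k3 : V * (6 * n₂ / α) = (6 * n₂ * V) / α := by ring
    rw [k3, le_div_iff₀ hα0] at k2
    linarith
  have hVb : (V : ℝ) ≤ (b : ℝ) ^ (4 * n₂) := by
    calc (V : ℝ) ≤ (2 * b) ^ (2 * n₂) := by exact_mod_cast hV
      _ ≤ (b * b : ℝ) ^ (2 * n₂) := by gcongr
      _ = _ := by rw [← pow_two, ← pow_mul]; congr 1; ring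
  calc 3 * α ≤ 18 * n₂ * V := by linarith
    _ ≤ (b : ℝ) ^ (6 * n₂) * (b : ℝ) ^ (4 * n₂) := by gcongr
    _ = _ := by rw [← pow_add]; congr 1; ring

/-! ### Conclusion -/

/-- The bound with the two indices in increasing order: `archimedean_bound` gives
`x ≤ b ^ (10 n₂)`, `index_bound` gives `n₂ < (2 ^ 17 b ^ 4) ^ 10`, and `d < x²`. -/
theorem bound_of_lt {b d : ℕ} (hb : 2 ≤ b) (X Y : ℕ → ℕ) (hd : 2 ≤ d) (hdsf : Squarefree d)
    (hY1 : 0 < Y 1) (hpell : (X 1 : ℤ) ^ 2 - (d : ℤ) * (Y 1 : ℤ) ^ 2 = 1)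
    (hXY : ∀ n : ℕ, 1 ≤ n →
      (X n : ℝ) + (Y n : ℝ) * Real.sqrt d =
        ((X 1 : ℝ) + (Y 1 : ℝ) * Real.sqrt d) ^ n)
    {n₁ a₁ m₁ n₂ a₂ m₂ : ℕ} (hn₁ : 0 < n₁) (hlt : n₁ < n₂)
    (ha₁ : 1 ≤ a₁ ∧ a₁ ≤ b - 1) (ha₂ : 1 ≤ a₂ ∧ a₂ ≤ b - 1)
    (hrep₁ : (b - 1) * X n₁ = a₁ * (b ^ m₁ - 1))
    (hrep₂ : (b - 1) * X n₂ = a₂ * (b ^ m₂ - 1)) :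
    (d : ℝ) ≤ Real.exp ((10 * b : ℝ) ^ (10 ^ 5)) := by
  have hirr : Irrational (Real.sqrt d) := by
    rw [irrational_sqrt_natCast_iff]
    rintro ⟨k, rfl⟩
    have := Nat.isUnit_iff.1 (hdsf k dvd_rfl)
    subst this
    omega
  set x := X 1 with hx
  set y := Y 1 with hy
  set D := d * y ^ 2 with hDdef
  have hD : D + 1 = x ^ 2 := by zify; rw [hDdef]; push_cast; linarith
  have hdD : d ≤ D := Nat.le_mul_of_pos_right _ (by positivity)
  have hx2 : 2 ≤ x := by
    by_contra h
    have : x ^ 2 ≤ 1 ^ 2 := Nat.pow_le_pow_left (by omega) 2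
    omega
  set s : ℝ := y * Real.sqrt d with hs
  have hs2 : s ^ 2 = (D : ℝ) := by
    rw [hs, mul_pow, Real.sq_sqrt (Nat.cast_nonneg _), hDdef]; push_cast; ring
  have hs0 : 0 ≤ s := by positivity
  set α : ℝ := x + s with hα
  have hx2' : (2 : ℝ) ≤ x := by exact_mod_cast hx2
  have hα2 : 2 ≤ α := by linarith
  have hD' : (D : ℝ) + 1 = (x : ℝ) ^ 2 := by exact_mod_cast hD
  have hαinv : α⁻¹ = x - s := by
    refine inv_eq_of_mul_eq_one_right ?_
    rw [hα]; linear_combination -hD' - hs2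
  -- the integral coordinates of `αⁿ` are the given ones, since `√d` is irrational
  have hcoord : ∀ n : ℕ, 1 ≤ n → ∃ Q : ℕ, X n ^ 2 = D * Q ^ 2 + 1 ∧ x ^ n ≤ X n ∧
      X n ≤ (2 * x) ^ n ∧ ∀ (R : Type) [CommRing R] (s : R), s ^ 2 = (D : R) →
        ((x : R) + s) ^ n = (X n : R) + (Q : R) * s := by
    intro n hn
    obtain ⟨P, Q, h1, h2, h3, h4⟩ := exists_pell_coords hD n
    have h5 := h4 ℝ s hs2
    have h6 := hXY n hn
    rw [hα, h5] at h6
    have h7 : ((Y n : ℤ) - (Q * y : ℕ) : ℤ) = 0 := by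
      by_contra hne
      have h8 := hirr.intCast_mul hne
      refine h8.ne_int ((P : ℤ) - X n) ?_
      push_cast
      rw [hs] at h6
      linear_combination h6
    have h9 : X n = P := by
      have h10 : (Y n : ℝ) = Q * y := by
        have : (Y n : ℤ) = (Q * y : ℕ) := by omega
        exact_mod_cast this
      rw [h10, hs] at h6
      have : (X n : ℝ) = P := by linear_combination h6
      exact_mod_cast this
    rw [h9]
    exact ⟨Q, h1, h2, h3, h4⟩
  have hreal : ∀ n a m : ℕ, 1 ≤ n → (b - 1) * X n = a * (b ^ m - 1) →
      ((b : ℝ) - 1) * (α ^ n + (α ^ n)⁻¹) = 2 * a * ((b : ℝ) ^ m - 1) := by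
    intro n a m hn h
    obtain ⟨Q, h1, h2, h3, h4⟩ := hcoord n hn
    have h5 := h4 ℝ s hs2
    have h6 := h4 ℝ (-s) (by rw [neg_sq]; exact hs2)
    have hbm : 1 ≤ b ^ m := Nat.one_le_pow _ _ (by omega)
    have h7 := congrArg (Nat.cast (R := ℝ)) h
    push_cast [Nat.cast_sub hbm, Nat.cast_sub (by omega : 1 ≤ b)] at h7
    rw [← inv_pow, hαinv, hα, h5, sub_eq_add_neg (x : ℝ) s, h6]
    linear_combination 2 * h7
  have harch := archimedean_bound hα2 hb ha₁.1 ha₁.2 ha₂.1 ha₂.2 hn₁ hlt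
    (hreal n₁ a₁ m₁ hn₁ hrep₁) (hreal n₂ a₂ m₂ (by omega) hrep₂)
  have h3x : 3 * x ≤ b ^ (10 * n₂) := by
    have : (3 : ℝ) * x ≤ (b : ℝ) ^ (10 * n₂) := by linarith
    exact_mod_cast this
  obtain ⟨Q, h1, h2, h3, h4⟩ := hcoord n₂ (by omega)
  have hn₂ := index_bound hb ha₂.1 ha₂.2 hx2 hD h1 h2 h3 h4 hrep₂ h3x
  have hb1 : (2 : ℝ) ≤ b := by exact_mod_cast hb
  have hn₂' : (n₂ : ℝ) ≤ (10 * b : ℝ) ^ 60 := by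
    calc (n₂ : ℝ) ≤ (2 ^ 17 * (b : ℝ) ^ 4) ^ 10 := by exact_mod_cast hn₂.le
      _ ≤ ((10 * b : ℝ) ^ 6) ^ 10 := by
        gcongr
        rw [mul_pow]
        gcongr
        · norm_num
        · linarith
        · norm_num
      _ = _ := by rw [← pow_mul]
  calc (d : ℝ) ≤ (x : ℝ) ^ 2 := by exact_mod_cast (by omega : d ≤ x ^ 2)
    _ ≤ ((b : ℝ) ^ (10 * n₂)) ^ 2 := by
      gcongr
      exact_mod_cast (by omega : x ≤ b ^ (10 * n₂))
    _ ≤ ((Real.exp b) ^ (10 * n₂)) ^ 2 := by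
      gcongr
      linarith [Real.add_one_le_exp (b : ℝ)]
    _ = Real.exp (20 * b * n₂) := by
      rw [← pow_mul, ← Real.exp_nat_mul]; congr 1; push_cast; ring
    _ ≤ Real.exp ((10 * b : ℝ) ^ (10 ^ 5)) := by
      apply Real.exp_le_exp.2
      calc (20 * b * n₂ : ℝ) ≤ (10 * b) ^ 2 * (10 * b) ^ 60 := by
            gcongr
            nlinarith
        _ = (10 * b : ℝ) ^ 62 := by rw [← pow_add]
        _ ≤ _ := pow_le_pow_right₀ (by linarith) (by norm_num)

/-- Let `b ≥ 2` and let `d ≥ 2` be squarefree (in particular not a perfect square).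
`(X 1, Y 1)` is the fundamental solution of the Pell equation `X² - dY² = 1`, and
`(X n, Y n)` is the `n`-th solution, determined by `Xₙ + Yₙ√d = (X₁ + Y₁√d)ⁿ`.
If there are two triples `(n₁, a₁, m₁) ≠ (n₂, a₂, m₂)` (with `n₁ ≠ n₂`) of positive
integers with `a₁, a₂ ∈ {1, …, b-1}` such that `X_{nᵢ} = aᵢ (b^{mᵢ} - 1)/(b - 1)`,
then `d ≤ exp ((10 b)^(10⁵))`. -/
theorem repdigit_X_coordinates_bound
    (b : ℕ) (hb : 2 ≤ b)
    (d : ℕ) (hd : 2 ≤ d) (hdsf : Squarefree d)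
    (X Y : ℕ → ℕ)
    (hX1 : 0 < X 1) (hY1 : 0 < Y 1)
    (hpell : (X 1 : ℤ) ^ 2 - (d : ℤ) * (Y 1 : ℤ) ^ 2 = 1)
    (hfund : ∀ x y : ℕ, 0 < x → 0 < y →
      (x : ℤ) ^ 2 - (d : ℤ) * (y : ℤ) ^ 2 = 1 → X 1 ≤ x)
    (hXY : ∀ n : ℕ, 1 ≤ n →
      (X n : ℝ) + (Y n : ℝ) * Real.sqrt d =
        ((X 1 : ℝ) + (Y 1 : ℝ) * Real.sqrt d) ^ n)
    (n₁ a₁ m₁ n₂ a₂ m₂ : ℕ)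
    (hn₁ : 0 < n₁) (hn₂ : 0 < n₂) (hne : n₁ ≠ n₂)
    (ha₁ : 1 ≤ a₁ ∧ a₁ ≤ b - 1) (ha₂ : 1 ≤ a₂ ∧ a₂ ≤ b - 1)
    (hm₁ : 1 ≤ m₁) (hm₂ : 1 ≤ m₂)
    (hrep₁ : (b - 1) * X n₁ = a₁ * (b ^ m₁ - 1))
    (hrep₂ : (b - 1) * X n₂ = a₂ * (b ^ m₂ - 1)) :
    (d : ℝ) ≤ Real.exp ((10 * b : ℝ) ^ (10 ^ 5)) := by
  rcases lt_or_gt_of_ne hne with h | h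
  · exact bound_of_lt hb X Y hd hdsf hY1 hpell hXY hn₁ h ha₁ ha₂ hrep₁ hrep₂
  · exact bound_of_lt hb X Y hd hdsf hY1 hpell hXY hn₂ h ha₂ ha₁ hrep₂ hrep₁
end

section
/- Suppose n is even and Xₙ = a(b^m − 1)/(b − 1) for some integers a, m with 1 ≤ a ≤ b − 2 and m ≥ 1. Then d < exp((10b)^{10⁵}). -/
/-!
The doubling formula gives `X_{2k} = 2 X_k² - 1`, and `d < X_k²`. With `x = X_k` and
`c = b - 1 - a ≥ 1` the hypothesis becomes `2 (b - 1) x² = a b^m + c`, so it is enough to bound `m`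
in terms of `b`. Writing `m = 2 j + r` with `r ≤ 1`, this has the shape
`U² = D b^(2j) + N₀` with `1 ≤ N₀ ≤ 2 b²` and `2 ≤ D ≤ 2 b³`. If `D` is a square, two squares differ
by `N₀` and `j < 2`. The main case, `exponent_bound`, is that of a nonsquare `D`, where
`j < (10 b)^1000` is shown by an interpolation determinant.

Let `ε = u + b v √D` be a unit of norm one, of size bounded in terms of `b` (`pell_unit`, from a
pigeonhole bound for solutions of Pell's equation), and `η = ε²`, so that `η ≡ 1` modulo `b`. The
element `θ = U + b^j √D` has norm `N₀` and is congruent to its conjugate modulo `b^j`. Dividing by a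
power of `ε`, `θ = γ ε^n` with `γ` and its conjugate of bounded size, and `γ η^n ≡ star γ` modulo
`b^j`. This is a very good `b`-adic approximation between `n`-th powers and bounded quantities,
with `n` of order at least `j` up to a factor depending on `b`. Consider the matrix with entries
`x^k y^l`, `k < K`, `l < L`, where `x = r + n s` and `y = η^r (star γ)^s γ^(Q-s) ≡ γ^Q η^x`.

* It has a nonzero maximal minor, by `zero_estimate` and `exists_minor`.
* Any such minor is divisible by a high power of `b`, since `x^k η^(lx)` has a Newton expansion in
  binomial coefficients with `b`-adically decaying coefficients (`binom_expand`, `det_dvd`).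
* The size of the entries in both real embeddings bounds the norm of the minor from above.

The resulting inequality (`det_bound`) fails for `L = t`, `Q = 160 h t`, `K = 25600 h² t` with
`h = (10 b)^16` and `t` the integer part of `j^(1/8)`, as soon as `t ≥ h^7` (`param_contra`).
-/

/-! ### A bounded solution of Pell's equation -/

/-- A Dirichlet approximation `p / q` of `√D` with denominator at most `(4D)^i`. Its norm
`p² - D q²` takes boundedly many values, and the lower bound on its error, which comes from that
norm being nonzero, separates approximations with different `i`. -/
lemma pell_approx (D : ℕ) (hD : 2 ≤ D) (hns : ¬ IsSquare D) (i : ℕ) :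
    ∃ p q : ℤ, 0 < q ∧ q ≤ (4 * D : ℤ) ^ i ∧ |p| ≤ (4 * D : ℤ) ^ (i + 1) ∧
      p ^ 2 - D * q ^ 2 ≠ 0 ∧ |p ^ 2 - D * q ^ 2| ≤ 2 * D + 1 ∧
      |q * √(D : ℝ) - p| * ((4 * D : ℝ) ^ i + 1) ≤ 1 ∧
      1 < |q * √(D : ℝ) - p| * ((4 * D : ℝ) ^ (i + 1) + 1) := by
  have hD' : (2 : ℝ) ≤ D := by exact_mod_cast hD
  set ξ : ℝ := √(D : ℝ) with hξ
  have hξ0 : 0 ≤ ξ := Real.sqrt_nonneg _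
  have hξ2 : ξ ^ 2 = D := Real.sq_sqrt (by positivity)
  have hξD : ξ ≤ D := by nlinarith
  have hirr : Irrational ξ := irrational_sqrt_natCast_iff.2 hns
  obtain ⟨p, q, hq, hqn, h⟩ := Real.exists_int_int_abs_mul_sub_le ξ
    (n := (4 * D) ^ i) (by positivity)
  push_cast at h hqn
  set Q : ℝ := (4 * D : ℝ) ^ i with hQ
  have hQ1 : 1 ≤ Q := one_le_pow₀ (by linarith)
  have hqQ : (q : ℝ) ≤ Q := by rw [hQ]; exact_mod_cast hqn
  have hq0 : (1 : ℝ) ≤ q := by exact_mod_cast hq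
  set e : ℝ := q * ξ - p with he
  have hme : ((p ^ 2 - D * q ^ 2 : ℤ) : ℝ) = - e * (2 * q * ξ - e) := by
    push_cast; rw [← hξ2, he]; ring
  have hm0 : p ^ 2 - D * q ^ 2 ≠ 0 := by
    intro h0
    have h1 : (p : ℝ) ^ 2 = (q * ξ) ^ 2 := by
      rw [mul_pow, hξ2]
      have : ((p ^ 2 - D * q ^ 2 : ℤ) : ℝ) = 0 := by rw [h0]; simp
      push_cast at this; linarith
    have hq' : q ≠ 0 := hq.ne'
    have h2 := (hirr.intCast_mul hq')
    rcases sq_eq_sq_iff_eq_or_eq_neg.1 h1 with h3 | h3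
    · exact h2.ne_int p h3.symm
    · exact h2.ne_int (-p) (by push_cast; linarith)
  have hm1 : (1 : ℝ) ≤ |((p ^ 2 - D * q ^ 2 : ℤ) : ℝ)| := by
    rw [← Int.cast_abs]; exact_mod_cast Int.one_le_abs hm0
  have heQ : |e| * (Q + 1) ≤ 1 := by
    rw [le_div_iff₀ (by positivity)] at h; exact h
  have he0 : 0 ≤ |e| := abs_nonneg _
  have he1 : |e| ≤ 1 := by nlinarith
  have hfac : |2 * q * ξ - e| ≤ 2 * Q * D + 1 := by
    calc |2 * q * ξ - e| ≤ |2 * q * ξ| + |e| := abs_sub _ _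
      _ ≤ 2 * Q * D + 1 := by
        rw [abs_of_nonneg (by positivity)]
        have : q * ξ ≤ Q * D := by gcongr
        linarith
  have hmabs : |((p ^ 2 - D * q ^ 2 : ℤ) : ℝ)| ≤ |e| * (2 * Q * D + 1) := by
    rw [hme, abs_mul, abs_neg]; gcongr
  refine ⟨p, q, hq, hqn, ?_, hm0, ?_, heQ, ?_⟩
  · have : |(p : ℝ)| ≤ (4 * D : ℝ) ^ (i + 1) := by
      have h1 : (p : ℝ) = q * ξ - e := by rw [he]; ring
      have h2 : q * ξ ≤ Q * D := by gcongr
      rw [h1, pow_succ, ← hQ]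
      calc |q * ξ - e| ≤ |q * ξ| + |e| := abs_sub _ _
        _ ≤ Q * D + 1 := by
          rw [abs_of_nonneg (by positivity)]; linarith
        _ ≤ _ := by nlinarith
    exact_mod_cast this
  · have : |((p ^ 2 - D * q ^ 2 : ℤ) : ℝ)| ≤ 2 * D + 1 := by
      refine hmabs.trans ?_
      calc |e| * (2 * Q * D + 1) ≤ |e| * ((Q + 1) * (2 * D + 1)) := by
            gcongr; nlinarith
        _ = |e| * (Q + 1) * (2 * D + 1) := by ring
        _ ≤ 1 * (2 * D + 1) := by gcongr
        _ = _ := by ring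
    rw [← Int.cast_abs] at this
    exact_mod_cast this
  · rw [pow_succ, ← hQ]
    have hepos : 0 < |e| := by
      rcases he0.lt_or_eq with h1 | h1
      · exact h1
      · rw [← h1] at hmabs; linarith
    calc 1 ≤ |e| * (2 * Q * D + 1) := hm1.trans hmabs
      _ < |e| * (Q * (4 * D) + 1) := by
        gcongr ?_ * ?_
        nlinarith

/-- A quantitative form of the solvability of Pell's equation: among `(4D+3)(2D+1)² + 1` Dirichlet
approximations, two share their norm `M` and their residues modulo `M`, and the quotient of the
two corresponding elements of `ℤ[√D]` is a unit. -/
lemma pell_bound (D : ℕ) (hD : 2 ≤ D) (hns : ¬ IsSquare D) :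
    ∃ u v : ℕ, 0 < v ∧ u ^ 2 = D * v ^ 2 + 1 ∧
      u ≤ (4 * D) ^ (2 * ((4 * D + 3) * (2 * D + 1) ^ 2) + 3) := by
  choose p q hq hqn hp hm0 hm heQ heL using pell_approx D hD hns
  set I : ℕ := (4 * D + 3) * (2 * D + 1) ^ 2 with hI
  set N : ℕ → ℤ := fun i => p i ^ 2 - D * q i ^ 2 with hN
  -- errors strictly decrease, so the approximations are pairwise distinct
  have hdistinct : ∀ i j, i < j → ¬ (p i = p j ∧ q i = q j) := by
    rintro i j hij ⟨h1, h2⟩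
    have h3 := heL i
    have h4 := heQ j
    rw [h1, h2] at h3
    have h5 : (4 * D : ℝ) ^ (i + 1) ≤ (4 * D : ℝ) ^ j :=
      pow_le_pow_right₀ (by have : (2 : ℝ) ≤ D := by exact_mod_cast hD
                            linarith) hij
    have h6 : |(q j : ℝ) * √(D : ℝ) - p j| * ((4 * D : ℝ) ^ (i + 1) + 1) ≤
      |(q j : ℝ) * √(D : ℝ) - p j| * ((4 * D : ℝ) ^ j + 1) := by gcongr
    linarith
  obtain ⟨i, hi, j, hj, hij, hc⟩ : ∃ i ∈ Finset.range (I + 1), ∃ j ∈ Finset.range (I + 1), i ≠ j ∧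
      (N i, p i % N i, q i % N i) = (N j, p j % N j, q j % N j) := by
    apply Finset.exists_ne_map_eq_of_card_lt_of_maps_to
      (t := Finset.Icc (-(2 * D + 1 : ℤ)) (2 * D + 1) ×ˢ
        Finset.Ico (0 : ℤ) (2 * D + 1) ×ˢ Finset.Ico (0 : ℤ) (2 * D + 1))
    · simp only [Finset.card_product, Int.card_Icc, Int.card_Ico, Finset.card_range]
      have e1 : ((2 * D + 1 : ℤ) + 1 - -(2 * D + 1)).toNat = 4 * D + 3 := by omega
      have e2 : ((2 * D + 1 : ℤ) - 0).toNat = 2 * D + 1 := by omega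
      rw [e1, e2, hI]
      nlinarith
    · intro i _
      have h1 := hm i
      have h2 := hm0 i
      have h3 := Int.emod_nonneg (p i) h2
      have h4 := Int.emod_lt_abs (p i) h2
      have h5 := Int.emod_nonneg (q i) h2
      have h6 := Int.emod_lt_abs (q i) h2
      have h7 := abs_le.1 h1
      simp only [Finset.coe_product, Set.mem_prod, Finset.mem_coe, Finset.mem_Icc, Finset.mem_Ico,
        hN]
      exact ⟨⟨h7.1, h7.2⟩, ⟨h3, by omega⟩, ⟨h5, by omega⟩⟩
  wlog hlt : i < j generalizing i j
  · exact this j hj i hi hij.symm hc.symm (by omega)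
  simp only [Prod.mk.injEq] at hc
  obtain ⟨hcN, hcp, hcq⟩ := hc
  rw [← hcN] at hcp hcq
  obtain ⟨x, hx⟩ : N i ∣ p j - p i := (show p i ≡ p j [ZMOD N i] from hcp).dvd
  obtain ⟨y, hy⟩ : N i ∣ q j - q i := (show q i ≡ q j [ZMOD N i] from hcq).dvd
  have hni : N i ≠ 0 := hm0 i
  have hNi : p i ^ 2 - D * q i ^ 2 = N i := rfl
  have hNj : p j ^ 2 - D * q j ^ 2 = N i := hcN.symm
  set M := N i with hM
  -- `(p i - q i √D)(p j + q j √D) = M (u + v √D)`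
  set u : ℤ := 1 + p i * x - D * q i * y with hu
  set v : ℤ := p i * y - q i * x with hv
  have hMu : M * u = p i * p j - D * q i * q j := by
    have e1 : p j = p i + M * x := by linarith
    have e2 : q j = q i + M * y := by linarith
    rw [hu, e1, e2]; linear_combination (-1 : ℤ) * hNi
  have hMv : M * v = p i * q j - q i * p j := by
    have e1 : p j = p i + M * x := by linarith
    have e2 : q j = q i + M * y := by linarith
    rw [hv, e1, e2]; ring
  have hpell : u ^ 2 = D * v ^ 2 + 1 := by
    have h1 : M ^ 2 * u ^ 2 = M ^ 2 * (D * v ^ 2 + 1) := by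
      have : M ^ 2 * u ^ 2 - D * (M * v) ^ 2 = M ^ 2 := by
        rw [← mul_pow, hMu, hMv]
        calc _ = (p i ^ 2 - D * q i ^ 2) * (p j ^ 2 - D * q j ^ 2) := by ring
          _ = _ := by rw [hNi, hNj]; ring
      linarith
    exact mul_left_cancel₀ (pow_ne_zero 2 hni) h1
  have hv0 : v ≠ 0 := by
    intro h0
    rw [h0, mul_zero] at hMv
    have h1 : M * (q i ^ 2 - q j ^ 2) = 0 := by
      linear_combination (p i * q j + q i * p j) * hMv + q j ^ 2 * hNi - q i ^ 2 * hNj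
    have h2 : q i ^ 2 = q j ^ 2 := by
      rcases mul_eq_zero.1 h1 with h | h
      · exact absurd h hni
      · linarith
    have h3 : q i = q j := by
      have := hq i; have := hq j
      exact (sq_eq_sq₀ (by omega) (by omega)).1 h2
    have h4 : p i = p j := by
      rw [h3] at hMv
      have h5 : q j * (p i - p j) = 0 := by linarith
      rcases mul_eq_zero.1 h5 with h | h
      · exact absurd h (hq j).ne'
      · linarith
    exact hdistinct i j hlt ⟨h4, h3⟩
  refine ⟨u.natAbs, v.natAbs, Int.natAbs_pos.2 hv0, ?_, ?_⟩
  · zify; simpa using hpell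
  · zify
    have hi' : i ≤ I := by have := Finset.mem_range.1 hi; omega
    have hj' : j ≤ I := by have := Finset.mem_range.1 hj; omega
    have hC1 : (1 : ℤ) ≤ 4 * D := by omega
    set C : ℤ := 4 * D with hC
    have b1 : ∀ k, k ≤ I → |p k| ≤ C ^ (I + 1) := fun k hk =>
      (hp k).trans (pow_le_pow_right₀ hC1 (by omega))
    have b2 : ∀ k, k ≤ I → |q k| ≤ C ^ I := fun k hk => by
      rw [abs_of_pos (hq k)]
      exact (hqn k).trans (pow_le_pow_right₀ hC1 (by omega))
    have hCI : 1 ≤ C ^ I := one_le_pow₀ hC1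
    calc |u| = 1 * |u| := (one_mul _).symm
      _ ≤ |M| * |u| := by gcongr; exact Int.one_le_abs hni
      _ = |p i * p j - D * q i * q j| := by rw [← abs_mul, hMu]
      _ ≤ |p i * p j| + |D * q i * q j| := abs_sub _ _
      _ = |p i| * |p j| + D * |q i| * |q j| := by
        simp only [abs_mul, Nat.abs_cast]
      _ ≤ C ^ (I + 1) * C ^ (I + 1) + D * C ^ I * C ^ I := by
        gcongr
        · exact b1 i hi'
        · exact b1 j hj'
        · exact b2 i hi'
        · exact b2 j hj'
      _ = (C ^ 2 + D) * (C ^ I * C ^ I) := by ring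
      _ ≤ C ^ 3 * (C ^ I * C ^ I) := by
        gcongr
        nlinarith
      _ = C ^ (2 * I + 3) := by ring

/-! ### Zero estimate -/

open Polynomial in
/-- Zero estimate: an exponential polynomial `∑ c_{kl} X^k Z^l` with `k < K` and `l < L` that
vanishes at all points `(r + n s, η^r y_s)`, `r < Q + L`, `s < S`, is zero.

Write it as `∑_l P_l(X) Z^l` and let `Λ` be the set of `l` with `P_l ≠ 0`. Vanishing at the
consecutive shifts `r, r + 1, …` makes the matrix `P_l(x + i) η^{li}` singular at
`x = r + n s`, so its determinant is a polynomial in `x` with more zeros than its degree. Its top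
coefficient is a product of leading coefficients and a Vandermonde determinant in the distinct
numbers `η^l`, which is nonzero. -/
lemma zero_estimate_s1 (η : ℝ) (hη : 1 < η) (K L Q S n : ℕ) (hK : 1 ≤ K) (hn : Q ≤ n)
    (hKL : (K - 1) * L < Q * S) (y : ℕ → ℝ) (hy : ∀ s, y s ≠ 0)
    (c : Fin K × Fin L → ℝ)
    (h : ∀ r < Q + L, ∀ s < S,
      ∑ kl : Fin K × Fin L, c kl * (((r + n * s : ℕ) : ℝ) ^ (kl.1 : ℕ) *
        (η ^ r * y s) ^ (kl.2 : ℕ)) = 0) : c = 0 := by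
  classical
  by_contra hc
  set P : Fin L → ℝ[X] := fun l => ∑ k : Fin K, C (c (k, l)) * X ^ (k : ℕ) with hP
  have hPdeg : ∀ l, (P l).natDegree ≤ K - 1 := fun l => by
    refine natDegree_sum_le_of_forall_le _ _ fun k _ => ?_
    refine (natDegree_C_mul_X_pow_le _ _).trans ?_
    have := k.2; omega
  have hPcoeff : ∀ (k : Fin K) l, (P l).coeff k = c (k, l) := fun k l => by
    simp only [hP, finsetSum_coeff, coeff_C_mul, coeff_X_pow, Fin.val_inj]
    simp
  have hPeval : ∀ l (x : ℝ), (P l).eval x = ∑ k : Fin K, c (k, l) * x ^ (k : ℕ) := fun l x => by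
    simp [hP, eval_finsetSum]
  set Λ := {l : Fin L // P l ≠ 0} with hΛ
  have hne : Nonempty Λ := by
    by_contra hemp
    apply hc
    ext ⟨k, l⟩
    rw [← hPcoeff]
    have : P l = 0 := by
      by_contra h0; exact hemp ⟨⟨l, h0⟩⟩
    simp [this]
  set e := Fintype.equivFin Λ with he
  have hcard : Fintype.card Λ ≤ L := by
    have := Fintype.card_subtype_le (fun l : Fin L => P l ≠ 0)
    rwa [Fintype.card_fin] at this
  have he_lt : ∀ i : Λ, (e i : ℕ) < L := fun i => (e i).2.trans_le hcard
  -- row `i` of `N` is the relation at the point shifted by `i`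
  set N : Matrix Λ Λ ℝ[X] := Matrix.of fun i l =>
    (P l.1).comp (X + C ((e i : ℕ) : ℝ)) * C (η ^ ((l.1 : ℕ) * (e i : ℕ))) with hN
  have hcompdeg : ∀ (i l : Λ), ((P l.1).comp (X + C ((e i : ℕ) : ℝ))).natDegree
      = (P l.1).natDegree := fun i l => by
    rw [natDegree_comp, natDegree_X_add_C, mul_one]
  have hNdeg' : ∀ i l, (N i l).natDegree ≤ (P l.1).natDegree := fun i l => by
    simp only [hN, Matrix.of_apply]
    exact (natDegree_mul_C_le _ _).trans (hcompdeg i l).le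
  have hNdeg : ∀ i l, (N i l).natDegree ≤ K - 1 := fun i l =>
    (hNdeg' i l).trans (hPdeg _)
  have hdetdeg : N.det.natDegree ≤ (K - 1) * L := by
    rw [Matrix.det_apply]
    refine natDegree_sum_le_of_forall_le _ _ fun σ _ => ?_
    refine (natDegree_smul_le _ _).trans ?_
    refine (natDegree_prod_le _ _).trans ?_
    refine (Finset.sum_le_sum fun i _ => hNdeg (σ i) i).trans ?_
    simp only [Finset.sum_const, Finset.card_univ, smul_eq_mul]
    rw [mul_comm]; gcongr
  have hdet0 : N.det = 0 := by
    refine eq_zero_of_natDegree_lt_card_of_eval_eq_zero (ι := Fin Q × Fin S) N.det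
      (f := fun rs => ((rs.1 + n * rs.2 : ℕ) : ℝ)) ?_ ?_ ?_
    · rintro ⟨r, s⟩ ⟨r', s'⟩ hrs
      have h1 : (r + n * s : ℕ) = r' + n * s' := Nat.cast_injective (R := ℝ) hrs
      have hr : (r : ℕ) < n := r.2.trans_le hn
      have hr' : (r' : ℕ) < n := r'.2.trans_le hn
      have h2 : (r : ℕ) = r' := by
        have := congrArg (· % n) h1
        simpa [Nat.add_mul_mod_self_left, Nat.mod_eq_of_lt hr, Nat.mod_eq_of_lt hr'] using this
      have h3 : (s : ℕ) = s' := by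
        have h4 : n * (s : ℕ) = n * s' := by omega
        exact Nat.eq_of_mul_eq_mul_left (by omega) h4
      ext <;> simp [h2, h3]
    · rintro ⟨r, s⟩
      set x : ℝ := ((r + n * s : ℕ) : ℝ) with hx
      have hev : N.det.eval x = (N.map (eval x)).det := by
        have := RingHom.map_det (evalRingHom x) N
        simpa using this
      rw [hev]
      apply Matrix.exists_mulVec_eq_zero_iff.1
      refine ⟨fun l => (η ^ (r : ℕ) * y s) ^ (l.1 : ℕ), ?_, ?_⟩
      · intro h0
        obtain ⟨l⟩ := hne
        have := congrFun h0 l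
        simp only [Pi.zero_apply] at this
        exact pow_ne_zero _ (mul_ne_zero (pow_ne_zero _ (by linarith)) (hy s)) this
      · ext i
        have h1 := h (r + e i) (by have := r.2; have := he_lt i; omega) s s.2
        rw [Fintype.sum_prod_type_right] at h1
        simp only [Matrix.mulVec, dotProduct, Matrix.map_apply, hN, Matrix.of_apply,
          eval_mul, eval_comp, eval_add, eval_X, eval_C, Pi.zero_apply]
        rw [← h1]
        have h2 : ∑ l : Fin L, (P l).eval (x + ((e i : ℕ) : ℝ)) * η ^ ((l : ℕ) * (e i : ℕ)) *
            (η ^ (r : ℕ) * y s) ^ (l : ℕ) = ∑ l : Λ,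
            (P l.1).eval (x + ((e i : ℕ) : ℝ)) * η ^ ((l.1 : ℕ) * (e i : ℕ)) *
            (η ^ (r : ℕ) * y s) ^ (l.1 : ℕ) := by
          rw [← Finset.sum_filter_of_ne (p := fun l => P l ≠ 0)]
          · exact Finset.sum_subtype _ (by simp) _
          · intro l _ hl h0
            exact hl (by simp [h0])
        rw [← h2]
        refine Finset.sum_congr rfl fun l _ => ?_
        rw [hPeval, Finset.sum_mul, Finset.sum_mul]
        refine Finset.sum_congr rfl fun k _ => ?_
        have h3 : x + ((e i : ℕ) : ℝ) = ((r + e i + n * s : ℕ) : ℝ) := by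
          rw [hx]; push_cast; ring
        rw [h3, pow_add η, mul_pow, mul_pow, mul_pow, ← pow_mul, ← pow_mul, mul_comm (l : ℕ)]
        ring
    · simpa using hdetdeg.trans_lt hKL
  -- rescale the columns so that all of them have formal degree `K - 1`
  set N' : Matrix Λ Λ ℝ[X] := Matrix.of fun i l => X ^ (K - 1 - (P l.1).natDegree) * N i l with hN'
  have hdet0' : N'.det = 0 := by
    rw [hN', Matrix.det_mul_row, hdet0, mul_zero]
  have hN'deg : ∀ i l, (N' i l).natDegree ≤ K - 1 := fun i l => by
    simp only [hN', Matrix.of_apply]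
    refine natDegree_mul_le.trans ?_
    rw [natDegree_X_pow]
    have := hNdeg' i l; have := hPdeg l.1; omega
  have hN'coeff : ∀ i l, (N' i l).coeff (K - 1) =
      (P l.1).leadingCoeff * (η ^ (l.1 : ℕ)) ^ (e i : ℕ) := fun i l => by
    simp only [hN', Matrix.of_apply, coeff_X_pow_mul']
    rw [if_pos (by omega)]
    have h1 : K - 1 - (K - 1 - (P l.1).natDegree) = (P l.1).natDegree := by
      have := hPdeg l.1; omega
    rw [h1]
    simp only [hN, Matrix.of_apply, coeff_mul_C]
    rw [← hcompdeg i l, coeff_natDegree, leadingCoeff_comp (by rw [natDegree_X_add_C]; simp)]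
    rw [leadingCoeff_X_add_C, one_pow, mul_one, pow_mul]
  have hcoeffdet : N'.det.coeff (Fintype.card Λ * (K - 1)) =
      (Matrix.of fun i l : Λ => (P l.1).leadingCoeff * (η ^ (l.1 : ℕ)) ^ (e i : ℕ)).det := by
    rw [Matrix.det_apply, Matrix.det_apply, finsetSum_coeff]
    refine Finset.sum_congr rfl fun σ _ => ?_
    rw [coeff_smul]
    congr 1
    have := coeff_prod_of_natDegree_le (s := Finset.univ) (fun i => N' (σ i) i) (K - 1)
      fun i _ => hN'deg _ _
    rw [Finset.card_univ] at this
    rw [this]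
    simp only [hN'coeff, Matrix.of_apply]
  rw [hdet0', coeff_zero, Matrix.det_mul_row (fun l : Λ => (P l.1).leadingCoeff)
    (fun i l : Λ => (η ^ (l.1 : ℕ)) ^ (e i : ℕ))] at hcoeffdet
  have hprod : ∏ l : Λ, (P l.1).leadingCoeff ≠ 0 :=
    Finset.prod_ne_zero_iff.2 fun l _ => leadingCoeff_ne_zero.2 l.2
  have hvand : Matrix.det (fun i l : Λ => (η ^ (l.1 : ℕ)) ^ (e i : ℕ)) ≠ 0 := by
    have h1 : (Matrix.vandermonde fun i => η ^ ((e.symm i).1 : ℕ)).det ≠ 0 := by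
      rw [Matrix.det_vandermonde_ne_zero_iff]
      intro i j hij
      have := pow_right_injective₀ (by linarith) hη.ne' hij
      exact e.symm.injective (Subtype.ext (Fin.ext this))
    have h2 : (fun i l : Λ => (η ^ (l.1 : ℕ)) ^ (e i : ℕ)) =
        ((Matrix.vandermonde fun i => η ^ ((e.symm i).1 : ℕ)).transpose).submatrix e e := by
      ext i l
      simp [Matrix.vandermonde_apply]
    rw [h2, Matrix.det_submatrix_equiv_self, Matrix.det_transpose]
    exact h1
  exact mul_ne_zero hprod hvand hcoeffdet.symm

/-- A real matrix with trivial kernel has a nonzero maximal minor. -/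
lemma exists_minor {ι κ : Type*} [Fintype ι] [Fintype κ] [DecidableEq κ] (A : Matrix ι κ ℝ)
    (h : ∀ c : κ → ℝ, A.mulVec c = 0 → c = 0) :
    ∃ f : κ → ι, (A.submatrix f id).det ≠ 0 := by
  classical
  have hli : LinearIndependent ℝ A.col := by
    rw [Fintype.linearIndependent_iff]
    intro g hg
    have := h g (by
      rw [← hg]; ext i
      simp [Matrix.mulVec, dotProduct, mul_comm])
    intro i; simp [this]
  have hrank : A.rank = Fintype.card κ := by
    rw [← Matrix.rank_transpose]
    exact LinearIndependent.rank_matrix (M := A.transpose) hli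
  have hspan : Module.finrank ℝ (Submodule.span ℝ (Set.range A.row)) = Fintype.card κ := by
    rw [← hrank]; exact (A.rank_eq_finrank_span_row).symm
  obtain ⟨g, hg1, hg2, hg3⟩ := Submodule.exists_fun_fin_finrank_span_eq ℝ (Set.range A.row)
  choose f hf using hg1
  let e : κ ≃ Fin (Module.finrank ℝ (Submodule.span ℝ (Set.range A.row))) :=
    (Fintype.equivFin κ).trans (finCongr hspan.symm)
  refine ⟨fun k => f (e k), ?_⟩
  rw [← isUnit_iff_ne_zero, ← Matrix.isUnit_iff_isUnit_det,
    ← Matrix.linearIndependent_rows_iff_isUnit]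
  have h1 : (A.submatrix (fun k => f (e k)) id).row = g ∘ e := by
    ext k l
    simp [← hf]
  rw [h1]
  exact hg3.comp _ e.injective

/-! ### Divisibility of interpolation determinants -/

/-- Newton expansion of `x ↦ g x^k (1 + b μ)^x` in binomial coefficients: the coefficient of
`x.choose s` is divisible by `b ^ (s - k)` (truncated subtraction, so no condition for `s ≤ k`). -/
lemma binom_expand {R : Type*} [CommRing R] (b μ g : R) (k : ℕ) :
    ∃ c : ℕ → R, (∀ s, b ^ (s - k) ∣ c s) ∧ ∀ x N : ℕ, x < N →
      g * ((x : R) ^ k * (1 + b * μ) ^ x) = ∑ s ∈ Finset.range N, c s * (x.choose s : R) := by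
  induction k with
  | zero =>
    refine ⟨fun s => g * (b * μ) ^ s, fun s => ?_, fun x N hx => ?_⟩
    · change b ^ s ∣ g * (b * μ) ^ s
      rw [mul_pow]
      exact ⟨g * μ ^ s, by ring⟩
    · rw [add_comm (1 : R), add_pow, pow_zero, one_mul, Finset.mul_sum]
      rw [← Finset.sum_subset (Finset.range_mono (Nat.succ_le_of_lt hx))]
      · refine Finset.sum_congr rfl fun s _ => ?_
        rw [one_pow]; ring
      · intro s _ hs
        rw [Nat.choose_eq_zero_of_lt (by simpa using hs)]; simp
  | succ k ih =>
    obtain ⟨c, hc, hsum⟩ := ih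
    refine ⟨fun s => s * (c s + c (s - 1)), fun s => ?_, fun x N hx => ?_⟩
    · refine Dvd.dvd.mul_left (dvd_add ?_ ?_) _
      · exact (pow_dvd_pow b (by omega)).trans (hc s)
      · exact (pow_dvd_pow b (by omega)).trans (hc (s - 1))
    · have h1 : g * ((x : R) ^ (k + 1) * (1 + b * μ) ^ x) =
          x * (g * ((x : R) ^ k * (1 + b * μ) ^ x)) := by ring
      have hx1 : ∀ s, (x : R) * (x.choose s : R) =
          (s + 1) * (x.choose (s + 1) : R) + s * (x.choose s : R) := fun s => by
        have := Nat.choose_succ_right_eq x s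
        rcases le_or_gt s x with h | h
        · have h2 : x * x.choose s = (s + 1) * x.choose (s + 1) + s * x.choose s := by
            obtain ⟨t, rfl⟩ := Nat.exists_eq_add_of_le h
            rw [Nat.add_sub_cancel_left] at this
            linarith
          exact_mod_cast congrArg (Nat.cast (R := R)) h2
        · rw [Nat.choose_eq_zero_of_lt h, Nat.choose_eq_zero_of_lt (by omega)]; simp
      rw [h1, hsum x N hx, Finset.mul_sum]
      have h2 : ∀ s ∈ Finset.range N, (x : R) * (c s * (x.choose s : R)) =
          (((s + 1 : ℕ) : R) * c s * (x.choose (s + 1) : R)) + s * c s * (x.choose s : R) := by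
        intro s _
        push_cast
        linear_combination c s * hx1 s
      rw [Finset.sum_congr rfl h2, Finset.sum_add_distrib]
      have h3 : ∑ s ∈ Finset.range N, ((s + 1 : ℕ) : R) * c s * (x.choose (s + 1) : R) =
          ∑ s ∈ Finset.range N, (s : R) * c (s - 1) * (x.choose s : R) := by
        have h4 := Finset.sum_range_succ' (fun s => (s : R) * c (s - 1) * (x.choose s : R)) N
        rw [Finset.sum_range_succ, Nat.choose_eq_zero_of_lt hx] at h4
        simpa using h4.symm
      rw [h3, ← Finset.sum_add_distrib]
      refine Finset.sum_congr rfl fun s _ => ?_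
      ring

lemma choose_two_le_sum {ι : Type*} [Fintype ι] (r : ι → ℕ) (hr : Function.Injective r) :
    (Fintype.card ι).choose 2 ≤ ∑ i, r i := by
  classical
  have key : ∀ s : Finset ℕ, s.card.choose 2 ≤ ∑ a ∈ s, a := by
    intro s
    induction s using Finset.induction_on_max with
    | empty => simp
    | insert a s ha ih =>
      have hns : a ∉ s := fun h => (ha a h).false
      rw [Finset.card_insert_of_notMem hns, Finset.sum_insert hns, Nat.choose_succ_succ' _ 1,
        Nat.choose_one_right]
      have hle : s.card ≤ a := by
        have := Finset.card_le_card (t := Finset.range a) (fun y hy => Finset.mem_range.2 (ha y hy))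
        simpa using this
      exact Nat.add_le_add hle ih
  have h := key (Finset.univ.image r)
  rwa [Finset.card_image_of_injective _ hr, Finset.card_univ,
    Finset.sum_image (fun _ _ _ _ h => hr h)] at h

/-- If every column is a combination of the columns `(x_i).choose s` with coefficients divisible by
`b ^ (s - K)`, then the determinant is highly divisible by `b`: after multilinear expansion only
terms with pairwise distinct `s` survive, and those `s` add up to at least `(card ι).choose 2`. -/
lemma det_dvd {R ι : Type*} [CommRing R] [Fintype ι] [DecidableEq ι] (b : R) (K N E : ℕ)
    (x : ι → ℕ) (c : ι → ℕ → R) (hc : ∀ i s, b ^ (s - K) ∣ c i s)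
    (hE : E + Fintype.card ι * K ≤ (Fintype.card ι).choose 2) :
    b ^ E ∣ (Matrix.of fun i j => ∑ s ∈ Finset.range N, c j s * ((x i).choose s : R)).det := by
  rw [← Matrix.det_transpose]
  have h1 : (Matrix.of fun i j => ∑ s ∈ Finset.range N, c j s * ((x i).choose s : R)).transpose =
      fun j => ∑ s ∈ Finset.range N, c j s • (fun i => ((x i).choose s : R)) := by
    ext j i
    simp [Finset.sum_apply]
  rw [h1]
  change b ^ E ∣ Matrix.detRowAlternating.toMultilinearMap
    (fun j => ∑ s ∈ Finset.range N, c j s • (fun i => ((x i).choose s : R)))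
  rw [MultilinearMap.map_sum_finset]
  refine Finset.dvd_sum fun r _ => ?_
  rw [MultilinearMap.map_smul_univ]
  by_cases hr : Function.Injective r
  · refine Dvd.dvd.mul_right ?_ _
    have h2 : b ^ (∑ i, (r i - K)) ∣ ∏ i, c i (r i) := by
      rw [← Finset.prod_pow_eq_pow_sum]
      exact Finset.prod_dvd_prod_of_dvd _ _ fun i _ => hc i (r i)
    refine (pow_dvd_pow b ?_).trans h2
    have h3 := choose_two_le_sum r hr
    have h4 : ∑ i, r i ≤ ∑ i, (r i - K) + Fintype.card ι * K := by
      have : ∑ i : ι, K = Fintype.card ι * K := by simp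
      rw [← this, ← Finset.sum_add_distrib]
      exact Finset.sum_le_sum fun i _ => by omega
    omega
  · have : Matrix.detRowAlternating.toMultilinearMap
        (fun i => (fun i' => ((x i').choose (r i) : R))) = 0 := by
      apply AlternatingMap.map_eq_zero_of_not_injective
      intro hinj
      exact hr fun i j hij => hinj (by simp [hij])
    rw [this, smul_zero]
    exact dvd_zero _

/-! ### The interpolation determinant -/

/-- The inequality produced by the interpolation determinant. The entries are `x^k y^l` with
`x = r + n s` and `y = η^r (star γ)^s γ^(Q-s)`, where `η = ε²`. Since `star γ ≡ γ η^n` modulo `b^j`,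
modulo `b^j` one has `y ≡ γ^Q η^x`, and `η ≡ 1` modulo `b`, so `det_dvd` applies to the determinant.
Its norm is then a nonzero integer divisible by `b^(2e)`, to be compared with the trivial upper
bound in the two real embeddings. -/
lemma det_bound (D : ℕ) (hns : ¬ IsSquare D) (b : ℕ) (ε γ μ w : ℤ√(D : ℤ))
    (n j K L Q e : ℕ) (E : ℝ)
    (hε : ε * star ε = 1) (hμ : ε ^ 2 = 1 + b * μ)
    (hγ : γ * (ε ^ 2) ^ n = star γ + b ^ j * w)
    (hE : 1 ≤ E)
    (hε1 : 1 < Zsqrtd.toReal (Int.natCast_nonneg D) ε)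
    (hεE : Zsqrtd.toReal (Int.natCast_nonneg D) ε ≤ E)
    (hγ0 : 0 < Zsqrtd.toReal (Int.natCast_nonneg D) γ)
    (hγE : Zsqrtd.toReal (Int.natCast_nonneg D) γ ≤ E)
    (hγ0' : 0 < Zsqrtd.toReal (Int.natCast_nonneg D) (star γ))
    (hγE' : Zsqrtd.toReal (Int.natCast_nonneg D) (star γ) ≤ E)
    (hK : 1 ≤ K) (hL : 1 ≤ L) (hKL : K * L ≤ Q * Q) (hQn : Q ≤ n)
    (hej : e ≤ j) (he : e + K * L * K ≤ (K * L).choose 2) :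
    (b : ℝ) ^ e ≤ (K * L).factorial *
      (((Q + L + n * Q : ℕ) : ℝ) ^ K * E ^ ((2 * (Q + L) + Q) * L)) ^ (K * L) := by
  classical
  set φ := Zsqrtd.toReal (Int.natCast_nonneg D) with hφ
  have hφinj : Function.Injective φ := by
    refine Zsqrtd.toReal_injective _ fun m hm => hns ⟨m.natAbs, ?_⟩
    zify; rw [abs_mul_abs_self]; exact hm
  set ψ : ℤ√(D : ℤ) →+* ℝ := φ.comp (starRingEnd _) with hψ
  have hψφ : ∀ z, ψ z = φ (star z) := fun z => rfl
  set η := ε ^ 2 with hη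
  have hφη : 1 < φ η := by rw [hη, map_pow]; nlinarith
  -- the evaluation points and the entries of the matrix
  set x : Fin (Q + L) × Fin Q → ℕ := fun p => p.1 + n * p.2 with hx
  set y : Fin (Q + L) × Fin Q → ℤ√(D : ℤ) := fun p =>
    η ^ (p.1 : ℕ) * (star γ ^ (p.2 : ℕ) * γ ^ (Q - p.2)) with hy
  set A : Matrix (Fin (Q + L) × Fin Q) (Fin K × Fin L) (ℤ√(D : ℤ)) :=
    Matrix.of fun p kl => (x p : ℤ√(D : ℤ)) ^ (kl.1 : ℕ) * y p ^ (kl.2 : ℕ) with hA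
  obtain ⟨f, hf⟩ : ∃ f : Fin K × Fin L → Fin (Q + L) × Fin Q,
      ((A.map φ).submatrix f id).det ≠ 0 := by
    apply exists_minor
    intro c hc
    refine zero_estimate_s1 (φ η) hφη K L Q Q n hK hQn ?_
      (fun s => φ (star γ) ^ s * φ γ ^ (Q - s)) (fun s => by positivity) c ?_
    · calc (K - 1) * L < K * L := by
            apply Nat.mul_lt_mul_of_pos_right <;> omega
        _ ≤ Q * Q := hKL
    · intro r hr s hs
      have := congrFun hc (⟨r, hr⟩, ⟨s, hs⟩)
      rw [Pi.zero_apply] at this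
      rw [← this, Matrix.mulVec, dotProduct]
      refine Finset.sum_congr rfl fun kl _ => ?_
      simp only [hA, hx, hy, Matrix.map_apply, Matrix.of_apply, map_mul, map_pow, map_natCast]
      ring
  set Δ := (A.submatrix f id).det with hΔ
  have hdetmap : ∀ χ : ℤ√(D : ℤ) →+* ℝ, χ Δ = ((A.map χ).submatrix f id).det := fun χ => by
    rw [hΔ, RingHom.map_det]; rfl
  have hΔ0 : Δ ≠ 0 := by
    intro h0
    apply hf
    rw [← hdetmap, h0, map_zero]
  have hcard : Fintype.card (Fin K × Fin L) = K * L := by simp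
  -- divisibility of the determinant
  have hdvd : (b : ℤ√(D : ℤ)) ^ e ∣ Δ := by
    have hηl : ∀ l : ℕ, ∃ ν : ℤ√(D : ℤ), η ^ l = 1 + b * ν := fun l => by
      have h1 : (b : ℤ√(D : ℤ)) ∣ η ^ l - 1 ^ l :=
        (Dvd.intro μ (by rw [hμ]; ring)).trans (sub_dvd_pow_sub_pow η 1 l)
      obtain ⟨ν, hν⟩ := h1
      exact ⟨ν, by rw [← hν]; ring⟩
    choose ν hν using hηl
    choose c hc hcsum using fun kl : Fin K × Fin L =>
      binom_expand (b : ℤ√(D : ℤ)) (ν kl.2) (γ ^ (Q * kl.2)) (kl.1 : ℕ)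
    obtain ⟨N, hN⟩ : ∃ N, ∀ i, x (f i) < N := by
      refine ⟨(∑ i, x (f i)) + 1, fun i => Nat.lt_succ_of_le ?_⟩
      exact Finset.single_le_sum (f := fun i => x (f i)) (fun _ _ => Nat.zero_le _)
        (Finset.mem_univ i)
    have h1 := det_dvd (b : ℤ√(D : ℤ)) K N e (fun i => x (f i)) c
      (fun i s => (pow_dvd_pow _ (by have := i.1.2; omega)).trans (hc i s)) (by rwa [hcard])
    rw [← Ideal.mem_span_singleton, ← Ideal.Quotient.eq_zero_iff_mem] at h1 ⊢
    rw [← h1, hΔ, RingHom.map_det, RingHom.map_det]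
    congr 1
    ext i kl
    simp only [RingHom.mapMatrix_apply, Matrix.map_apply, Matrix.submatrix_apply, id,
      Matrix.of_apply]
    rw [← hcsum kl _ _ (hN i), ← hν, Ideal.Quotient.eq, Ideal.mem_span_singleton]
    set p := f i
    have hle : (p.2 : ℕ) ≤ Q := p.2.2.le
    have h2 : γ ^ (Q * (kl.2 : ℕ)) * ((x p : ℤ√(D : ℤ)) ^ (kl.1 : ℕ) * (η ^ (kl.2 : ℕ)) ^ x p) =
        (x p : ℤ√(D : ℤ)) ^ (kl.1 : ℕ) *
          (η ^ (p.1 : ℕ) * ((γ * η ^ n) ^ (p.2 : ℕ) * γ ^ (Q - p.2))) ^ (kl.2 : ℕ) := by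
      have h3 : γ ^ (p.2 : ℕ) * γ ^ (Q - p.2) = γ ^ Q := by
        rw [← pow_add]; congr 1; omega
      have h4 : η ^ (p.1 : ℕ) * ((γ * η ^ n) ^ (p.2 : ℕ) * γ ^ (Q - p.2)) = γ ^ Q * η ^ x p := by
        rw [← h3, mul_pow, ← pow_mul, hx, pow_add]; ring
      rw [h4, mul_pow, ← pow_mul, ← pow_mul, ← pow_mul, mul_comm (kl.2 : ℕ) (x p)]
      ring
    rw [h2]
    simp only [hA, Matrix.of_apply, ← mul_sub]
    refine Dvd.dvd.mul_left ?_ _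
    refine Dvd.dvd.trans ?_ (sub_dvd_pow_sub_pow _ _ _)
    simp only [hy, ← mul_sub, ← sub_mul]
    refine Dvd.dvd.mul_left (Dvd.dvd.mul_right ?_ _) _
    refine Dvd.dvd.trans ?_ (sub_dvd_pow_sub_pow _ _ _)
    rw [hγ]
    refine (pow_dvd_pow _ hej).trans ⟨-w, by ring⟩
  -- archimedean upper bound, the same for both embeddings
  set B : ℝ := ((Q + L + n * Q : ℕ) : ℝ) ^ K * E ^ ((2 * (Q + L) + Q) * L) with hB
  have hupper : ∀ χ : ℤ√(D : ℤ) →+* ℝ, 0 ≤ χ η → χ η ≤ E ^ 2 → 0 ≤ χ γ → χ γ ≤ E →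
      0 ≤ χ (star γ) → χ (star γ) ≤ E → |χ Δ| ≤ (K * L).factorial * B ^ (K * L) := by
    intro χ h1 h2 h3 h4 h5 h6
    rw [hdetmap]
    have := Matrix.det_le (A := (A.map χ).submatrix f id) (abv := AbsoluteValue.abs) (x := B) ?_
    · rw [hcard, nsmul_eq_mul] at this
      exact this
    · intro i kl
      simp only [AbsoluteValue.abs_apply, Matrix.submatrix_apply, Matrix.map_apply, id, hA, hy,
        Matrix.of_apply, map_mul, map_pow, map_natCast]
      set p := f i
      have hQ1 : 1 ≤ Q := by have := p.2.2; omega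
      rw [Nat.abs_cast, abs_of_nonneg h1, abs_of_nonneg h3, abs_of_nonneg h5, hB]
      gcongr
      · calc ((x p : ℕ) : ℝ) ^ (kl.1 : ℕ) ≤ ((Q + L + n * Q : ℕ) : ℝ) ^ (kl.1 : ℕ) := by
              gcongr
              simp only [hx]
              have a1 := p.1.2
              have a2 := p.2.2
              gcongr
          _ ≤ _ := by
              refine pow_le_pow_right₀ ?_ kl.1.2.le
              exact_mod_cast (by omega : 1 ≤ Q + L + n * Q)
      · rw [pow_mul E]
        calc (χ η ^ (p.1 : ℕ) * (χ (star γ) ^ (p.2 : ℕ) * χ γ ^ (Q - p.2))) ^ (kl.2 : ℕ)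
            ≤ ((E ^ 2) ^ (p.1 : ℕ) * (E ^ (p.2 : ℕ) * E ^ (Q - p.2))) ^ (kl.2 : ℕ) := by gcongr
          _ = (E ^ (2 * (p.1 : ℕ) + Q)) ^ (kl.2 : ℕ) := by
              rw [← pow_mul, ← pow_add, ← pow_add]
              congr 3
              have := p.2.2
              omega
          _ ≤ (E ^ (2 * (Q + L) + Q)) ^ (kl.2 : ℕ) := by
              gcongr
              exact p.1.2.le
          _ ≤ _ := pow_le_pow_right₀ (one_le_pow₀ hE) kl.2.2.le
  have hup1 := hupper φ (by linarith) (by rw [hη, map_pow]; gcongr) hγ0.le hγE hγ0'.le hγE'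
  have hεinv : φ ε * φ (star ε) = 1 := by rw [← map_mul, hε, map_one]
  have hε0' : 0 < φ (star ε) := by
    by_contra h
    nlinarith
  have hε1' : φ (star ε) ≤ 1 := by nlinarith
  have hup2 := hupper ψ (by rw [hη, map_pow]; positivity)
    (by
      rw [hη, map_pow, hψφ]
      gcongr
      linarith)
    (by rw [hψφ]; exact hγ0'.le) (by rw [hψφ]; exact hγE') (by rw [hψφ, star_star]; exact hγ0.le)
    (by rw [hψφ, star_star]; exact hγE)
  -- the norm of the determinant is a nonzero integer divisible by `b ^ (2 e)`
  obtain ⟨q, hq⟩ := hdvd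
  have hnorm : (b : ℝ) ^ e * (b : ℝ) ^ e ≤ |φ Δ| * |ψ Δ| := by
    have h1 : φ Δ * ψ Δ = ((b : ℝ) ^ e * (b : ℝ) ^ e) * (q.norm : ℝ) := by
      have h2 : φ q * ψ q = (q.norm : ℝ) := by
        rw [hψφ, ← map_mul, ← Zsqrtd.norm_eq_mul_conj, map_intCast]
      rw [hq, map_mul, map_mul, map_pow, map_pow, map_natCast, map_natCast, ← h2]
      ring
    have hq0 : q.norm ≠ 0 := by
      intro h0
      have h2 : φ q * φ (star q) = 0 := by
        rw [← map_mul, ← Zsqrtd.norm_eq_mul_conj, h0]; simp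
      have h3 : q = 0 := by
        rcases mul_eq_zero.1 h2 with h | h
        · exact hφinj (by rw [h, map_zero])
        · have : star q = 0 := hφinj (by rw [h, map_zero])
          simpa using this
      exact hΔ0 (by rw [hq, h3, mul_zero])
    have hq1 : (1 : ℝ) ≤ |(q.norm : ℝ)| := by
      rw [← Int.cast_abs]; exact_mod_cast Int.one_le_abs hq0
    rw [← abs_mul, h1, abs_mul, abs_of_nonneg (by positivity : (0 : ℝ) ≤ (b : ℝ) ^ e * (b : ℝ) ^ e)]
    exact le_mul_of_one_le_right (by positivity) hq1
  have hfin : (b : ℝ) ^ e * (b : ℝ) ^ e ≤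
      ((K * L).factorial * B ^ (K * L)) * ((K * L).factorial * B ^ (K * L)) :=
    hnorm.trans (mul_le_mul hup1 hup2 (abs_nonneg _) (by positivity))
  exact abs_le_of_sq_le_sq' (by nlinarith) (by positivity) |>.2

/-! ### The equation `U² = D b^(2j) + N₀` -/

set_option exponentiation.threshold 2000 in
lemma pow_le_two_pow (t : ℕ) (ht : 10240 ≤ t) : (t ^ 13) ^ 32 ≤ 2 ^ t := by
  obtain ⟨s, r, hr, rfl⟩ : ∃ s r, r < 1024 ∧ t = 1024 * s + r :=
    ⟨t / 1024, t % 1024, Nat.mod_lt _ (by norm_num), (Nat.div_add_mod t 1024).symm⟩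
  have hs : 10 ≤ s := by omega
  have h1 : 1024 * s + r ≤ 2 ^ (2 * s) := by
    have h2 : s + 1 ≤ 2 ^ s := Nat.lt_two_pow_self
    have h3 : 2 ^ 10 ≤ 2 ^ s := Nat.pow_le_pow_right (by norm_num) hs
    calc 1024 * s + r ≤ 2 ^ 10 * (s + 1) := by omega
      _ ≤ 2 ^ s * 2 ^ s := Nat.mul_le_mul h3 h2
      _ = 2 ^ (2 * s) := by ring
  calc ((1024 * s + r) ^ 13) ^ 32 ≤ ((2 ^ (2 * s)) ^ 13) ^ 32 :=
        Nat.pow_le_pow_left (Nat.pow_le_pow_left h1 _) _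
    _ = 2 ^ (832 * s) := by rw [← pow_mul, ← pow_mul]; congr 1; ring
    _ ≤ 2 ^ (1024 * s + r) := Nat.pow_le_pow_right (by norm_num) (by omega)

/-- A unit of norm one, congruent to a rational integer modulo `b`, of controlled size. -/
lemma pell_unit (b D : ℕ) (hb : 2 ≤ b) (hD2 : 2 ≤ D) (hns : ¬ IsSquare D) (hD : D ≤ 2 * b ^ 3) :
    ∃ u v : ℕ, 0 < v ∧ u ^ 2 = D * (b * v) ^ 2 + 1 ∧ 2 * u ≤ 2 ^ (10 * b) ^ 16 := by
  have hns' : ¬ IsSquare (D * b ^ 2) := by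
    rintro ⟨r, hr⟩
    have h1 : b ^ 2 ∣ r ^ 2 := ⟨D, by rw [sq r, ← hr]; ring⟩
    obtain ⟨s, rfl⟩ := (Nat.pow_dvd_pow_iff two_ne_zero).1 h1
    refine hns ⟨s, ?_⟩
    have h2 : b ^ 2 * D = b ^ 2 * (s * s) := by linarith
    exact Nat.eq_of_mul_eq_mul_left (by positivity) h2
  have hb2 : 1 ≤ b ^ 2 := Nat.one_le_pow _ _ (by omega)
  obtain ⟨u, v, hv, huv, hu⟩ := pell_bound (D * b ^ 2) (by nlinarith) hns'
  refine ⟨u, v, hv, by rw [huv]; ring, ?_⟩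
  set D' := D * b ^ 2 with hD'
  have hD'b : D' ≤ 2 * b ^ 5 := by
    calc D * b ^ 2 ≤ 2 * b ^ 3 * b ^ 2 := Nat.mul_le_mul_right _ hD
      _ = _ := by ring
  have hb5 : 1 ≤ b ^ 5 := Nat.one_le_pow _ _ (by omega)
  have hb15 : 1 ≤ b ^ 15 := Nat.one_le_pow _ _ (by omega)
  have hbase : 4 * D' ≤ 2 ^ (7 * b) := by
    have h1 : b ≤ 2 ^ b := Nat.lt_two_pow_self.le
    calc 4 * D' ≤ 8 * b ^ 5 := by omega
      _ ≤ 2 ^ (2 * b) * (2 ^ b) ^ 5 := by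
        refine Nat.mul_le_mul ?_ (Nat.pow_le_pow_left h1 _)
        calc 8 ≤ 2 ^ (2 * 2) := by norm_num
          _ ≤ 2 ^ (2 * b) := Nat.pow_le_pow_right (by norm_num) (by omega)
      _ = 2 ^ (7 * b) := by rw [← pow_mul, ← pow_add]; congr 1; ring
  have hexp : 2 * ((4 * D' + 3) * (2 * D' + 1) ^ 2) + 3 ≤ 553 * b ^ 15 := by
    calc 2 * ((4 * D' + 3) * (2 * D' + 1) ^ 2) + 3
        ≤ 2 * ((11 * b ^ 5) * (5 * b ^ 5) ^ 2) + 3 := by gcongr <;> omega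
      _ = 550 * b ^ 15 + 3 := by ring
      _ ≤ _ := by omega
  calc 2 * u ≤ 2 * (2 ^ (7 * b)) ^ (553 * b ^ 15) := by
        refine Nat.mul_le_mul_left _ (hu.trans ?_)
        calc _ ≤ (2 ^ (7 * b)) ^ (2 * ((4 * D' + 3) * (2 * D' + 1) ^ 2) + 3) :=
              Nat.pow_le_pow_left hbase _
          _ ≤ _ := Nat.pow_le_pow_right (by positivity) hexp
    _ = 2 ^ (3871 * b ^ 16 + 1) := by
        rw [← pow_mul, show 7 * b * (553 * b ^ 15) = 3871 * b ^ 16 by ring, ← pow_succ']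
    _ ≤ 2 ^ (10 * b) ^ 16 := by
        refine Nat.pow_le_pow_right (by norm_num) ?_
        have : 1 ≤ b ^ 16 := Nat.one_le_pow _ _ (by omega)
        rw [mul_pow]
        omega

set_option exponentiation.threshold 2000 in
/-- Numerical incompatibility of `det_bound` with the choice `L = t`, `Q = 160 h t`,
`K = 25600 h² t`, `E = 2 ^ h`. -/
lemma param_contra_s1 (b h t n j : ℕ) (hb : 2 ≤ b) (hh : 1000000 ≤ h) (ht : h ^ 7 ≤ t)
    (hj2 : j < (t + 1) ^ 8) (hn : n ≤ h * (j + 5))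
    (hbound : (b : ℝ) ^ (3200 * h ^ 2 * t ^ 2 * (25600 * h ^ 2 * t * t)) ≤
      (25600 * h ^ 2 * t * t).factorial *
      (((160 * h * t + t + n * (160 * h * t) : ℕ) : ℝ) ^ (25600 * h ^ 2 * t) *
        ((2 : ℝ) ^ h) ^ ((2 * (160 * h * t + t) + 160 * h * t) * t)) ^ (25600 * h ^ 2 * t * t)) :
    False := by
  have hht : h ≤ t := le_trans (Nat.le_self_pow (by norm_num) h) ht
  have h2t : h ^ 2 ≤ t := le_trans (Nat.pow_le_pow_right (by omega) (by norm_num)) ht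
  have ht0 : 1000000 ≤ t := hh.trans hht
  set T := 25600 * h ^ 2 * t * t with hT
  set X := 160 * h * t + t + n * (160 * h * t) with hX
  have hT1 : 1 ≤ T := by
    have : 0 < h := by omega
    have : 0 < t := by omega
    exact Nat.succ_le_of_lt (by positivity)
  have hQ : 160 * h * t ≤ t ^ 2 := by
    have : 160 * h ≤ t := by nlinarith
    rw [sq]; exact Nat.mul_le_mul_right _ this
  have hX13 : X ≤ t ^ 13 := by
    have h1 : (t + 1) ^ 8 ≤ 256 * t ^ 8 := by
      calc (t + 1) ^ 8 ≤ (2 * t) ^ 8 := Nat.pow_le_pow_left (by omega) _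
        _ = _ := by ring
    have ht8 : 1 ≤ t ^ 8 := Nat.one_le_pow _ _ (by omega)
    have ht1 : 2 * 261 ≤ t := by omega
    have h2 : n ≤ 261 * t ^ 9 := by
      calc n ≤ h * (j + 5) := hn
        _ ≤ t * (261 * t ^ 8) := Nat.mul_le_mul hht (by omega)
        _ = _ := by ring
    have ht9 : 1 ≤ t ^ 9 := Nat.one_le_pow _ _ (by omega)
    have hLQ : t ≤ t ^ 2 := Nat.le_self_pow (by norm_num) t
    calc X ≤ t ^ 2 + t ^ 2 + 261 * t ^ 9 * t ^ 2 := by rw [hX]; gcongr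
      _ = (2 + 261 * t ^ 9) * t ^ 2 := by ring
      _ ≤ (t * t ^ 9 * t) * t ^ 2 := by
        gcongr
        nlinarith
      _ = t ^ 13 := by ring
  have hX32 : X ^ 32 ≤ 2 ^ t :=
    (Nat.pow_le_pow_left hX13 _).trans (pow_le_two_pow t (by omega))
  have hT2 : T ≤ 2 ^ t := by
    refine le_trans ?_ (pow_le_two_pow t (by omega))
    calc T = (25600 * h ^ 2 * t) * t := rfl
      _ ≤ (t * t * t) * t := by gcongr; omega
      _ = t ^ 4 := by ring
      _ ≤ t ^ (13 * 32) := Nat.pow_le_pow_right (by omega) (by norm_num)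
      _ = _ := pow_mul _ _ _
  have hboundN : b ^ (3200 * h ^ 2 * t ^ 2 * T) ≤ T.factorial *
      (X ^ (25600 * h ^ 2 * t) *
        (2 ^ h) ^ ((2 * (160 * h * t + t) + 160 * h * t) * t)) ^ T := by
    exact_mod_cast hbound
  have hXK : X ^ (25600 * h ^ 2 * t) ≤ 2 ^ (800 * h ^ 2 * t ^ 2) := by
    calc X ^ (25600 * h ^ 2 * t) = (X ^ 32) ^ (800 * h ^ 2 * t) := by
          rw [← pow_mul]; congr 1; ring
      _ ≤ (2 ^ t) ^ (800 * h ^ 2 * t) := Nat.pow_le_pow_left hX32 _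
      _ = _ := by rw [← pow_mul]; congr 1; ring
  have hfinal : 2 ^ (3200 * h ^ 2 * t ^ 2 * T) ≤
      2 ^ ((t + 1280 * h ^ 2 * t ^ 2 + 2 * h * t ^ 2) * T) := by
    calc 2 ^ (3200 * h ^ 2 * t ^ 2 * T) ≤ b ^ (3200 * h ^ 2 * t ^ 2 * T) :=
          Nat.pow_le_pow_left hb _
      _ ≤ _ := hboundN
      _ ≤ T ^ T * (2 ^ (800 * h ^ 2 * t ^ 2) *
        (2 ^ h) ^ ((2 * (160 * h * t + t) + 160 * h * t) * t)) ^ T := by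
          gcongr
          exact Nat.factorial_le_pow T
      _ ≤ (2 ^ t) ^ T * (2 ^ (800 * h ^ 2 * t ^ 2) *
        (2 ^ h) ^ ((2 * (160 * h * t + t) + 160 * h * t) * t)) ^ T := by gcongr
      _ = _ := by
          rw [← pow_mul 2 h, ← pow_add, ← mul_pow, ← pow_add, ← pow_mul]
          congr 1; ring
  have h3 := (Nat.pow_le_pow_iff_right (by norm_num)).1 hfinal
  have h4 := Nat.le_of_mul_le_mul_right h3 hT1
  have h5 : t ≤ h ^ 2 * t ^ 2 := by
    calc t = 1 * t := (one_mul t).symm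
      _ ≤ h ^ 2 * t ^ 2 := Nat.mul_le_mul (Nat.one_le_pow _ _ (by omega))
        (Nat.le_self_pow (by norm_num) t)
  have h6 : h * t ^ 2 ≤ h ^ 2 * t ^ 2 :=
    Nat.mul_le_mul_right _ (Nat.le_self_pow (by norm_num) h)
  have h7 : 1 ≤ h ^ 2 * t ^ 2 := by
    exact le_trans (by omega) h5
  nlinarith

set_option maxHeartbeats 1000000 in
/-- The equation `U² = D b^(2j) + N₀` is impossible when `j` lies in `[t^8, (t+1)^8)` with `t`
large in terms of a scale `h` that bounds `b`, `2 b²` and the binary logarithm of a norm-one unit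
`ε = u + b v √D`. The element `θ = U + b^j √D` is congruent to its conjugate modulo `b^j`; dividing
by the power `ε^n` closest to it from below gives `γ` of bounded size with `γ ε^(2n) ≡ star γ`,
to which `det_bound` is applied. -/
lemma exponent_core (b D N₀ U j h t u v : ℕ) (hb : 2 ≤ b) (hD2 : 2 ≤ D) (hns : ¬ IsSquare D)
    (hD : D ≤ 2 * b ^ 3) (hN1 : 1 ≤ N₀) (hN : N₀ ≤ 2 * b ^ 2)
    (hU : U ^ 2 = D * b ^ (2 * j) + N₀) (hv : 0 < v) (huv : u ^ 2 = D * (b * v) ^ 2 + 1)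
    (hu : 2 * u ≤ 2 ^ h) (hh6 : 100000000 ≤ h) (hbh : b ≤ h) (hb2 : 2 * b ^ 2 ≤ h)
    (ht1 : t ^ 8 ≤ j) (ht2 : j < (t + 1) ^ 8) (hht : h ^ 7 ≤ t) : False := by
  have hht' : h ≤ t := le_trans (Nat.le_self_pow (by norm_num) h) hht
  have hh2t : h ^ 2 ≤ t := le_trans (Nat.pow_le_pow_right (by omega) (by norm_num)) hht
  have hb2h : b ≤ 2 ^ h := hbh.trans Nat.lt_two_pow_self.le
  have hN2h : N₀ ≤ 2 ^ h := (hN.trans hb2).trans Nat.lt_two_pow_self.le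
  set φ := Zsqrtd.toReal (Int.natCast_nonneg D) with hφ
  have hφval : ∀ z : ℤ√(D : ℤ), φ z = z.re + z.im * √(D : ℝ) := fun z => by
    simp [hφ, Zsqrtd.toReal]
  set ξ : ℝ := √(D : ℝ) with hξ
  have hξ2 : ξ ^ 2 = D := Real.sq_sqrt (by positivity)
  have hξ1 : 1 ≤ ξ := by
    rw [hξ, Real.one_le_sqrt]; exact_mod_cast (by omega : 1 ≤ D)
  set ε : ℤ√(D : ℤ) := ⟨u, b * v⟩ with hε
  set θ : ℤ√(D : ℤ) := ⟨U, b ^ j⟩ with hθ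
  have hφε : φ ε = u + b * v * ξ := by rw [hφval]; simp [hε]
  have hφθ : φ θ = U + b ^ j * ξ := by rw [hφval]; simp [hθ]
  have huvZ : (u : ℤ) ^ 2 = D * (b * v) ^ 2 + 1 := by exact_mod_cast huv
  have hUZ : (U : ℤ) ^ 2 = D * b ^ (2 * j) + N₀ := by exact_mod_cast hU
  have huvR : (u : ℝ) ^ 2 = D * (b * v) ^ 2 + 1 := by exact_mod_cast huv
  have hUR : (U : ℝ) ^ 2 = D * b ^ (2 * j) + N₀ := by exact_mod_cast hU
  have hεε : ε * star ε = 1 := by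
    rw [hε]
    ext
    · simp; linear_combination huvZ
    · simp; ring
  have hθθ : θ * star θ = (N₀ : ℤ√(D : ℤ)) := by
    rw [hθ]
    ext
    · simp; linear_combination hUZ
    · simp; ring
  have hbR : (2 : ℝ) ≤ b := by exact_mod_cast hb
  have hvR : (1 : ℝ) ≤ v := by exact_mod_cast hv
  have hu1 : (1 : ℝ) ≤ u := by
    have : u ≠ 0 := by rintro rfl; simp at huv
    exact_mod_cast Nat.one_le_iff_ne_zero.2 this
  have hε2 : 2 ≤ φ ε := by
    rw [hφε]
    have : (1 : ℝ) ≤ b * v * ξ := by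
      have : (1 : ℝ) ≤ b * v := by nlinarith
      nlinarith
    linarith
  have hεE : φ ε ≤ 2 ^ h := by
    have h1 : b * v * ξ ≤ (u : ℝ) := by
      refine abs_le_of_sq_le_sq' ?_ (by positivity) |>.2
      rw [mul_pow, hξ2, huvR]; linarith
    have h2 : (2 * u : ℝ) ≤ 2 ^ h := by exact_mod_cast hu
    rw [hφε]; linarith
  have hθb : (b : ℝ) ^ j ≤ φ θ := by
    rw [hφθ]
    have : (b : ℝ) ^ j * 1 ≤ b ^ j * ξ := by gcongr
    have : (0 : ℝ) ≤ U := by positivity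
    linarith
  have hθup : φ θ ≤ (b : ℝ) ^ (j + 4) := by
    have h1 : b ^ j * ξ ≤ (U : ℝ) := by
      refine abs_le_of_sq_le_sq' ?_ (by positivity) |>.2
      rw [mul_pow, hξ2, hUR, ← pow_mul]
      have : (0 : ℝ) ≤ N₀ := by positivity
      rw [mul_comm j 2]
      linarith
    have h2 : (U : ℝ) ≤ b ^ (j + 3) := by
      have h3 : U ^ 2 ≤ (b ^ (j + 3)) ^ 2 := by
        have hbj : 1 ≤ b ^ (2 * j) := Nat.one_le_pow _ _ (by omega)
        calc U ^ 2 = D * b ^ (2 * j) + N₀ := hU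
          _ ≤ 2 * b ^ 3 * b ^ (2 * j) + 2 * b ^ 3 * b ^ (2 * j) := by
            gcongr
            calc N₀ ≤ 2 * b ^ 2 * 1 := by omega
              _ ≤ 2 * b ^ 3 * b ^ (2 * j) := by
                gcongr
                · omega
                · norm_num
          _ = 2 ^ 2 * b ^ 3 * b ^ (2 * j) := by ring
          _ ≤ b ^ 2 * b ^ 3 * b ^ (2 * j) := by gcongr
          _ ≤ b ^ 3 * b ^ 3 * b ^ (2 * j) := by
            gcongr
            · omega
            · norm_num
          _ = _ := by ring
      have h4 := (Nat.pow_le_pow_iff_left two_ne_zero).1 h3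
      exact_mod_cast h4
    rw [hφθ]
    calc (U : ℝ) + b ^ j * ξ ≤ 2 * b ^ (j + 3) := by linarith
      _ ≤ b * b ^ (j + 3) := by gcongr
      _ = _ := by ring
  have hθ1 : 1 ≤ φ θ := (one_le_pow₀ (by linarith)).trans hθb
  obtain ⟨n, hn1, hn2⟩ := exists_nat_pow_near hθ1 (by linarith : 1 < φ ε)
  have hnup : n ≤ h * (j + 5) := by
    have h1 : (2 : ℝ) ^ n ≤ 2 ^ (h * (j + 4)) := by
      calc (2 : ℝ) ^ n ≤ φ ε ^ n := by gcongr
        _ ≤ φ θ := hn1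
        _ ≤ (b : ℝ) ^ (j + 4) := hθup
        _ ≤ ((2 : ℝ) ^ h) ^ (j + 4) := by
          gcongr; exact_mod_cast hb2h
        _ = _ := by rw [← pow_mul]
    have h2 := (pow_le_pow_iff_right₀ (by norm_num : (1 : ℝ) < 2)).1 h1
    exact h2.trans (Nat.mul_le_mul_left _ (by omega))
  have hjlt : j < h * (n + 1) := by
    have h1 : (2 : ℝ) ^ j < 2 ^ (h * (n + 1)) := by
      calc (2 : ℝ) ^ j ≤ b ^ j := by gcongr
        _ ≤ φ θ := hθb
        _ < φ ε ^ (n + 1) := hn2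
        _ ≤ ((2 : ℝ) ^ h) ^ (n + 1) := by gcongr
        _ = _ := by rw [← pow_mul]
    exact (pow_lt_pow_iff_right₀ (by norm_num : (1 : ℝ) < 2)).1 h1
  have h160 : 160 * h ≤ t := by
    refine le_trans ?_ hh2t
    rw [sq]; exact Nat.mul_le_mul_right _ (by omega)
  have hQn : 160 * h * t ≤ n := by
    by_contra hlt
    push Not at hlt
    have h1 : j < t * (t * t) := by
      calc j < h * (n + 1) := hjlt
        _ ≤ t * (t * t) := by
          refine Nat.mul_le_mul hht' (hlt.trans_le ?_ |> Nat.succ_le_of_lt)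
          exact Nat.mul_le_mul_right _ h160
    have h2 : t * (t * t) ≤ t ^ 8 := by
      calc t * (t * t) = t ^ 3 := by ring
        _ ≤ t ^ 8 := Nat.pow_le_pow_right (by omega) (by norm_num)
    omega
  set γ := θ * star ε ^ n with hγ
  have hφεε : φ ε * φ (star ε) = 1 := by rw [← map_mul, hεε, map_one]
  have hφεn : φ ε ^ n * φ (star ε) ^ n = 1 := by rw [← mul_pow, hφεε, one_pow]
  have hεn0 : 0 < φ ε ^ n := by positivity
  have hφγ : φ γ * φ ε ^ n = φ θ := by
    rw [hγ, map_mul, map_pow]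
    linear_combination φ θ * hφεn
  have hγ1 : 1 ≤ φ γ := by
    by_contra hlt
    push Not at hlt
    have : φ γ * φ ε ^ n < 1 * φ ε ^ n := by gcongr
    linarith
  have hγE : φ γ ≤ 2 ^ h := by
    refine le_trans ?_ hεE
    by_contra hlt
    push Not at hlt
    have : φ ε * φ ε ^ n < φ γ * φ ε ^ n := by gcongr
    rw [pow_succ'] at hn2
    linarith
  have hγγ : φ γ * φ (star γ) = N₀ := by
    have h1 : γ * star γ = (N₀ : ℤ√(D : ℤ)) := by
      rw [hγ, star_mul, star_pow, star_star]
      calc θ * star ε ^ n * (ε ^ n * star θ) = (θ * star θ) * (ε * star ε) ^ n := by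
            rw [mul_pow]; ring
        _ = _ := by rw [hθθ, hεε, one_pow, mul_one]
    rw [← map_mul, h1, map_natCast]
  have hN1R : (1 : ℝ) ≤ N₀ := by exact_mod_cast hN1
  have hγ'0 : 0 < φ (star γ) := by
    refine pos_of_mul_pos_right ?_ (by linarith : 0 ≤ φ γ)
    rw [hγγ]; linarith
  have hγ'E : φ (star γ) ≤ 2 ^ h := by
    have h1 : (N₀ : ℝ) ≤ 2 ^ h := by exact_mod_cast hN2h
    have h2 : 1 * φ (star γ) ≤ φ γ * φ (star γ) := by gcongr
    linarith
  have ht0 : 0 < t := by omega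
  have hh0 : 0 < h := by omega
  refine param_contra_s1 b h t n j hb (by omega) hht ht2 hnup ?_
  refine det_bound D hns b ε γ ⟨2 * D * b * v ^ 2, 2 * u * v⟩ (⟨0, 2⟩ * ε ^ n) n j
    (25600 * h ^ 2 * t) t (160 * h * t) (3200 * h ^ 2 * t ^ 2 * (25600 * h ^ 2 * t * t)) (2 ^ h)
    hεε ?_ ?_ (one_le_pow₀ (by norm_num)) (by linarith) hεE (by linarith) hγE hγ'0 hγ'E
    (Nat.succ_le_of_lt (by positivity)) ht0 (by apply le_of_eq; ring) hQn ?_ ?_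
  · rw [hε, sq]
    ext
    · simp; linear_combination huvZ
    · simp; ring
  · have h1 : θ = star θ + (b : ℤ√(D : ℤ)) ^ j * ⟨0, 2⟩ := by
      have h2 : (b : ℤ√(D : ℤ)) ^ j = (((b : ℤ) ^ j : ℤ) : ℤ√(D : ℤ)) := by push_cast; rfl
      have hre : ((((b : ℤ) ^ j : ℤ) : ℤ√(D : ℤ))).re = (b : ℤ) ^ j := Zsqrtd.re_intCast _
      have him : ((((b : ℤ) ^ j : ℤ) : ℤ√(D : ℤ))).im = 0 := Zsqrtd.im_intCast _
      rw [h2, hθ]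
      ext
      · rw [Zsqrtd.re_add, Zsqrtd.re_mul, hre, him]; simp
      · rw [Zsqrtd.im_add, Zsqrtd.im_mul, hre, him]; simp; ring
    rw [hγ, star_mul, star_pow, star_star]
    calc θ * star ε ^ n * (ε ^ 2) ^ n = θ * ε ^ n * (ε * star ε) ^ n := by
          rw [mul_pow]; ring
      _ = θ * ε ^ n := by rw [hεε, one_pow, mul_one]
      _ = _ := by nth_rewrite 1 [h1]; ring
  · calc 3200 * h ^ 2 * t ^ 2 * (25600 * h ^ 2 * t * t)
        = (81920000 * h ^ 2) * h ^ 2 * t ^ 4 := by ring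
      _ ≤ t * t * t ^ 4 := by
        gcongr
        calc 81920000 * h ^ 2 ≤ h ^ 2 * h ^ 2 := by
              gcongr; exact (by omega : 81920000 ≤ h).trans (Nat.le_self_pow (by norm_num) h)
          _ = h ^ 4 := by ring
          _ ≤ h ^ 7 := Nat.pow_le_pow_right hh0 (by norm_num)
          _ ≤ t := hht
      _ = t ^ 6 := by ring
      _ ≤ t ^ 8 := Nat.pow_le_pow_right ht0 (by norm_num)
      _ ≤ j := ht1
  · rw [Nat.choose_two_right, Nat.le_div_iff_mul_le two_pos]
    set T := 25600 * h ^ 2 * t * t with hT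
    have h1 : (3200 * h ^ 2 * t ^ 2 * T + T * (25600 * h ^ 2 * t)) * 2 =
        T * (6400 * h ^ 2 * t ^ 2 + 51200 * h ^ 2 * t) := by ring
    rw [h1]
    refine Nat.mul_le_mul_left _ (Nat.le_sub_of_add_le ?_)
    have h2 : 1 ≤ h ^ 2 * t := Nat.succ_le_of_lt (by positivity)
    have h3 : T = (25600 * t) * (h ^ 2 * t) := by rw [hT]; ring
    have h4 : 6400 * h ^ 2 * t ^ 2 + 51200 * h ^ 2 * t + 1 ≤
        (6400 * t + 51201) * (h ^ 2 * t) := by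
      have h5 : (6400 * t + 51201) * (h ^ 2 * t) =
          6400 * h ^ 2 * t ^ 2 + 51200 * h ^ 2 * t + h ^ 2 * t := by ring
      rw [h5]; exact Nat.add_le_add_left h2 _
    rw [h3]
    exact h4.trans (Nat.mul_le_mul_right _ (by omega))

set_option exponentiation.threshold 2000 in
/-- `exponent_core` with `h = (10 b)^16`, so that `2^h` bounds the unit of `pell_unit`, and
`t = ⌊j^(1/8)⌋`. -/
lemma exponent_bound (b D N₀ U j : ℕ) (hb : 2 ≤ b) (hD2 : 2 ≤ D) (hns : ¬ IsSquare D)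
    (hD : D ≤ 2 * b ^ 3) (hN1 : 1 ≤ N₀) (hN : N₀ ≤ 2 * b ^ 2)
    (hU : U ^ 2 = D * b ^ (2 * j) + N₀) : j < (10 * b) ^ 1000 := by
  by_contra hj
  push Not at hj
  obtain ⟨u, v, hv, huv, hu⟩ := pell_unit b D hb hD2 hns hD
  set h := (10 * b) ^ 16 with hh
  have hh6 : 100000000 ≤ h := by
    calc 100000000 ≤ 20 ^ 16 := by norm_num
      _ ≤ h := Nat.pow_le_pow_left (by omega) _
  obtain ⟨t, ht1, ht2⟩ : ∃ t, t ^ 8 ≤ j ∧ j < (t + 1) ^ 8 := by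
    have hex : ∃ s, j < (s + 1) ^ 8 :=
      ⟨j, lt_of_lt_of_le (Nat.lt_succ_self j) (Nat.le_self_pow (by norm_num) _)⟩
    classical
    refine ⟨Nat.find hex, ?_, Nat.find_spec hex⟩
    rcases Nat.eq_zero_or_pos (Nat.find hex) with h0 | h0
    · rw [h0]; simp
    · have := Nat.find_min hex (Nat.sub_lt h0 one_pos)
      rw [Nat.sub_add_cancel (show 1 ≤ Nat.find hex from h0)] at this
      omega
  have hht : h ^ 7 ≤ t := by
    by_contra hlt
    push Not at hlt
    have h1 : (t + 1) ^ 8 ≤ (h ^ 7) ^ 8 := Nat.pow_le_pow_left hlt _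
    have h2 : (h ^ 7) ^ 8 ≤ (10 * b) ^ 1000 := by
      rw [hh, ← pow_mul, ← pow_mul]
      exact Nat.pow_le_pow_right (by omega) (by norm_num)
    omega
  have hbh : b ≤ h := (by omega : b ≤ 10 * b).trans (Nat.le_self_pow (by norm_num) _)
  have hb2 : 2 * b ^ 2 ≤ h := by
    calc 2 * b ^ 2 ≤ (10 * b) ^ 2 := by rw [mul_pow]; omega
      _ ≤ h := Nat.pow_le_pow_right (by omega) (by norm_num)
  exact exponent_core b D N₀ U j h t u v hb hD2 hns hD hN1 hN hU hv huv hu hh6 hbh hb2 ht1 ht2 hht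

/-! ### Reduction of the digit equation -/

lemma sqrt_coeff_unique (d : ℕ) (hdns : ¬ IsSquare d) (x y x' y' : ℤ)
    (h : (x : ℝ) + y * √(d : ℝ) = x' + y' * √(d : ℝ)) : x = x' ∧ y = y' := by
  have hirr : Irrational √(d : ℝ) := irrational_sqrt_natCast_iff.2 hdns
  have hy : y = y' := by
    by_contra hne
    have hne' : ((y : ℝ) - y') ≠ 0 := by
      rw [sub_ne_zero]; exact_mod_cast hne
    refine hirr ⟨(x' - x) / (y - y'), ?_⟩
    push_cast
    rw [div_eq_iff hne']
    linarith
  subst hy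
  refine ⟨?_, rfl⟩
  exact_mod_cast add_right_cancel h

/-- The doubling formula `X_{2k} = 2 X_k² - 1`, with the bound `d < X_k²` forced by `Y_k ≥ 1`. -/
lemma pell_double (d : ℕ) (hdns : ¬ IsSquare d) (X Y : ℕ → ℕ)
    (hX1 : 0 < X 1) (hY1 : 0 < Y 1)
    (hpell : (X 1 : ℤ) ^ 2 - (d : ℤ) * (Y 1 : ℤ) ^ 2 = 1)
    (hXY : ∀ n : ℕ, 1 ≤ n →
      (X n : ℝ) + (Y n : ℝ) * Real.sqrt d =
        ((X 1 : ℝ) + (Y 1 : ℝ) * Real.sqrt d) ^ n)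
    (k : ℕ) (hk : 1 ≤ k) : d < X k ^ 2 ∧ X (k + k) + 1 = 2 * X k ^ 2 := by
  have hs : √(d : ℝ) * √(d : ℝ) = d := Real.mul_self_sqrt (by positivity)
  have hmul : ∀ p q : ℕ, 1 ≤ p → 1 ≤ q →
      (X (p + q) : ℤ) = X p * X q + d * Y p * Y q ∧
      (Y (p + q) : ℤ) = X p * Y q + Y p * X q := by
    intro p q hp hq
    have h := hXY (p + q) (by omega)
    rw [pow_add, ← hXY p hp, ← hXY q hq] at h
    refine sqrt_coeff_unique d hdns _ _ _ _ ?_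
    push_cast
    linear_combination h + Y p * Y q * hs
  have hnorm : (X k : ℤ) ^ 2 - d * (Y k : ℤ) ^ 2 = 1 ∧ 0 < Y k := by
    induction k, hk using Nat.le_induction with
    | base => exact ⟨hpell, hY1⟩
    | succ k hk ih =>
      obtain ⟨h1, h2⟩ := hmul k 1 hk le_rfl
      obtain ⟨ih1, ih2⟩ := ih
      refine ⟨?_, ?_⟩
      · rw [h1, h2]
        linear_combination ((X 1 : ℤ) ^ 2 - d * (Y 1 : ℤ) ^ 2) * ih1 + hpell
      · have h3 : Y (k + 1) = X k * Y 1 + Y k * X 1 := by exact_mod_cast h2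
        rw [h3]; positivity
  obtain ⟨hn1, hn2⟩ := hnorm
  have hN : X k ^ 2 = d * Y k ^ 2 + 1 := by
    zify; linarith
  refine ⟨?_, ?_⟩
  · have : d * 1 ≤ d * Y k ^ 2 := Nat.mul_le_mul_left _ (Nat.one_le_pow _ _ hn2)
    omega
  · have h1 := (hmul k k hk hk).1
    zify
    rw [h1]
    linear_combination -hn1

/-- When `D = s²`, consecutive squares are too far apart: `U² - (s b^j)² > 2 b^j`. -/
lemma exponent_bound_of_square (b D N₀ U j : ℕ) (hb : 2 ≤ b) (hD2 : 2 ≤ D) (hsq : IsSquare D)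
    (hN1 : 1 ≤ N₀) (hN : N₀ ≤ 2 * b ^ 2)
    (hU : U ^ 2 = D * b ^ (2 * j) + N₀) : j < 2 := by
  obtain ⟨s, rfl⟩ := hsq
  have hs : 1 ≤ s := by
    by_contra h0
    have : s = 0 := by omega
    subst this; omega
  have h1 : U ^ 2 = (s * b ^ j) ^ 2 + N₀ := by rw [hU]; ring
  have h2 : s * b ^ j < U := lt_of_pow_lt_pow_left₀ 2 (Nat.zero_le _) (by omega)
  have h3 : (s * b ^ j + 1) ^ 2 ≤ U ^ 2 := Nat.pow_le_pow_left h2 _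
  have h4 : (s * b ^ j + 1) ^ 2 = (s * b ^ j) ^ 2 + 2 * (s * b ^ j) + 1 := by ring
  have h5 : 1 * b ^ j ≤ s * b ^ j := Nat.mul_le_mul_right _ hs
  have h6 : b ^ j < b ^ 2 := by omega
  exact (Nat.pow_lt_pow_iff_right (by omega)).1 h6

set_option exponentiation.threshold 2000 in
/-- Here `a + c = b - 1`. Splitting `m = 2 j + r` and multiplying by `2 (b - 1)` turns the digit
equation into `U² = D b^(2j) + N₀` with `U = 2 (b - 1) x`, `D = 2 (b - 1) a b^r` and
`N₀ = 2 (b - 1) c`. -/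
lemma digit_exponent_bound (b a c m x : ℕ) (ha : 1 ≤ a) (hc : 1 ≤ c) (hb : b = a + c + 1)
    (h : (a + c) * (2 * x ^ 2) = a * b ^ m + c) : m * b ≤ (10 * b) ^ (10 ^ 5) := by
  obtain ⟨j, r, hr, rfl⟩ : ∃ j r, r < 2 ∧ m = 2 * j + r :=
    ⟨m / 2, m % 2, Nat.mod_lt _ two_pos, (Nat.div_add_mod m 2).symm⟩
  have hb2 : 2 ≤ b := by omega
  have hU : (2 * (a + c) * x) ^ 2 = (2 * (a + c) * a * b ^ r) * b ^ (2 * j) + 2 * (a + c) * c := by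
    calc (2 * (a + c) * x) ^ 2 = 2 * (a + c) * ((a + c) * (2 * x ^ 2)) := by ring
      _ = _ := by rw [h, pow_add]; ring
  have hbr : 1 ≤ b ^ r := Nat.one_le_pow _ _ (by omega)
  have hbr' : b ^ r ≤ b := by
    calc b ^ r ≤ b ^ 1 := Nat.pow_le_pow_right (by omega) (by omega)
      _ = b := pow_one b
  have hD2 : 2 ≤ 2 * (a + c) * a * b ^ r := by
    calc 2 = 2 * 1 * 1 * 1 := rfl
      _ ≤ _ := by gcongr; omega
  have hD : 2 * (a + c) * a * b ^ r ≤ 2 * b ^ 3 := by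
    calc 2 * (a + c) * a * b ^ r ≤ 2 * b * b * b := by gcongr <;> omega
      _ = _ := by ring
  have hN1 : 1 ≤ 2 * (a + c) * c := Nat.succ_le_of_lt (by positivity)
  have hN : 2 * (a + c) * c ≤ 2 * b ^ 2 := by
    calc 2 * (a + c) * c ≤ 2 * b * b := by gcongr <;> omega
      _ = _ := by ring
  have hj : j < (10 * b) ^ 1000 := by
    by_cases hsq : IsSquare (2 * (a + c) * a * b ^ r)
    · have h1 := exponent_bound_of_square b _ _ _ j hb2 hD2 hsq hN1 hN hU
      have h2 : 10 * b ≤ (10 * b) ^ 1000 := Nat.le_self_pow (by norm_num) _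
      omega
    · exact exponent_bound b _ _ _ j hb2 hD2 hsq hD hN1 hN hU
  generalize hB : 10 * b = B at *
  calc (2 * j + r) * b ≤ (B * B ^ 1000) * B := by
        refine Nat.mul_le_mul ?_ (by omega)
        calc 2 * j + r ≤ 2 * B ^ 1000 := by omega
          _ ≤ B * B ^ 1000 := Nat.mul_le_mul_right _ (by omega)
    _ = B ^ 1002 := by rw [← pow_succ', ← pow_succ]
    _ ≤ B ^ (10 ^ 5) := Nat.pow_le_pow_right (by omega) (by norm_num)

/-- If `n` is even and `Xₙ = a (bᵐ - 1)/(b - 1)` with `1 ≤ a ≤ b - 2` and `m ≥ 1`,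
then `d < exp ((10 b)^(10⁵))`. -/
theorem even_index_small_digit_bound
    (b : ℕ) (hb : 2 ≤ b)
    (d : ℕ) (hd : 2 ≤ d) (hdns : ¬ IsSquare d)
    (X Y : ℕ → ℕ)
    (hX1 : 0 < X 1) (hY1 : 0 < Y 1)
    (hpell : (X 1 : ℤ) ^ 2 - (d : ℤ) * (Y 1 : ℤ) ^ 2 = 1)
    (hfund : ∀ x y : ℕ, 0 < x → 0 < y →
      (x : ℤ) ^ 2 - (d : ℤ) * (y : ℤ) ^ 2 = 1 → X 1 ≤ x)
    (hXY : ∀ n : ℕ, 1 ≤ n →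
      (X n : ℝ) + (Y n : ℝ) * Real.sqrt d =
        ((X 1 : ℝ) + (Y 1 : ℝ) * Real.sqrt d) ^ n)
    (n a m : ℕ) (hn : 0 < n) (hneven : Even n)
    (ha : 1 ≤ a ∧ a ≤ b - 2) (hm : 1 ≤ m)
    (hrep : (b - 1) * X n = a * (b ^ m - 1)) :
    (d : ℝ) < Real.exp ((10 * b : ℝ) ^ (10 ^ 5)) := by
  obtain ⟨k, rfl⟩ := hneven
  obtain ⟨hdx, hdouble⟩ := pell_double d hdns X Y hX1 hY1 hpell hXY k (by omega)
  obtain ⟨ha1, ha2⟩ := ha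
  obtain ⟨c, hc, hbc⟩ : ∃ c, 1 ≤ c ∧ b = a + c + 1 := ⟨b - 1 - a, by omega, by omega⟩
  have hb1 : b - 1 = a + c := by omega
  rw [hb1] at hrep
  obtain ⟨w, hw⟩ : ∃ w, b ^ m = w + 1 :=
    ⟨b ^ m - 1, (Nat.sub_add_cancel (Nat.one_le_pow _ _ (by omega))).symm⟩
  rw [hw, Nat.add_sub_cancel] at hrep
  have hmb : m * b ≤ (10 * b) ^ (10 ^ 5) := by
    refine digit_exponent_bound b a c m (X k) ha1 hc hbc ?_
    rw [← hdouble, hw]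
    linear_combination hrep
  have hXw : X (k + k) ≤ w := by
    refine Nat.le_of_mul_le_mul_left ?_ (by omega : 0 < a + c)
    rw [hrep]
    exact Nat.mul_le_mul_right _ (by omega)
  have hdb : d < b ^ m := by omega
  calc (d : ℝ) < (b : ℝ) ^ m := by exact_mod_cast hdb
    _ ≤ (Real.exp b) ^ m := by
      gcongr
      linarith [Real.add_one_le_exp (b : ℝ)]
    _ = Real.exp ((m * b : ℕ) : ℝ) := by rw [← Real.exp_nat_mul]; push_cast; rfl
    _ ≤ Real.exp ((10 * b : ℝ) ^ (10 ^ 5)) := by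
      refine Real.exp_le_exp.2 ?_
      calc ((m * b : ℕ) : ℝ) ≤ (((10 * b) ^ (10 ^ 5) : ℕ) : ℝ) := Nat.cast_le.2 hmb
        _ = _ := by rw [Nat.cast_pow, Nat.cast_mul, Nat.cast_ofNat]
end

section
/- Suppose n is even and Xₙ = b − 1 (that is, Xₙ = a(b^m − 1)/(b − 1) with a = b − 1 and m = 1). Then d < b. -/
/-!
Write `n = 2k` with `k ≥ 1` and `(X₁ + Y₁√d) ^ k = x + y√d` with natural numbers `x`, `y` and
`y ≥ 1` (`exists_pow_eq`). Squaring gives `Xₙ + Yₙ√d = (x² + d y²) + 2xy√d`, and since `√d` is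
irrational the rational parts agree (`rational_part_unique`): `Xₙ = x² + d y² ≥ d`.
Hence `d ≤ b - 1`.
-/

/-- Positive powers of `u + v√d` with `u, v ≥ 1` again have natural coordinates, and the
coefficient of `√d` stays positive. -/
lemma exists_pow_eq (d u v : ℕ) (hu : 0 < u) (hv : 0 < v) (k : ℕ) :
    ∃ x y : ℕ, 0 < y ∧
      ((u : ℝ) + (v : ℝ) * Real.sqrt d) ^ (k + 1) = (x : ℝ) + (y : ℝ) * Real.sqrt d := by
  induction k with
  | zero => exact ⟨u, v, hv, by simp⟩
  | succ k ih =>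
    obtain ⟨x, y, hy, h⟩ := ih
    refine ⟨x * u + d * y * v, x * v + y * u, by positivity, ?_⟩
    have hs : Real.sqrt d * Real.sqrt d = d := Real.mul_self_sqrt (Nat.cast_nonneg d)
    rw [pow_succ, h]
    push_cast
    linear_combination (y : ℝ) * v * hs

lemma rational_part_unique {d : ℕ} (hd : ¬ IsSquare d) {p q r s : ℕ}
    (h : (p : ℝ) + (q : ℝ) * Real.sqrt d = (r : ℝ) + (s : ℝ) * Real.sqrt d) : p = r := by
  by_cases hqs : q = s
  · subst hqs
    exact_mod_cast add_right_cancel h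
  · exfalso
    have hirr : Irrational (Real.sqrt d) := irrational_sqrt_natCast_iff.mpr hd
    have hne : ((q : ℝ) - s) ≠ 0 := sub_ne_zero.mpr (by exact_mod_cast hqs)
    refine hirr ⟨((r : ℚ) - p) / ((q : ℚ) - s), ?_⟩
    push_cast
    rw [div_eq_iff hne]
    linear_combination -h

/-- If `n` is even and `Xₙ = b - 1`, then `d < b`. -/
theorem even_index_m_one_bound
    (b : ℕ) (hb : 2 ≤ b)
    (d : ℕ) (hd : 2 ≤ d) (hdns : ¬ IsSquare d)
    (X Y : ℕ → ℕ)
    (hX1 : 0 < X 1) (hY1 : 0 < Y 1)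
    (hpell : (X 1 : ℤ) ^ 2 - (d : ℤ) * (Y 1 : ℤ) ^ 2 = 1)
    (hfund : ∀ x y : ℕ, 0 < x → 0 < y →
      (x : ℤ) ^ 2 - (d : ℤ) * (y : ℤ) ^ 2 = 1 → X 1 ≤ x)
    (hXY : ∀ n : ℕ, 1 ≤ n →
      (X n : ℝ) + (Y n : ℝ) * Real.sqrt d =
        ((X 1 : ℝ) + (Y 1 : ℝ) * Real.sqrt d) ^ n)
    (n : ℕ) (hn : 0 < n) (hneven : Even n)
    (hrep : X n = b - 1) :
    d < b := by
  obtain ⟨m, rfl⟩ := hneven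
  obtain ⟨k, rfl⟩ : ∃ k, m = k + 1 := ⟨m - 1, by omega⟩
  obtain ⟨x, y, hy, h⟩ := exists_pow_eq d (X 1) (Y 1) hX1 hY1 k
  have hs : Real.sqrt d * Real.sqrt d = d := Real.mul_self_sqrt (Nat.cast_nonneg d)
  have hXn : X (k + 1 + (k + 1)) = x ^ 2 + d * y ^ 2 := by
    refine rational_part_unique hdns (q := Y (k + 1 + (k + 1))) (s := 2 * x * y) ?_
    rw [hXY _ hn, pow_add, h]
    push_cast
    linear_combination (y : ℝ) ^ 2 * hs
  have hle : d ≤ d * y ^ 2 := Nat.le_mul_of_pos_right d (by positivity)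
  omega
end

section
/- Suppose n = 2n₁ is even and Xₙ = b^m − 1 for some integer m ≥ 2 (that is, Xₙ = a(b^m − 1)/(b − 1) with a = b − 1 and m > 1). Then b is even, 2·X_{n₁}² = b^m, n₁ is odd, and 2^{⌊(m−1)/2⌋} divides X₁. -/
/-!
Since `√d` is irrational, `(X_{j+k}, Y_{j+k})` is given by the usual addition formulas. They yield
`X_{2k} = 2 X_k² - 1`, hence `2 X_{n₁}² = bᵐ` and `b` is even. If `n₁` were even, `X_{n₁}` would be
odd by the same duplication formula, contradicting `4 ∣ bᵐ`. The recurrence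
`X_{k+2} = 2 X₁ X_{k+1} - X_k` shows by induction that for odd `k` the quotient `X_k / X₁` is an odd
integer, so every power of `2` dividing `X_{n₁}` divides `X₁`. Finally `2ᵐ ∣ bᵐ = 2 X_{n₁}²` gives
`2^⌊(m-1)/2⌋ ∣ X_{n₁}`.
-/

/-- Comparison of coefficients over the basis `1, √d`. -/
lemma sqrt_coeff_unique_s3 {d : ℕ} (hdns : ¬ IsSquare d) {a b a' b' : ℤ}
    (h : (a : ℝ) + b * Real.sqrt d = a' + b' * Real.sqrt d) : a = a' ∧ b = b' := by
  have hirr : Irrational (Real.sqrt d) := irrational_sqrt_natCast_iff.mpr hdns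
  have hbb : b = b' := by
    by_contra hne
    have hne' : b - b' ≠ 0 := sub_ne_zero.mpr hne
    apply (hirr.intCast_mul hne').ne_int (a' - a)
    push_cast
    linarith
  subst hbb
  refine ⟨?_, rfl⟩
  have : (a : ℝ) = a' := by linarith
  exact_mod_cast this

/-- `2 ^ ⌊(m - 1) / 2⌋` divides `x` as soon as `2ᵐ` divides `2 x²`. -/
lemma two_pow_dvd_of_two_mul_sq {x m : ℕ} (hm : 2 ≤ m) (h : 2 ^ m ∣ 2 * x ^ 2) :
    2 ^ ((m - 1) / 2) ∣ x := by
  have h1 : 2 ^ (2 * ((m - 1) / 2) + 1) ∣ 2 * x ^ 2 :=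
    (pow_dvd_pow 2 (by omega)).trans h
  have h2 : 2 * (2 ^ ((m - 1) / 2)) ^ 2 ∣ 2 * x ^ 2 := by
    convert h1 using 1
    ring
  exact (Nat.pow_dvd_pow_iff two_ne_zero).mp (Nat.dvd_of_mul_dvd_mul_left two_pos h2)

/-- If `n = 2 n₁` is even and `Xₙ = bᵐ - 1` with `m ≥ 2`, then `b` is even,
`2 X_{n₁}² = bᵐ`, `n₁` is odd, and `2^⌊(m-1)/2⌋` divides `X₁`. -/
theorem even_index_full_digit_structure
    (b : ℕ) (hb : 2 ≤ b)
    (d : ℕ) (hd : 2 ≤ d) (hdns : ¬ IsSquare d)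
    (X Y : ℕ → ℕ)
    (hX1 : 0 < X 1) (hY1 : 0 < Y 1)
    (hpell : (X 1 : ℤ) ^ 2 - (d : ℤ) * (Y 1 : ℤ) ^ 2 = 1)
    (hfund : ∀ x y : ℕ, 0 < x → 0 < y →
      (x : ℤ) ^ 2 - (d : ℤ) * (y : ℤ) ^ 2 = 1 → X 1 ≤ x)
    (hXY : ∀ n : ℕ, 1 ≤ n →
      (X n : ℝ) + (Y n : ℝ) * Real.sqrt d =
        ((X 1 : ℝ) + (Y 1 : ℝ) * Real.sqrt d) ^ n)
    (n n₁ m : ℕ) (hn₁ : 0 < n₁) (hn : n = 2 * n₁) (hm : 2 ≤ m)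
    (hrep : X n = b ^ m - 1) :
    Even b ∧ 2 * X n₁ ^ 2 = b ^ m ∧ Odd n₁ ∧ 2 ^ ((m - 1) / 2) ∣ X 1 := by
  have hadd : ∀ j k : ℕ, 1 ≤ j → 1 ≤ k →
      (X (j + k) : ℤ) = X j * X k + d * (Y j * Y k) ∧
      (Y (j + k) : ℤ) = X j * Y k + Y j * X k := by
    intro j k hj hk
    apply sqrt_coeff_unique_s3 hdns
    have hs : Real.sqrt d * Real.sqrt d = d := Real.mul_self_sqrt (Nat.cast_nonneg d)
    push_cast
    rw [hXY (j + k) (by omega), pow_add, ← hXY j hj, ← hXY k hk]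
    linear_combination (Y j * Y k : ℝ) * hs
  have hnorm : ∀ k : ℕ, 1 ≤ k → (X k : ℤ) ^ 2 - d * (Y k : ℤ) ^ 2 = 1 := by
    intro k hk
    induction k, hk using Nat.le_induction with
    | base => exact hpell
    | succ k hk ih =>
      obtain ⟨h1, h2⟩ := hadd k 1 hk le_rfl
      rw [h1, h2]
      linear_combination ((X 1 : ℤ) ^ 2 - d * (Y 1 : ℤ) ^ 2) * ih + hpell
  have hdup : ∀ k : ℕ, 1 ≤ k → (X (2 * k) : ℤ) = 2 * (X k : ℤ) ^ 2 - 1 := by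
    intro k hk
    rw [two_mul, (hadd k k hk hk).1]
    linear_combination -hnorm k hk
  have hrec : ∀ k : ℕ, 1 ≤ k → (X (k + 2) : ℤ) = 2 * X 1 * X (k + 1) - X k := by
    intro k hk
    obtain ⟨h1, h2⟩ := hadd k 1 hk le_rfl
    have h3 := (hadd (k + 1) 1 (by omega) le_rfl).1
    rw [show k + 1 + 1 = k + 2 from rfl] at h3
    rw [h3, h2, h1]
    linear_combination -(X k : ℤ) * hpell
  have hquot : ∀ k : ℕ, ∃ q : ℤ, Odd q ∧ (X (2 * k + 1) : ℤ) = X 1 * q := by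
    intro k
    induction k with
    | zero => exact ⟨1, odd_one, by simp⟩
    | succ k ih =>
      obtain ⟨q, hq, h⟩ := ih
      refine ⟨2 * X (2 * k + 2) - q, (even_two_mul _).sub_odd hq, ?_⟩
      have h3 := hrec (2 * k + 1) (by omega)
      rw [show 2 * (k + 1) + 1 = 2 * k + 1 + 2 by ring, h3, h]
      ring
  have hmain : 2 * X n₁ ^ 2 = b ^ m := by
    have h := hdup n₁ hn₁
    have hpos : 1 ≤ b ^ m := Nat.one_le_pow _ _ (by omega)
    rw [← hn, hrep, Nat.cast_sub hpos] at h
    push_cast at h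
    zify
    linarith
  have hbe : Even b := by
    have : Even (b ^ m) := hmain ▸ even_two_mul _
    exact (Nat.even_pow.mp this).1
  have hdvd : 2 ^ m ∣ 2 * X n₁ ^ 2 := hmain ▸ pow_dvd_pow_of_dvd hbe.two_dvd m
  have hodd : Odd n₁ := by
    rw [← Nat.not_even_iff_odd]
    rintro ⟨k, hk⟩
    have h4 : 2 * 2 ∣ 2 * X n₁ ^ 2 := (pow_dvd_pow 2 hm).trans hdvd
    have h2 : 2 ∣ X n₁ :=
      Nat.prime_two.dvd_of_dvd_pow (Nat.dvd_of_mul_dvd_mul_left two_pos h4)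
    have h := hdup k (by omega)
    rw [two_mul, ← hk] at h
    omega
  refine ⟨hbe, hmain, hodd, ?_⟩
  obtain ⟨k, hk⟩ := hodd
  obtain ⟨q, hq, h⟩ := hquot k
  have hpow : ((2 ^ ((m - 1) / 2) : ℕ) : ℤ) ∣ X 1 * q := by
    rw [← h, ← hk]
    exact_mod_cast two_pow_dvd_of_two_mul_sq hm hdvd
  have hcop : IsCoprime ((2 ^ ((m - 1) / 2) : ℕ) : ℤ) q := by
    push_cast
    exact (Int.isCoprime_two_left.mpr hq).pow_left
  exact_mod_cast hcop.dvd_of_dvd_mul_right hpow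
end
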